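/- For every M > 0 there exists T ∈ (0,∞) such that, for every (s₀,φ) ∈ W̃ satisfying s₀ + s₀^{−1} + ‖φ‖_{W^{1,2}(0,s₀)} ≤ M, problem (P) with initial data (s₀,φ) admits a solution (s,u) on (0,T] with sup_{t∈(0,T]} ‖u(t)‖_{L^∞} + sup_{t∈(0,T]} s(t) ≤ 2(M^{3/2} + M + 1). -/

import Mathlib

open Set MeasureTheory Filter Topology Real
open scoped ENNReal

noncomputable section

/-- `(s₀, φ)` belongs to the class `W`: `s₀ ∈ (0,∞)`, `φ` is Lipschitz on `[0,s₀]`,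
not identically zero, nonnegative there, and vanishes at `s₀`. -/
def memW (s₀ : ℝ) (φ : ℝ → ℝ) : Prop :=
  0 < s₀ ∧ (∃ K : NNReal, LipschitzOnWith K φ (Icc 0 s₀)) ∧
    (∃ x ∈ Icc 0 s₀, φ x ≠ 0) ∧ (∀ x ∈ Icc 0 s₀, 0 ≤ φ x) ∧ φ s₀ = 0

/-- `(s,u)` is a solution of the one-phase Stefan problem (P) on `(0,T]` (finite `T`)
with exponent `p` and initial data `(s₀,φ)`. -/
structure IsSolOn (p s₀ : ℝ) (φ : ℝ → ℝ) (T : ℝ) (s : ℝ → ℝ) (u : ℝ → ℝ → ℝ) : Prop where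
  T_pos : 0 < T
  s_cont : ContinuousOn s (Icc 0 T)
  s_diff : ∀ t ∈ Ioc 0 T, DifferentiableAt ℝ s t
  s_deriv_cont : ContinuousOn (deriv s) (Ioc 0 T)
  s_pos : ∀ t ∈ Icc 0 T, 0 < s t
  ut_diff : ∀ t ∈ Ioc 0 T, ∀ x ∈ Ioo 0 (s t), DifferentiableAt ℝ (fun τ => u τ x) t
  ux_diff : ∀ t ∈ Ioc 0 T, ∀ x ∈ Ioo 0 (s t), DifferentiableAt ℝ (u t) x
  uxx_diff : ∀ t ∈ Ioc 0 T, ∀ x ∈ Ioo 0 (s t), DifferentiableAt ℝ (deriv (u t)) x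
  ut_cont : ContinuousOn (fun q : ℝ × ℝ => deriv (fun τ => u τ q.2) q.1)
      {q : ℝ × ℝ | q.1 ∈ Ioc 0 T ∧ q.2 ∈ Ioo 0 (s q.1)}
  uxx_cont : ContinuousOn (fun q : ℝ × ℝ => deriv (deriv (u q.1)) q.2)
      {q : ℝ × ℝ | q.1 ∈ Ioc 0 T ∧ q.2 ∈ Ioo 0 (s q.1)}
  ux_cont : ContinuousOn (fun q : ℝ × ℝ => deriv (u q.1) q.2)
      {q : ℝ × ℝ | q.1 ∈ Ioc 0 T ∧ q.2 ∈ Icc 0 (s q.1)}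
  u_cont : ContinuousOn (fun q : ℝ × ℝ => u q.1 q.2)
      {q : ℝ × ℝ | q.1 ∈ Icc 0 T ∧ q.2 ∈ Icc 0 (s q.1)}
  u_nonneg : ∀ t ∈ Icc 0 T, ∀ x ∈ Icc 0 (s t), 0 ≤ u t x
  heat : ∀ t ∈ Ioc 0 T, ∀ x ∈ Ioo 0 (s t),
      deriv (fun τ => u τ x) t = deriv (deriv (u t)) x
  bc_zero : ∀ t ∈ Ioc 0 T, -deriv (u t) 0 = u t 0 ^ p
  bc_free : ∀ t ∈ Ioc 0 T, u t (s t) = 0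
  stefan : ∀ t ∈ Ioc 0 T, deriv s t = -deriv (u t) (s t)
  init : ∀ x ∈ Icc 0 s₀, u 0 x = φ x
  init_s : s 0 = s₀

/-- `(s,u)` is a global-in-time solution of problem (P). -/
def IsGlobalSol (p s₀ : ℝ) (φ : ℝ → ℝ) (s : ℝ → ℝ) (u : ℝ → ℝ → ℝ) : Prop :=
  ∀ T : ℝ, 0 < T → IsSolOn p s₀ φ T s u

/-- `Tm ∈ (0,∞]` is the maximal existence time of the solution `(s,u)` of (P) with
initial data `(s₀,φ)`: the solution exists on `(0,T]` for every `T < Tm`, and for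
`T > Tm` problem (P) admits no solution on `(0,T]`. -/
def IsMaxSol (p s₀ : ℝ) (φ : ℝ → ℝ) (Tm : ℝ≥0∞) (s : ℝ → ℝ) (u : ℝ → ℝ → ℝ) : Prop :=
  0 < Tm ∧
    (∀ T : ℝ, 0 < T → ENNReal.ofReal T < Tm → IsSolOn p s₀ φ T s u) ∧
    (∀ T : ℝ, Tm < ENNReal.ofReal T → ¬∃ σ v, IsSolOn p s₀ φ T σ v)

/-- The sup norm `‖u(t)‖_{L^∞(0,s(t))}`. -/
def supNorm (s : ℝ → ℝ) (u : ℝ → ℝ → ℝ) (t : ℝ) : ℝ :=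
  sSup (u t '' Ioo 0 (s t))

/-- The `L¹` norm `‖u(t)‖_{L¹(0,s(t))}` of the nonnegative function `u(t,·)`. -/
def L1Norm (s : ℝ → ℝ) (u : ℝ → ℝ → ℝ) (t : ℝ) : ℝ :=
  ∫ x in (0:ℝ)..(s t), u t x

/-- The energy `E(s(t),u(t))`. -/
def energy (p : ℝ) (s : ℝ → ℝ) (u : ℝ → ℝ → ℝ) (t : ℝ) : ℝ :=
  1 / 2 * (∫ x in (0:ℝ)..(s t), (deriv (u t) x) ^ 2) - u t 0 ^ (p + 1) / (p + 1)

/-- `(a, φ)` belongs to the class `W̃`: `a ∈ (0,∞)` and `φ ∈ W^{1,2}(0,a)` (with weak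
derivative `g ∈ L²(0,a)`), not identically zero, nonnegative on `[0,a]`, and `φ(a) = 0`. -/
def memWtilde (a : ℝ) (φ g : ℝ → ℝ) : Prop :=
  0 < a ∧ MemLp g 2 (volume.restrict (Ioo 0 a)) ∧
    (∀ x ∈ Icc 0 a, φ x = φ 0 + ∫ y in (0:ℝ)..x, g y) ∧
    (∃ x ∈ Icc 0 a, φ x ≠ 0) ∧ (∀ x ∈ Icc 0 a, 0 ≤ φ x) ∧ φ a = 0

/-- The Sobolev norm `‖φ‖_{W^{1,2}(0,a)}` of `φ` with weak derivative `g`. -/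
def sobNorm (a : ℝ) (φ g : ℝ → ℝ) : ℝ :=
  Real.sqrt ((∫ x in (0:ℝ)..a, φ x ^ 2) + ∫ x in (0:ℝ)..a, g x ^ 2)

section


/-- heat kernel, zero for `r ≤ 0`. -/
def Gk (r z : ℝ) : ℝ := (√(4 * π * r))⁻¹ * Real.exp (-(z ^ 2 / (4 * r)))
def G1 (r z : ℝ) : ℝ := -(z / (2 * r)) * Gk r z
def G2 (r z : ℝ) : ℝ := (z ^ 2 / (4 * r ^ 2) - 1 / (2 * r)) * Gk r z
def Psi (y : ℝ) : ℝ := 1 / 2 + (√π)⁻¹ * ∫ w in (0:ℝ)..y, Real.exp (-w ^ 2)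
def Hv (z : ℝ) : ℝ := if 0 < z then 1 else if z < 0 then 0 else 1 / 2
def Ek (r z : ℝ) : ℝ := if 0 < r then Psi (z / (2 * √r)) else Hv z

lemma Gk_nonpos {r : ℝ} (hr : r ≤ 0) (z : ℝ) : Gk r z = 0 := by
  have : √(4 * π * r) = 0 := Real.sqrt_eq_zero_of_nonpos (by
    have := Real.pi_pos; nlinarith)
  simp [Gk, this]

lemma G1_nonpos {r : ℝ} (hr : r ≤ 0) (z : ℝ) : G1 r z = 0 := by simp [G1, Gk_nonpos hr]
lemma G2_nonpos {r : ℝ} (hr : r ≤ 0) (z : ℝ) : G2 r z = 0 := by simp [G2, Gk_nonpos hr]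

lemma Gk_nonneg (r z : ℝ) : 0 ≤ Gk r z := by unfold Gk; positivity

lemma Gk_neg (r z : ℝ) : Gk r (-z) = Gk r z := by simp [Gk]
lemma G1_neg (r z : ℝ) : G1 r (-z) = - G1 r z := by simp [G1, Gk_neg]; ring
lemma G1_zero (r : ℝ) : G1 r 0 = 0 := by simp [G1]

lemma hasDerivAt_Gk_z (r z : ℝ) : HasDerivAt (Gk r) (G1 r z) z := by
  rcases le_or_gt r 0 with hr | hr
  · rw [G1_nonpos hr]
    have : Gk r = fun _ => 0 := by ext z; exact Gk_nonpos hr z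
    rw [this]; exact hasDerivAt_const _ _
  · have h : HasDerivAt (fun z : ℝ => (√(4 * π * r))⁻¹ * Real.exp (-(z ^ 2 / (4 * r))))
        ((√(4 * π * r))⁻¹ * (Real.exp (-(z ^ 2 / (4 * r))) * (-((2 * z) / (4 * r))))) z := by
      have h1 : HasDerivAt (fun z : ℝ => z ^ 2) (2 * z) z := by simpa using hasDerivAt_pow 2 z
      exact (((h1.div_const (4 * r)).neg).exp).const_mul _
    refine h.congr_deriv ?_
    unfold G1 Gk
    field_simp
    ring

lemma hasDerivAt_G1_z (r z : ℝ) : HasDerivAt (G1 r) (G2 r z) z := by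
  have h1 : HasDerivAt (fun z : ℝ => -(z / (2 * r))) (-(1 / (2 * r))) z :=
    ((hasDerivAt_id z).div_const (2 * r)).neg
  have h := h1.mul (hasDerivAt_Gk_z r z)
  have e : G1 r = (fun z : ℝ => -(z / (2 * r))) * Gk r := by
    ext z; simp [G1]
  rw [e]
  refine h.congr_deriv ?_
  unfold G2 G1
  rcases eq_or_ne r 0 with hr | hr
  · subst hr; simp
  · field_simp; ring

lemma exp_neg_le_inv {y : ℝ} (n : ℕ) (hy : 0 < y) : Real.exp (-y) ≤ n.factorial / y ^ n := by
  have h := Real.pow_div_factorial_le_exp y hy.le n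
  rw [Real.exp_neg, ← inv_div]
  exact inv_anti₀ (by positivity) h

/-- basic rewriting for `r > 0` -/
lemma inv_sqrt_le {r : ℝ} (hr : 0 < r) : (√(4 * π * r))⁻¹ ≤ (√r)⁻¹ := by
  apply inv_anti₀ (Real.sqrt_pos.2 hr)
  apply Real.sqrt_le_sqrt
  have := Real.pi_gt_three
  nlinarith

lemma Gk_le (r z : ℝ) : Gk r z ≤ (√r)⁻¹ := by
  rcases le_or_gt r 0 with hr | hr
  · rw [Gk_nonpos hr]; positivity
  · unfold Gk
    have h1 : Real.exp (-(z ^ 2 / (4 * r))) ≤ 1 := by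
      rw [Real.exp_le_one_iff]; have : 0 ≤ z ^ 2 / (4 * r) := by positivity
      linarith
    calc _ ≤ (√r)⁻¹ * 1 := mul_le_mul (inv_sqrt_le hr) h1 (Real.exp_pos _).le (by positivity)
      _ = _ := mul_one _

lemma mul_exp_le (y : ℝ) : y * Real.exp (-y) ≤ 1 := by
  have := Real.add_one_le_exp y
  rw [Real.exp_neg, ← div_eq_mul_inv, div_le_one (Real.exp_pos _)]; linarith

lemma sq_mul_exp_le {y : ℝ} (hy : 0 ≤ y) : y ^ 2 * Real.exp (-y) ≤ 2 := by
  have := Real.quadratic_le_exp_of_nonneg hy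
  rw [Real.exp_neg, ← div_eq_mul_inv, div_le_iff₀ (Real.exp_pos _)]; nlinarith

lemma abs_G1_le {r : ℝ} (hr : 0 < r) (z : ℝ) : |G1 r z| ≤ |z| / r * (√r)⁻¹ := by
  unfold G1
  rw [abs_mul, abs_neg, abs_div, abs_of_pos (by positivity : 0 < 2 * r), abs_of_nonneg (Gk_nonneg r z)]
  apply mul_le_mul _ (Gk_le r z) (Gk_nonneg r z) (by positivity)
  gcongr; linarith

lemma abs_z_G1_le {r : ℝ} (hr : 0 < r) (z : ℝ) : |z| * |G1 r z| ≤ 2 * (√r)⁻¹ := by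
  have e : |z| * |G1 r z| = (√(4 * π * r))⁻¹ * (2 * ((z ^ 2 / (4 * r)) * Real.exp (-(z ^ 2 / (4 * r))))) := by
    unfold G1
    rw [abs_mul, abs_neg, abs_div, abs_of_pos (by positivity : 0 < 2 * r),
      abs_of_nonneg (Gk_nonneg r z)]
    unfold Gk
    have : z ^ 2 = |z| * |z| := by rw [← sq, sq_abs]
    rw [this]
    field_simp
    ring
  rw [e]
  calc _ ≤ (√r)⁻¹ * (2 * 1) := by
        apply mul_le_mul (inv_sqrt_le hr) _ (by positivity) (by positivity)
        have := mul_exp_le (z ^ 2 / (4 * r)); linarith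
    _ = _ := by ring

lemma G2_eq {r : ℝ} (hr : 0 < r) (z : ℝ) :
    G2 r z = (√(4 * π * r))⁻¹ * r⁻¹ * ((z ^ 2 / (4 * r) - 1 / 2) * Real.exp (-(z ^ 2 / (4 * r)))) := by
  unfold G2 Gk; field_simp

lemma abs_G2_le {r : ℝ} (hr : 0 < r) (z : ℝ) : |G2 r z| ≤ 2 * r⁻¹ * (√r)⁻¹ := by
  rw [G2_eq hr, abs_mul, abs_of_nonneg (by positivity : 0 ≤ (√(4 * π * r))⁻¹ * r⁻¹)]
  have h1 : |(z ^ 2 / (4 * r) - 1 / 2) * Real.exp (-(z ^ 2 / (4 * r)))| ≤ 2 := by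
    set y := z ^ 2 / (4 * r)
    have hy : 0 ≤ y := by positivity
    have h2 := mul_exp_le y
    have h3 : Real.exp (-y) ≤ 1 := by rw [Real.exp_le_one_iff]; linarith
    have h4 := Real.exp_pos (-y)
    rw [abs_le]; constructor <;> nlinarith
  calc _ ≤ ((√r)⁻¹ * r⁻¹) * 2 := by
        apply mul_le_mul _ h1 (abs_nonneg _) (by positivity)
        exact mul_le_mul_of_nonneg_right (inv_sqrt_le hr) (by positivity)
    _ = _ := by ring

lemma abs_z2_G2_le {r : ℝ} (hr : 0 < r) (z : ℝ) : z ^ 2 * |G2 r z| ≤ 12 * (√r)⁻¹ := by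
  rw [G2_eq hr, abs_mul, abs_of_nonneg (by positivity : 0 ≤ (√(4 * π * r))⁻¹ * r⁻¹)]
  set y := z ^ 2 / (4 * r) with hydef
  have hy : 0 ≤ y := by positivity
  have hz : z ^ 2 = 4 * r * y := by rw [hydef]; field_simp
  have h1 : y * |(y - 1 / 2) * Real.exp (-y)| ≤ 3 := by
    have h2 := mul_exp_le y
    have h3 := sq_mul_exp_le hy
    have h4 := Real.exp_pos (-y)
    have : y * |(y - 1 / 2) * Real.exp (-y)| = |y * ((y - 1 / 2) * Real.exp (-y))| := by
      rw [abs_mul y, abs_of_nonneg hy]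
    rw [this, abs_le]; constructor <;> nlinarith
  rw [hz]
  have e : 4 * r * y * ((√(4 * π * r))⁻¹ * r⁻¹ * |(y - 1 / 2) * Real.exp (-y)|)
     = (√(4 * π * r))⁻¹ * (4 * (y * |(y - 1 / 2) * Real.exp (-y)|)) := by field_simp
  rw [e]
  calc _ ≤ (√r)⁻¹ * (4 * 3) := by
        apply mul_le_mul (inv_sqrt_le hr) _ (by positivity) (by positivity)
        linarith
    _ = _ := by ring

lemma G1_sq_le {r : ℝ} (hr : 0 < r) (z : ℝ) : G1 r z ^ 2 ≤ r⁻¹ * (√r)⁻¹ * Gk r z := by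
  have e : G1 r z ^ 2 = r⁻¹ * ((√(4 * π * r))⁻¹ *
      ((z ^ 2 / (4 * r)) * Real.exp (-(z ^ 2 / (4 * r))))) * Gk r z := by
    have : G1 r z ^ 2 = (z / (2 * r)) ^ 2 * Gk r z * Gk r z := by unfold G1; ring
    rw [this]
    nth_rw 1 [Gk]
    field_simp
    norm_num
  rw [e]
  apply mul_le_mul_of_nonneg_right _ (Gk_nonneg r z)
  apply mul_le_mul_of_nonneg_left _ (by positivity)
  calc _ ≤ (√r)⁻¹ * 1 := by
        apply mul_le_mul (inv_sqrt_le hr) (mul_exp_le _) (by positivity) (by positivity)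
    _ = _ := by ring

lemma Gk_sq_le (r z : ℝ) : Gk r z ^ 2 ≤ (√r)⁻¹ * Gk r z := by
  rw [sq]; exact mul_le_mul_of_nonneg_right (Gk_le r z) (Gk_nonneg r z)

lemma Gk_flat (r : ℝ) {z : ℝ} (hz : z ≠ 0) : Gk r z ≤ 384 * r ^ 2 * √r / z ^ 6 := by
  rcases le_or_gt r 0 with hr | hr
  · rw [Gk_nonpos hr, Real.sqrt_eq_zero_of_nonpos hr]; simp
  · have hz2 : 0 < z ^ 2 := by positivity
    have h := exp_neg_le_inv 3 (y := z ^ 2 / (4 * r)) (by positivity)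
    unfold Gk
    calc _ ≤ (√r)⁻¹ * ((3).factorial / (z ^ 2 / (4 * r)) ^ 3) := by
          apply mul_le_mul (inv_sqrt_le hr) h (by positivity) (by positivity)
      _ = _ := by
          have hs : √r * √r = r := Real.mul_self_sqrt hr.le
          have hs0 : √r ≠ 0 := (Real.sqrt_pos.2 hr).ne'
          simp only [Nat.factorial]; push_cast
          field_simp
          rw [sq, hs]; ring

lemma continuousAt_Gk_pos {r z : ℝ} (hr : 0 < r) :
    ContinuousAt (fun q : ℝ × ℝ => Gk q.1 q.2) (r, z) := by
  unfold Gk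
  have h1 : (√(4 * π * r)) ≠ 0 := (Real.sqrt_pos.2 (by positivity)).ne'
  have h2 : 4 * r ≠ 0 := by positivity
  apply ContinuousAt.mul
  · refine ContinuousAt.inv₀ ?_ (by exact h1)
    fun_prop
  · apply Real.continuous_exp.continuousAt.comp
    apply ContinuousAt.neg
    refine ContinuousAt.div ?_ ?_ (by exact h2) <;> fun_prop

lemma continuousAt_Gk {r z : ℝ} (h : r ≠ 0 ∨ z ≠ 0) :
    ContinuousAt (fun q : ℝ × ℝ => Gk q.1 q.2) (r, z) := by
  rcases lt_trichotomy r 0 with hr | hr | hr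
  · have : (fun q : ℝ × ℝ => Gk q.1 q.2) =ᶠ[𝓝 (r, z)] fun _ => 0 := by
      have : ∀ᶠ q : ℝ × ℝ in 𝓝 (r, z), q.1 < 0 := continuousAt_fst.eventually_lt_const hr
      filter_upwards [this] with q hq using Gk_nonpos hq.le _
    exact continuousAt_const.congr this.symm
  · subst hr
    have hz : z ≠ 0 := by simpa using h
    have hb : ContinuousAt (fun q : ℝ × ℝ => 384 * q.1 ^ 2 * √q.1 / q.2 ^ 6) (0, z) := by
      apply ContinuousAt.div _ _ (by positivity) <;> fun_prop
    have hb0 : Tendsto (fun q : ℝ × ℝ => 384 * q.1 ^ 2 * √q.1 / q.2 ^ 6) (𝓝 (0, z)) (𝓝 0) := by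
      have := hb.tendsto; simpa using this
    have hne : ∀ᶠ q : ℝ × ℝ in 𝓝 (0, z), q.2 ≠ 0 :=
      (continuousAt_snd (p := ((0:ℝ), z))).eventually_ne hz
    show Tendsto _ _ (𝓝 (Gk 0 z))
    rw [Gk_nonpos le_rfl]
    refine squeeze_zero' (Eventually.of_forall fun q => Gk_nonneg _ _) ?_ hb0
    filter_upwards [hne] with q hq using Gk_flat _ hq
  · exact continuousAt_Gk_pos hr

lemma G1_flat (r : ℝ) {z : ℝ} (hz : z ≠ 0) : |G1 r z| ≤ |z| * (192 * |r| * √r / z ^ 6) := by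
  rcases le_or_gt r 0 with hr | hr
  · rw [G1_nonpos hr, Real.sqrt_eq_zero_of_nonpos hr]; simp
  · unfold G1
    rw [abs_mul, abs_neg, abs_div, abs_of_pos (by positivity : 0 < 2 * r),
      abs_of_nonneg (Gk_nonneg r z), abs_of_pos hr]
    calc _ ≤ |z| / (2 * r) * (384 * r ^ 2 * √r / z ^ 6) := by
          gcongr; exact Gk_flat r hz
      _ = _ := by field_simp; ring

lemma G2_flat (r : ℝ) {z : ℝ} (hz : z ≠ 0) :
    |G2 r z| ≤ (z ^ 2 + |r|) * (384 * √r / z ^ 6) := by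
  rcases le_or_gt r 0 with hr | hr
  · rw [G2_nonpos hr, Real.sqrt_eq_zero_of_nonpos hr]; simp
  · unfold G2
    rw [abs_mul, abs_of_nonneg (Gk_nonneg r z), abs_of_pos hr]
    have : |z ^ 2 / (4 * r ^ 2) - 1 / (2 * r)| ≤ (z ^ 2 + r) / r ^ 2 := by
      have e1 : z ^ 2 / (4 * r ^ 2) - 1 / (2 * r) = (z ^ 2 / 4 - r / 2) / r ^ 2 := by field_simp
      rw [e1, abs_div, abs_of_pos (by positivity : 0 < r ^ 2)]
      gcongr
      rw [abs_le]; constructor <;> nlinarith [sq_nonneg z]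
    calc _ ≤ ((z ^ 2 + r) / r ^ 2) * (384 * r ^ 2 * √r / z ^ 6) := by
          apply mul_le_mul this (Gk_flat r hz) (Gk_nonneg _ _) (by positivity)
      _ = _ := by field_simp

lemma continuousAt_G1 {r z : ℝ} (h : r ≠ 0 ∨ z ≠ 0) :
    ContinuousAt (fun q : ℝ × ℝ => G1 q.1 q.2) (r, z) := by
  rcases eq_or_ne r 0 with hr | hr
  · subst hr
    have hz : z ≠ 0 := by simpa using h
    have hb : ContinuousAt (fun q : ℝ × ℝ => |q.2| * (192 * |q.1| * √q.1 / q.2 ^ 6)) (0, z) := by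
      apply ContinuousAt.mul (by fun_prop)
      apply ContinuousAt.div _ _ (by positivity) <;> fun_prop
    have hb0 : Tendsto (fun q : ℝ × ℝ => |q.2| * (192 * |q.1| * √q.1 / q.2 ^ 6)) (𝓝 (0, z)) (𝓝 0) := by
      have := hb.tendsto; simpa using this
    have hne : ∀ᶠ q : ℝ × ℝ in 𝓝 (0, z), q.2 ≠ 0 :=
      (continuousAt_snd (p := ((0:ℝ), z))).eventually_ne hz
    show Tendsto _ _ (𝓝 (G1 0 z))
    rw [G1_nonpos le_rfl]
    refine squeeze_zero_norm' ?_ hb0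
    filter_upwards [hne] with q hq using G1_flat _ hq
  · unfold G1
    apply ContinuousAt.mul _ (continuousAt_Gk (Or.inl hr))
    apply ContinuousAt.neg
    apply ContinuousAt.div (by fun_prop) (by fun_prop)
    simpa using hr

lemma continuousAt_G2 {r z : ℝ} (h : r ≠ 0 ∨ z ≠ 0) :
    ContinuousAt (fun q : ℝ × ℝ => G2 q.1 q.2) (r, z) := by
  rcases eq_or_ne r 0 with hr | hr
  · subst hr
    have hz : z ≠ 0 := by simpa using h
    have hb : ContinuousAt (fun q : ℝ × ℝ => (q.2 ^ 2 + |q.1|) * (384 * √q.1 / q.2 ^ 6)) (0, z) := by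
      apply ContinuousAt.mul (by fun_prop)
      apply ContinuousAt.div _ _ (by positivity) <;> fun_prop
    have hb0 : Tendsto (fun q : ℝ × ℝ => (q.2 ^ 2 + |q.1|) * (384 * √q.1 / q.2 ^ 6))
        (𝓝 (0, z)) (𝓝 0) := by
      have := hb.tendsto; simpa using this
    have hne : ∀ᶠ q : ℝ × ℝ in 𝓝 (0, z), q.2 ≠ 0 :=
      (continuousAt_snd (p := ((0:ℝ), z))).eventually_ne hz
    show Tendsto _ _ (𝓝 (G2 0 z))
    rw [G2_nonpos le_rfl]
    refine squeeze_zero_norm' ?_ hb0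
    filter_upwards [hne] with q hq using G2_flat _ hq
  · unfold G2
    apply ContinuousAt.mul _ (continuousAt_Gk (Or.inl hr))
    apply ContinuousAt.sub
    · apply ContinuousAt.div (by fun_prop) (by fun_prop)
      simpa using hr
    · apply ContinuousAt.div (by fun_prop) (by fun_prop)
      simpa using hr

lemma hasDerivAt_Gk_r_pos {r : ℝ} (hr : 0 < r) (z : ℝ) :
    HasDerivAt (fun r => Gk r z) (G2 r z) r := by
  have hp : 0 < 4 * π * r := by positivity
  have hs : √(4 * π * r) ≠ 0 := (Real.sqrt_pos.2 hp).ne'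
  have h1 : HasDerivAt (fun r : ℝ => 4 * π * r) (4 * π) r := by
    simpa using (hasDerivAt_id r).const_mul (4 * π)
  have h2 := (h1.sqrt hp.ne').inv hs
  have h3 : HasDerivAt (fun r : ℝ => -(z ^ 2 / (4 * r))) (z ^ 2 / (4 * r ^ 2)) r := by
    have h4 : HasDerivAt (fun r : ℝ => 4 * r) 4 r := by
      simpa using (hasDerivAt_id r).const_mul (4 : ℝ)
    have := ((hasDerivAt_const r (z ^ 2)).div h4 (by positivity)).neg
    refine this.congr_deriv ?_
    field_simp; ring
  have h := h2.mul h3.exp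
  refine h.congr_deriv ?_
  simp only [Pi.inv_apply]
  unfold G2 Gk
  have hq : √(4 * π * r) ^ 2 = 4 * π * r := Real.sq_sqrt hp.le
  rw [hq]
  field_simp
  ring

lemma hasDerivAt_Gk_r {r z : ℝ} (h : r ≠ 0 ∨ z ≠ 0) :
    HasDerivAt (fun r => Gk r z) (G2 r z) r := by
  have hne : ∀ r : ℝ, r ≠ 0 → HasDerivAt (fun r => Gk r z) (G2 r z) r := by
    intro r hr
    rcases lt_or_gt_of_ne hr with hr | hr
    · rw [G2_nonpos hr.le]
      have : (fun r => Gk r z) =ᶠ[𝓝 r] fun _ => 0 := by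
        filter_upwards [Iio_mem_nhds hr] with q hq using Gk_nonpos (le_of_lt hq) _
      exact (hasDerivAt_const r (0:ℝ)).congr_of_eventuallyEq this
    · exact hasDerivAt_Gk_r_pos hr z
  rcases eq_or_ne r 0 with hr | hr
  · subst hr
    refine hasDerivAt_of_hasDerivAt_of_ne (f := fun r => Gk r z) (g := fun r => G2 r z)
      (fun y hy => hne y hy) ?_ ?_
    · exact (continuousAt_Gk h).comp (f := fun r : ℝ => (r, z)) (x := 0) (by fun_prop)
    · exact (continuousAt_G2 h).comp (f := fun r : ℝ => (r, z)) (x := 0) (by fun_prop)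
  · exact hne r hr

end

section


lemma hasDerivAt_Psi (y : ℝ) : HasDerivAt Psi ((√π)⁻¹ * Real.exp (-y ^ 2)) y := by
  have hc : Continuous fun w : ℝ => Real.exp (-w ^ 2) := by fun_prop
  have := intervalIntegral.integral_hasDerivAt_right (hc.intervalIntegrable 0 y)
    (hc.stronglyMeasurableAtFilter _ _) hc.continuousAt
  exact (this.const_mul _).const_add _

lemma Psi_neg (y : ℝ) : Psi (-y) = 1 - Psi y := by
  unfold Psi
  have : ∫ w in (0:ℝ)..(-y), Real.exp (-w ^ 2) = - ∫ w in (0:ℝ)..y, Real.exp (-w ^ 2) := by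
    have h := intervalIntegral.integral_comp_neg (a := 0) (b := y) fun w : ℝ => Real.exp (-w ^ 2)
    simp only [neg_zero, neg_sq] at h
    rw [h, intervalIntegral.integral_symm]
  rw [this]; ring

lemma Psi_tendsto : Tendsto Psi atTop (𝓝 1) := by
  have h1 : IntegrableOn (fun w : ℝ => Real.exp (-w ^ 2)) (Ioi 0) := by
    have := (integrable_exp_neg_mul_sq (b := 1) one_pos).integrableOn (s := Ioi 0)
    simpa using this
  have h := intervalIntegral_tendsto_integral_Ioi 0 h1 tendsto_id
  have h2 : ∫ w in Ioi (0:ℝ), Real.exp (-w ^ 2) = √π / 2 := by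
    have := integral_gaussian_Ioi 1
    simpa using this
  rw [h2] at h
  have h3 := (h.const_mul (√π)⁻¹).const_add (1 / 2)
  have e : 1 / 2 + (√π)⁻¹ * (√π / 2) = 1 := by
    have : √π ≠ 0 := (Real.sqrt_pos.2 Real.pi_pos).ne'
    field_simp; norm_num
  rw [e] at h3
  exact h3

lemma Psi_mono : Monotone Psi := by
  apply monotone_of_deriv_nonneg
  · intro y; exact (hasDerivAt_Psi y).differentiableAt
  · intro y; rw [(hasDerivAt_Psi y).deriv]; positivity

lemma Psi_le_one (y : ℝ) : Psi y ≤ 1 := Psi_mono.ge_of_tendsto Psi_tendsto y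
lemma Psi_nonneg (y : ℝ) : 0 ≤ Psi y := by
  have := Psi_le_one (-y); rw [Psi_neg] at this; linarith
lemma Psi_zero : Psi 0 = 1 / 2 := by simp [Psi]
lemma Psi_cont : Continuous Psi :=
  continuous_iff_continuousAt.2 fun y => (hasDerivAt_Psi y).continuousAt

lemma Hv_pos {z : ℝ} (h : 0 < z) : Hv z = 1 := by simp [Hv, h]
lemma Hv_lt {z : ℝ} (h : z < 0) : Hv z = 0 := by simp [Hv, h, h.le]
lemma Hv_zero : Hv 0 = 1 / 2 := by simp [Hv]
lemma Hv_neg (z : ℝ) : Hv (-z) = 1 - Hv z := by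
  rcases lt_trichotomy z 0 with h | h | h
  · rw [Hv_lt h, Hv_pos (by linarith)]; norm_num
  · subst h; rw [neg_zero, Hv_zero]; norm_num
  · rw [Hv_pos h, Hv_lt (by linarith)]; norm_num
lemma Hv_mem (z : ℝ) : 0 ≤ Hv z ∧ Hv z ≤ 1 := by
  unfold Hv; split_ifs <;> norm_num

lemma Ek_pos {r : ℝ} (hr : 0 < r) (z : ℝ) : Ek r z = Psi (z / (2 * √r)) := by simp [Ek, hr]
lemma Ek_zero (z : ℝ) : Ek 0 z = Hv z := by simp [Ek]
lemma Ek_mem (r z : ℝ) : 0 ≤ Ek r z ∧ Ek r z ≤ 1 := by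
  unfold Ek; split_ifs
  · exact ⟨Psi_nonneg _, Psi_le_one _⟩
  · exact Hv_mem z
lemma Ek_neg (r z : ℝ) : Ek r (-z) = 1 - Ek r z := by
  unfold Ek; split_ifs
  · rw [neg_div, Psi_neg]
  · exact Hv_neg z

lemma hasDerivAt_Ek_z {r : ℝ} (hr : 0 < r) (z : ℝ) : HasDerivAt (Ek r) (Gk r z) z := by
  have e : Ek r = fun z => Psi (z / (2 * √r)) := by ext z; exact Ek_pos hr z
  rw [e]
  have h := (hasDerivAt_Psi (z / (2 * √r))).comp z ((hasDerivAt_id z).div_const (2 * √r))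
  refine h.congr_deriv ?_
  have hs : √r ^ 2 = r := Real.sq_sqrt hr.le
  unfold Gk
  rw [Real.sqrt_mul (by positivity), Real.sqrt_mul (by positivity),
    show √(4:ℝ) = 2 by rw [show (4:ℝ) = 2 ^ 2 by norm_num]; simp]
  rw [div_pow, mul_pow, hs]
  have : √r ≠ 0 := (Real.sqrt_pos.2 hr).ne'
  norm_num
  field_simp

lemma hasDerivAt_Ek_r {r : ℝ} (hr : 0 < r) (z : ℝ) : HasDerivAt (fun r => Ek r z) (G1 r z) r := by
  have e : (fun r => Ek r z) =ᶠ[𝓝 r] fun r => Psi (z / (2 * √r)) := by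
    filter_upwards [Ioi_mem_nhds hr] with q hq using Ek_pos hq z
  refine HasDerivAt.congr_of_eventuallyEq ?_ e
  have hs0 : √r ≠ 0 := (Real.sqrt_pos.2 hr).ne'
  have hs : √r ^ 2 = r := Real.sq_sqrt hr.le
  have h1 : HasDerivAt (fun r => 2 * √r) (2 * (1 / (2 * √r))) r :=
    (Real.hasDerivAt_sqrt hr.ne').const_mul 2
  have h2 := (hasDerivAt_const r z).div h1 (by positivity)
  have h := (hasDerivAt_Psi (z / (2 * √r))).comp r h2
  refine h.congr_deriv ?_
  unfold G1 Gk
  rw [Real.sqrt_mul (by positivity), Real.sqrt_mul (by positivity),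
    show √(4:ℝ) = 2 by rw [show (4:ℝ) = 2 ^ 2 by norm_num]; simp]
  rw [div_pow, mul_pow, hs]
  norm_num
  field_simp
  try rw [hs]
  try ring

lemma continuousAt_Ek_pos {r z : ℝ} (hr : 0 < r) :
    ContinuousAt (fun q : ℝ × ℝ => Ek q.1 q.2) (r, z) := by
  have e : (fun q : ℝ × ℝ => Ek q.1 q.2) =ᶠ[𝓝 (r, z)] fun q => Psi (q.2 / (2 * √q.1)) := by
    have : ∀ᶠ q : ℝ × ℝ in 𝓝 (r, z), 0 < q.1 := continuousAt_fst.eventually_const_lt hr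
    filter_upwards [this] with q hq using Ek_pos hq _
  refine ContinuousAt.congr ?_ e.symm
  have hs0 : √r ≠ 0 := (Real.sqrt_pos.2 hr).ne'
  apply Psi_cont.continuousAt.comp
  refine ContinuousAt.div (by fun_prop) (by fun_prop) (by simpa using hs0)

lemma continuousAt_Ek_zero {z : ℝ} (hz : 0 < z) :
    ContinuousAt (fun q : ℝ × ℝ => Ek q.1 q.2) (0, z) := by
  rw [Metric.continuousAt_iff']
  intro ε hε
  obtain ⟨N, hN⟩ := (Metric.tendsto_atTop.1 Psi_tendsto ε hε)
  have h1 : ∀ᶠ q : ℝ × ℝ in 𝓝 (0, z), 2 * N * √q.1 < q.2 := by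
    apply ContinuousAt.eventually_lt (by fun_prop) (by fun_prop)
    simpa using hz
  have h2 : ∀ᶠ q : ℝ × ℝ in 𝓝 (0, z), 0 < q.2 := continuousAt_snd.eventually_const_lt hz
  filter_upwards [h1, h2] with q hq hq2
  rw [Ek_zero, Hv_pos hz]
  rcases le_or_gt q.1 0 with hr | hr
  · have : Ek q.1 q.2 = 1 := by simp [Ek, not_lt.2 hr, Hv_pos hq2]
    rw [this, dist_self]; exact hε
  · rw [Ek_pos hr]
    apply hN
    have : 0 < √q.1 := Real.sqrt_pos.2 hr
    rw [ge_iff_le, le_div_iff₀ (by positivity)]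
    linarith

lemma continuousAt_Ek {r z : ℝ} (h : 0 < r ∨ (r = 0 ∧ z ≠ 0)) :
    ContinuousAt (fun q : ℝ × ℝ => Ek q.1 q.2) (r, z) := by
  rcases h with h | ⟨h, hz⟩
  · exact continuousAt_Ek_pos h
  · subst h
    rcases lt_or_gt_of_ne hz with h | h
    · have h1 := (continuousAt_Ek_zero (z := -z) (by linarith))
      have h2 : ContinuousAt (fun q : ℝ × ℝ => Ek q.1 (-q.2)) (0, z) :=
        ContinuousAt.comp (f := fun q : ℝ × ℝ => (q.1, -q.2)) (x := ((0:ℝ), z)) h1 (by fun_prop)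
      have h3 := (continuousAt_const (y := (1:ℝ))).sub h2
      refine h3.congr (Eventually.of_forall fun q => ?_)
      simp [Ek_neg]
    · exact continuousAt_Ek_zero h

lemma Gk_integrable {r : ℝ} (hr : 0 < r) : Integrable (Gk r) := by
  have h := (integrable_exp_neg_mul_sq (b := (4 * r)⁻¹) (by positivity)).const_mul (√(4 * π * r))⁻¹
  refine h.congr (Eventually.of_forall fun z => ?_)
  simp only [Gk]; congr 3; rw [div_eq_inv_mul]; ring

lemma Gk_integral {r : ℝ} (hr : 0 < r) : ∫ z, Gk r z = 1 := by
  have h := integral_gaussian (4 * r)⁻¹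
  have e : ∀ z, Gk r z = (√(4 * π * r))⁻¹ * Real.exp (-(4 * r)⁻¹ * z ^ 2) := by
    intro z; simp only [Gk]; congr 3; rw [div_eq_inv_mul]; ring
  simp_rw [e]
  rw [integral_const_mul, h]
  have : π / (4 * r)⁻¹ = 4 * π * r := by field_simp
  rw [this]
  exact inv_mul_cancel₀ (Real.sqrt_pos.2 (by positivity)).ne'

lemma Gk_shift_integrable {r : ℝ} (hr : 0 < r) (x : ℝ) : Integrable (fun y => Gk r (x - y)) :=
  (Gk_integrable hr).comp_sub_left x

lemma Gk_shift_integral_le {r : ℝ} (hr : 0 < r) (x : ℝ) (s : Set ℝ) :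
    ∫ y in s, Gk r (x - y) ≤ 1 := by
  rw [← Gk_integral hr, ← integral_sub_left_eq_self (Gk r) volume x]
  exact setIntegral_le_integral (Gk_shift_integrable hr x) (Eventually.of_forall fun y => Gk_nonneg _ _)

end

section


lemma aesm_of_contOn_Icc {R : ℝ} (hR : 0 ≤ R) {f : ℝ → ℝ} (hf : ContinuousOn f (Icc 0 R)) :
    AEStronglyMeasurable f (volume.restrict (uIoc 0 R)) := by
  rw [uIoc_of_le hR]
  exact (hf.mono Ioc_subset_Icc_self).aestronglyMeasurable measurableSet_Ioc

lemma aesm_of_contOn_Ioo {R : ℝ} (hR : 0 ≤ R) {f : ℝ → ℝ} (hf : ContinuousOn f (Ioo 0 R)) :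
    AEStronglyMeasurable f (volume.restrict (uIoc 0 R)) := by
  rw [uIoc_of_le hR, ← Measure.restrict_congr_set Ioo_ae_eq_Ioc]
  exact hf.aestronglyMeasurable measurableSet_Ioo

lemma tube_bound {X : Type*} [TopologicalSpace X] {R : ℝ} {m : X → ℝ → ℝ} {q₀ : X}
    {U : Set (X × ℝ)} (hU : IsOpen U) (hm : ∀ z ∈ U, ContinuousAt (fun z : X × ℝ => m z.1 z.2) z)
    (h0 : ∀ a ∈ Icc 0 R, (q₀, a) ∈ U) :
    ∃ C : ℝ, ∀ᶠ q in 𝓝 q₀, ∀ a ∈ Icc 0 R, (q, a) ∈ U ∧ |m q a| ≤ C := by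
  have hc : ContinuousOn (fun a => m q₀ a) (Icc 0 R) := fun a ha =>
    (ContinuousAt.comp (f := fun a : ℝ => (q₀, a)) (x := a) (hm _ (h0 a ha))
      (by fun_prop)).continuousWithinAt
  obtain ⟨C, hC⟩ := isCompact_Icc.exists_bound_of_continuousOn hc
  refine ⟨C + 1, isCompact_Icc.eventually_forall_of_forall_eventually (P := fun q a => (q, a) ∈ U ∧ |m q a| ≤ C + 1) ?_⟩
  intro a ha
  have h1 : ∀ᶠ z : X × ℝ in 𝓝 (q₀, a), |m z.1 z.2| < C + 1 := by
    apply (hm _ (h0 a ha)).abs.eventually_lt_const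
    have := hC a ha
    simp only [Real.norm_eq_abs] at this
    simp only; linarith
  filter_upwards [hU.mem_nhds (h0 a ha), h1] with z hz1 hz2
  exact ⟨hz1, hz2.le⟩

lemma contOn_slice {X : Type*} [TopologicalSpace X] {R : ℝ} {m : X → ℝ → ℝ} {q : X}
    {U : Set (X × ℝ)} (hm : ∀ z ∈ U, ContinuousAt (fun z : X × ℝ => m z.1 z.2) z)
    (h0 : ∀ a ∈ Icc 0 R, (q, a) ∈ U) : ContinuousOn (m q) (Icc 0 R) := fun a ha =>
  (ContinuousAt.comp (f := fun a : ℝ => (q, a)) (x := a) (hm _ (h0 a ha))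
      (by fun_prop)).continuousWithinAt

lemma param_cont {X : Type*} [TopologicalSpace X] [FirstCountableTopology X] {R : ℝ} (hR : 0 ≤ R)
    {m : X → ℝ → ℝ} {q₀ : X}
    {U : Set (X × ℝ)} (hU : IsOpen U) (hm : ∀ z ∈ U, ContinuousAt (fun z : X × ℝ => m z.1 z.2) z)
    (h0 : ∀ a ∈ Icc 0 R, (q₀, a) ∈ U) {w : ℝ → ℝ} (hw : IntervalIntegrable w volume 0 R) :
    ContinuousAt (fun q => ∫ a in (0:ℝ)..R, m q a * w a) q₀ := by
  obtain ⟨C, hC⟩ := tube_bound hU hm h0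
  have hwm : AEStronglyMeasurable w (volume.restrict (uIoc 0 R)) := hw.def'.aestronglyMeasurable
  apply intervalIntegral.continuousAt_of_dominated_interval (bound := fun a => C * |w a|)
  · filter_upwards [hC] with q hq
    exact (aesm_of_contOn_Icc hR (contOn_slice hm fun a ha => (hq a ha).1)).mul hwm
  · filter_upwards [hC] with q hq
    refine Eventually.of_forall fun a ha => ?_
    rw [uIoc_of_le hR] at ha
    rw [Real.norm_eq_abs, abs_mul]
    exact mul_le_mul_of_nonneg_right (hq a (Ioc_subset_Icc_self ha)).2 (abs_nonneg _)
  · exact hw.abs.const_mul C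
  · refine Eventually.of_forall fun a ha => ?_
    rw [uIoc_of_le hR] at ha
    exact (ContinuousAt.comp (f := fun q : X => (q, a)) (x := q₀)
      (hm _ (h0 a (Ioc_subset_Icc_self ha))) (by fun_prop)).mul continuousAt_const

lemma param_deriv {R : ℝ} (hR : 0 ≤ R) {m m' : ℝ → ℝ → ℝ} {l₀ : ℝ}
    {U : Set (ℝ × ℝ)} (hU : IsOpen U) (hm : ∀ z ∈ U, ContinuousAt (fun z : ℝ × ℝ => m z.1 z.2) z)
    (hm' : ∀ z ∈ U, ContinuousAt (fun z : ℝ × ℝ => m' z.1 z.2) z)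
    (hd : ∀ z ∈ U, HasDerivAt (fun l => m l z.2) (m' z.1 z.2) z.1)
    (h0 : ∀ a ∈ Icc 0 R, (l₀, a) ∈ U) {w : ℝ → ℝ} (hw : IntervalIntegrable w volume 0 R) :
    HasDerivAt (fun l => ∫ a in (0:ℝ)..R, m l a * w a) (∫ a in (0:ℝ)..R, m' l₀ a * w a) l₀ := by
  obtain ⟨C, hC⟩ := tube_bound hU hm' h0
  have hwm : AEStronglyMeasurable w (volume.restrict (uIoc 0 R)) := hw.def'.aestronglyMeasurable
  refine (intervalIntegral.hasDerivAt_integral_of_dominated_loc_of_deriv_le (μ := volume) (a := 0) (b := R)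
    (F := fun l a => m l a * w a) (F' := fun l a => m' l a * w a)
    (s := {q | ∀ a ∈ Icc 0 R, (q, a) ∈ U ∧ |m' q a| ≤ C})
    (bound := fun a => C * |w a|) hC ?_ ?_ ?_ ?_ ?_ ?_).2
  · filter_upwards [hC] with q hq
    exact (aesm_of_contOn_Icc hR (contOn_slice hm fun a ha => (hq a ha).1)).mul hwm
  · have : ContinuousOn (m l₀) (uIcc 0 R) := by
      rw [uIcc_of_le hR]; exact contOn_slice hm h0
    exact hw.continuousOn_mul this
  · exact (aesm_of_contOn_Icc hR (contOn_slice hm' h0)).mul hwm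
  · refine Eventually.of_forall fun a ha q hq => ?_
    rw [uIoc_of_le hR] at ha
    rw [Real.norm_eq_abs, abs_mul]
    exact mul_le_mul_of_nonneg_right (hq a (Ioc_subset_Icc_self ha)).2 (abs_nonneg _)
  · exact hw.abs.const_mul C
  · refine Eventually.of_forall fun a ha q hq => ?_
    rw [uIoc_of_le hR] at ha
    exact (hd _ (hq a (Ioc_subset_Icc_self ha)).1).mul_const _

/-- generic potential -/
def Vp (k : ℝ → ℝ → ℝ) (R : ℝ) (α β w : ℝ → ℝ) (t x : ℝ) : ℝ :=
  ∫ a in (0:ℝ)..R, k (t - α a) (x - β a) * w a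

lemma Vp_cont {k : ℝ → ℝ → ℝ} {R : ℝ} (hR : 0 ≤ R) {α β w : ℝ → ℝ} (hα : Continuous α)
    (hβ : Continuous β) (hw : IntervalIntegrable w volume 0 R) {O : Set (ℝ × ℝ)} (hO : IsOpen O)
    (hk : ∀ z ∈ O, ContinuousAt (fun z : ℝ × ℝ => k z.1 z.2) z) {t x : ℝ}
    (h0 : ∀ a ∈ Icc 0 R, (t - α a, x - β a) ∈ O) :
    ContinuousAt (fun q : ℝ × ℝ => Vp k R α β w q.1 q.2) (t, x) := by
  have hf : Continuous fun z : (ℝ × ℝ) × ℝ => (z.1.1 - α z.2, z.1.2 - β z.2) := by fun_prop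
  exact param_cont (q₀ := (t, x)) (m := fun q a => k (q.1 - α a) (q.2 - β a)) hR (hO.preimage hf)
    (fun z hz => ContinuousAt.comp (f := fun z : (ℝ × ℝ) × ℝ => (z.1.1 - α z.2, z.1.2 - β z.2))
      (hk _ hz) hf.continuousAt) h0 hw

lemma Vp_deriv_x {k k' : ℝ → ℝ → ℝ} {R : ℝ} (hR : 0 ≤ R) {α β w : ℝ → ℝ} (hα : Continuous α)
    (hβ : Continuous β) (hw : IntervalIntegrable w volume 0 R) {O : Set (ℝ × ℝ)} (hO : IsOpen O)
    (hk : ∀ z ∈ O, ContinuousAt (fun z : ℝ × ℝ => k z.1 z.2) z)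
    (hk' : ∀ z ∈ O, ContinuousAt (fun z : ℝ × ℝ => k' z.1 z.2) z)
    (hd : ∀ z ∈ O, HasDerivAt (k z.1) (k' z.1 z.2) z.2) {t x : ℝ}
    (h0 : ∀ a ∈ Icc 0 R, (t - α a, x - β a) ∈ O) :
    HasDerivAt (fun x => Vp k R α β w t x) (Vp k' R α β w t x) x := by
  have hf : Continuous fun z : ℝ × ℝ => (t - α z.2, z.1 - β z.2) := by fun_prop
  refine param_deriv (m := fun x a => k (t - α a) (x - β a))
    (m' := fun x a => k' (t - α a) (x - β a)) hR (hO.preimage hf)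
    (fun z hz => ContinuousAt.comp (f := fun z : ℝ × ℝ => (t - α z.2, z.1 - β z.2))
      (hk _ hz) hf.continuousAt)
    (fun z hz => ContinuousAt.comp (f := fun z : ℝ × ℝ => (t - α z.2, z.1 - β z.2))
      (hk' _ hz) hf.continuousAt) (fun z hz => ?_) h0 hw
  exact (hd _ hz).comp_sub_const z.1 (β z.2)

lemma Vp_deriv_t {k k' : ℝ → ℝ → ℝ} {R : ℝ} (hR : 0 ≤ R) {α β w : ℝ → ℝ} (hα : Continuous α)
    (hβ : Continuous β) (hw : IntervalIntegrable w volume 0 R) {O : Set (ℝ × ℝ)} (hO : IsOpen O)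
    (hk : ∀ z ∈ O, ContinuousAt (fun z : ℝ × ℝ => k z.1 z.2) z)
    (hk' : ∀ z ∈ O, ContinuousAt (fun z : ℝ × ℝ => k' z.1 z.2) z)
    (hd : ∀ z ∈ O, HasDerivAt (fun r => k r z.2) (k' z.1 z.2) z.1) {t x : ℝ}
    (h0 : ∀ a ∈ Icc 0 R, (t - α a, x - β a) ∈ O) :
    HasDerivAt (fun t => Vp k R α β w t x) (Vp k' R α β w t x) t := by
  have hf : Continuous fun z : ℝ × ℝ => (z.1 - α z.2, x - β z.2) := by fun_prop
  refine param_deriv (m := fun t a => k (t - α a) (x - β a))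
    (m' := fun t a => k' (t - α a) (x - β a)) hR (hO.preimage hf)
    (fun z hz => ContinuousAt.comp (f := fun z : ℝ × ℝ => (z.1 - α z.2, x - β z.2))
      (hk _ hz) hf.continuousAt)
    (fun z hz => ContinuousAt.comp (f := fun z : ℝ × ℝ => (z.1 - α z.2, x - β z.2))
      (hk' _ hz) hf.continuousAt) (fun z hz => ?_) h0 hw
  exact (hd _ hz).comp_sub_const z.1 (α z.2)

/-- Beta type weight -/
def bt (t τ : ℝ) : ℝ := (√τ)⁻¹ * (√(t - τ))⁻¹
def B0 : ℝ := ∫ τ in (0:ℝ)..1, bt 1 τ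

lemma bt_nonneg (t τ : ℝ) : 0 ≤ bt t τ := by unfold bt; positivity

lemma inv_sqrt_ii (a b : ℝ) : IntervalIntegrable (fun τ : ℝ => (√τ)⁻¹) volume a b := by
  have h := intervalIntegral.intervalIntegrable_rpow' (a := a) (b := b) (r := -(1/2)) (by norm_num)
  refine h.mono_fun' (by fun_prop) (Eventually.of_forall fun x => ?_)
  beta_reduce
  rcases le_or_gt x 0 with hx | hx
  · rw [Real.sqrt_eq_zero_of_nonpos hx]
    simp only [inv_zero, norm_zero]
    rcases eq_or_lt_of_le hx with hx | hx
    · subst hx; rw [Real.zero_rpow (by norm_num)]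
    · rw [Real.rpow_def_of_neg hx]
      apply mul_nonneg (Real.exp_pos _).le
      apply Real.cos_nonneg_of_neg_pi_div_two_le_of_le <;> linarith [Real.pi_pos]
  · rw [Real.rpow_neg hx.le, ← Real.sqrt_eq_rpow, Real.norm_eq_abs, abs_of_nonneg (by positivity)]

lemma bt_ii_one : IntervalIntegrable (bt 1) volume 0 1 := by
  have h1 := inv_sqrt_ii 0 1
  have h2 : IntervalIntegrable (fun τ : ℝ => (√(1 - τ))⁻¹) volume 0 1 := by
    have := (inv_sqrt_ii 1 0).comp_sub_left 1
    simpa using this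
  refine ((h1.add h2).const_mul 2).mono_fun' ?_ ?_
  · unfold bt; fun_prop
  · rw [uIoc_of_le zero_le_one]
    refine (ae_restrict_mem measurableSet_Ioc).mono fun τ hτ => ?_
    beta_reduce
    rw [Real.norm_eq_abs, abs_of_nonneg (bt_nonneg _ _)]
    have key : ∀ r : ℝ, 1 / 2 ≤ r → (√r)⁻¹ ≤ 2 := by
      intro r hr
      rw [inv_le_comm₀ (Real.sqrt_pos.2 (by linarith)) two_pos]
      apply Real.le_sqrt_of_sq_le; norm_num; linarith
    have p1 : 0 ≤ (√τ)⁻¹ := by positivity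
    have p2 : 0 ≤ (√(1 - τ))⁻¹ := by positivity
    unfold bt
    rcases le_total τ (1 / 2) with h | h
    · have := key (1 - τ) (by linarith); nlinarith
    · have := key τ (by linarith); nlinarith

lemma bt_scale {t : ℝ} (ht : 0 < t) (θ : ℝ) : t * bt t (t * θ) = bt 1 θ := by
  unfold bt
  have : t - t * θ = t * (1 - θ) := by ring
  rw [this, Real.sqrt_mul ht.le, Real.sqrt_mul ht.le]
  have hs : √t * √t = t := Real.mul_self_sqrt ht.le
  have hs0 : √t ≠ 0 := (Real.sqrt_pos.2 ht).ne'
  calc _ = t * (√t * √t)⁻¹ * ((√θ)⁻¹ * (√(1 - θ))⁻¹) := by rw [mul_inv, mul_inv, mul_inv]; ring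
    _ = _ := by rw [hs, mul_inv_cancel₀ ht.ne', one_mul]

lemma int_scale (t : ℝ) (f : ℝ → ℝ) : ∫ τ in (0:ℝ)..t, f τ = ∫ θ in (0:ℝ)..1, t * f (t * θ) := by
  have := intervalIntegral.smul_integral_comp_mul_left (a := 0) (b := 1) f t
  simp only [mul_zero, mul_one, smul_eq_mul] at this
  rw [← this, intervalIntegral.integral_const_mul]

lemma bt_ii {t : ℝ} (ht : 0 < t) : IntervalIntegrable (bt t) volume 0 t := by
  have h := bt_ii_one.comp_mul_left (c := t⁻¹) 
  have e : (fun x => bt 1 (t⁻¹ * x)) = fun x => t * bt t x := by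
    ext x; rw [← bt_scale ht, ← mul_assoc, mul_inv_cancel₀ ht.ne', one_mul]
  rw [e] at h
  simp only [zero_div, div_inv_eq_mul, one_mul] at h
  have h2 := h.const_mul t⁻¹
  simpa [← mul_assoc, inv_mul_cancel₀ ht.ne'] using h2

lemma bt_integral {t : ℝ} (ht : 0 < t) : ∫ τ in (0:ℝ)..t, bt t τ = B0 := by
  rw [int_scale]; simp_rw [bt_scale ht]; rfl

lemma B0_nonneg : 0 ≤ B0 := intervalIntegral.integral_nonneg zero_le_one fun _ _ => bt_nonneg _ _

lemma ae_Ioc_Ioo {t : ℝ} {P : ℝ → Prop} (h : ∀ τ ∈ Ioo 0 t, P τ) :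
    ∀ᵐ τ : ℝ, τ ∈ Ioc 0 t → P τ := by
  have : ∀ᵐ τ : ℝ, τ ≠ t := by
    rw [ae_iff]; simp
  filter_upwards [this] with τ h1 h2
  exact h τ ⟨h2.1, lt_of_le_of_ne h2.2 h1⟩

lemma vol_bound {t C : ℝ} (ht : 0 < t) {k : ℝ → ℝ} (h : ∀ τ ∈ Ioo 0 t, |k τ| ≤ C * bt t τ) :
    |∫ τ in (0:ℝ)..t, k τ| ≤ C * B0 := by
  have := intervalIntegral.norm_integral_le_of_norm_le ht.le (f := k) (g := fun τ => C * bt t τ)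
    (μ := volume) (ae_Ioc_Ioo h) ((bt_ii ht).const_mul C)
  rwa [intervalIntegral.integral_const_mul, bt_integral ht] at this

lemma vol_ii {t C : ℝ} (ht : 0 < t) {k : ℝ → ℝ} (hk : ContinuousOn k (Ioo 0 t))
    (h : ∀ τ ∈ Ioo 0 t, |k τ| ≤ C * bt t τ) : IntervalIntegrable k volume 0 t := by
  refine ((bt_ii ht).const_mul C).mono_fun' (aesm_of_contOn_Ioo ht.le hk) ?_
  rw [uIoc_of_le ht.le]
  exact (ae_restrict_iff' measurableSet_Ioc).2 (ae_Ioc_Ioo h)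

lemma vol_cont {X : Type*} [TopologicalSpace X] [FirstCountableTopology X] {q₀ : X} {t : X → ℝ}
    (ht : ContinuousAt t q₀) (ht0 : 0 < t q₀) {k : X → ℝ → ℝ} {C : ℝ}
    (hk : ∀ᶠ q in 𝓝 q₀, ContinuousOn (k q) (Ioo 0 (t q)))
    (hb : ∀ᶠ q in 𝓝 q₀, ∀ τ ∈ Ioo 0 (t q), |k q τ| ≤ C * bt (t q) τ)
    (hc : ∀ θ ∈ Ioo (0:ℝ) 1, ContinuousAt (fun q => k q (t q * θ)) q₀) :
    ContinuousAt (fun q => ∫ τ in (0:ℝ)..(t q), k q τ) q₀ := by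
  have hpos : ∀ᶠ q in 𝓝 q₀, 0 < t q := ht.eventually_const_lt ht0
  have e : (fun q => ∫ τ in (0:ℝ)..(t q), k q τ) =
      fun q => ∫ θ in (0:ℝ)..1, t q * k q (t q * θ) := by
    ext q; exact int_scale _ _
  have hmem : ∀ q, 0 < t q → ∀ θ ∈ Ioo (0:ℝ) 1, t q * θ ∈ Ioo 0 (t q) := fun q hq θ hθ =>
    ⟨mul_pos hq hθ.1, by have := hθ.2; nlinarith⟩
  rw [e]
  apply intervalIntegral.continuousAt_of_dominated_interval (bound := fun θ => C * bt 1 θ)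
  · filter_upwards [hk, hpos] with q hq hq0
    refine aesm_of_contOn_Ioo zero_le_one (continuousOn_const.mul ?_)
    exact hq.comp (by fun_prop) (fun θ hθ => hmem q hq0 θ hθ)
  · filter_upwards [hb, hpos] with q hq hq0
    rw [uIoc_of_le zero_le_one]
    refine ae_Ioc_Ioo fun θ hθ => ?_
    rw [Real.norm_eq_abs, abs_mul, abs_of_pos hq0, ← bt_scale hq0]
    have := mul_le_mul_of_nonneg_left (hq _ (hmem q hq0 θ hθ)) hq0.le
    linarith
  · exact bt_ii_one.const_mul C
  · rw [uIoc_of_le zero_le_one]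
    exact ae_Ioc_Ioo fun θ hθ => ht.mul (hc θ hθ)

end

section


lemma inv_sqrt_int {t : ℝ} (ht : 0 ≤ t) : ∫ τ in (0:ℝ)..t, (√τ)⁻¹ = 2 * √t := by
  have := intervalIntegral.integral_eq_sub_of_hasDerivAt_of_le (f := fun τ => 2 * √τ)
    (f' := fun τ => (√τ)⁻¹) ht (by fun_prop) (fun x hx => ?_) (inv_sqrt_ii 0 t)
  · rw [this]; simp
  · have h := (Real.hasDerivAt_sqrt hx.1.ne').const_mul 2
    refine h.congr_deriv ?_
    have : √x ≠ 0 := (Real.sqrt_pos.2 hx.1).ne'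
    field_simp

lemma G1_int {d δ : ℝ} (hδ : 0 ≤ δ) : IntervalIntegrable (fun r => |G1 (2 * r) d|) volume 0 δ ∧
    ∫ r in (0:ℝ)..δ, |G1 (2 * r) d| ≤ 1 := by
  have main : ∀ d : ℝ, 0 < d → IntervalIntegrable (fun r => |G1 (2 * r) d|) volume 0 δ ∧
    ∫ r in (0:ℝ)..δ, |G1 (2 * r) d| ≤ 1 := by
    intro d hd
    have hc : Continuous fun r => G1 (2 * r) d := by
      rw [continuous_iff_continuousAt]; intro r
      exact ContinuousAt.comp (g := fun q : ℝ × ℝ => G1 q.1 q.2) (f := fun r : ℝ => (2 * r, d))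
        (continuousAt_G1 (Or.inr hd.ne')) (by fun_prop)
    have hci := hc.abs.intervalIntegrable (μ := volume) 0 δ
    refine ⟨hci, ?_⟩
    have := intervalIntegral.integral_eq_sub_of_hasDerivAt_of_le (f := fun r => -(1/2) * Ek (2 * r) d)
      (f' := fun r => |G1 (2 * r) d|) hδ ?_ ?_ hci
    · rw [this]
      have h1 := Ek_mem (2 * δ) d
      have h2 := Ek_mem (2 * 0) d
      generalize Ek (2 * 0) d = y at *
      linarith [h1.1, h1.2, h2.1, h2.2]
    · intro r hr
      apply ContinuousAt.continuousWithinAt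
      refine continuousAt_const.mul ?_
      refine ContinuousAt.comp (g := fun q : ℝ × ℝ => Ek q.1 q.2) (f := fun r : ℝ => (2 * r, d))
        (continuousAt_Ek ?_) (by fun_prop)
      rcases eq_or_lt_of_le hr.1 with h | h
      · right; exact ⟨by linarith, hd.ne'⟩
      · left; linarith
    · intro r hr
      have h2 : HasDerivAt (fun r : ℝ => 2 * r) 2 r := by simpa using (hasDerivAt_id r).const_mul 2
      have h := ((hasDerivAt_Ek_r (r := 2 * r) (by linarith [hr.1]) d).comp r h2).const_mul (-(1/2))
      refine h.congr_deriv ?_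
      have : G1 (2 * r) d ≤ 0 := by
        unfold G1
        have := Gk_nonneg (2 * r) d
        have : 0 ≤ d / (2 * (2 * r)) := by have := hr.1; positivity
        nlinarith
      rw [abs_of_nonpos this]; ring
  rcases lt_trichotomy d 0 with hd | hd | hd
  · have := main (-d) (by linarith)
    simpa only [G1_neg, abs_neg] using this
  · subst hd; simp [G1_zero]
  · exact main d hd

lemma G1_cmp {r d e L : ℝ} (hr : 0 < r) (hr1 : r ≤ 1) (hL : 0 ≤ L) (he : |e| ≤ L * r) :
    |G1 r (d + e)| ≤ L * (√r)⁻¹ + 2 * √2 * Real.exp (L ^ 2) * |G1 (2 * r) d| := by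
  have hG : Gk r (d + e) ≤ √2 * Real.exp (L ^ 2) * Gk (2 * r) d := by
    have e1 : √2 * (√(4 * π * (2 * r)))⁻¹ = (√(4 * π * r))⁻¹ := by
      have : 4 * π * (2 * r) = 2 * (4 * π * r) := by ring
      rw [this, Real.sqrt_mul (by norm_num : (0:ℝ) ≤ 2), mul_inv, ← mul_assoc,
        mul_inv_cancel₀ (by positivity), one_mul]
    have e2 : √2 * Real.exp (L ^ 2) * Gk (2 * r) d =
        (√(4 * π * r))⁻¹ * Real.exp (L ^ 2 + -(d ^ 2 / (4 * (2 * r)))) := by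
      rw [← e1, Real.exp_add]; unfold Gk; ring
    rw [e2]
    unfold Gk
    gcongr
    have he2 : e ^ 2 ≤ (L * r) ^ 2 := sq_le_sq' (by linarith [neg_abs_le e]) (le_trans (le_abs_self e) he)
    have h3 : d ^ 2 / (4 * (2 * r)) = (d ^ 2 / 2) / (4 * r) := by field_simp
    have h4 : L ^ 2 = 4 * L ^ 2 * r / (4 * r) := by field_simp
    rw [h3, h4, ← sub_eq_add_neg, ← sub_div, ← neg_div]
    gcongr
    nlinarith [sq_nonneg (d + 2 * e), mul_nonneg (sq_nonneg L) hr.le, mul_nonneg (mul_nonneg (sq_nonneg L) hr.le) (by linarith : 0 ≤ 1 - r)]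
  have h1 : |G1 r (d + e)| = |d + e| / (2 * r) * Gk r (d + e) := by
    unfold G1
    rw [abs_mul, abs_neg, abs_div, abs_of_pos (by positivity : 0 < 2 * r), abs_of_nonneg (Gk_nonneg _ _)]
  have h2 : |G1 (2 * r) d| = |d| / (2 * (2 * r)) * Gk (2 * r) d := by
    unfold G1
    rw [abs_mul, abs_neg, abs_div, abs_of_pos (by positivity : 0 < 2 * (2 * r)), abs_of_nonneg (Gk_nonneg _ _)]
  have h5 : |d + e| / (2 * r) ≤ |d| / (2 * r) + L := by
    have : |d| / (2 * r) + L = (|d| + 2 * L * r) / (2 * r) := by field_simp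
    rw [this]; gcongr
    have := abs_add_le d e
    nlinarith [mul_nonneg hL hr.le]
  rw [h1, h2]
  calc _ ≤ (|d| / (2 * r) + L) * Gk r (d + e) := mul_le_mul_of_nonneg_right h5 (Gk_nonneg _ _)
    _ = |d| / (2 * r) * Gk r (d + e) + L * Gk r (d + e) := by ring
    _ ≤ |d| / (2 * r) * (√2 * Real.exp (L ^ 2) * Gk (2 * r) d) + L * (√r)⁻¹ := by
        gcongr
        exact Gk_le _ _
    _ = _ := by field_simp; ring

lemma near_bound {c : ℝ → ℝ} (hc : Continuous c) {t t1 L : ℝ} (h1 : t1 < t) (h2 : t - t1 ≤ 1)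
    (hL : 0 ≤ L) (hl : ∀ τ ∈ Ioo t1 t, |c t - c τ| ≤ L * (t - τ)) (x : ℝ) :
    IntervalIntegrable (fun τ => G1 (t - τ) (x - c τ)) volume t1 t ∧
    ∫ τ in t1..t, |G1 (t - τ) (x - c τ)| ≤ 2 * L + 2 * √2 * Real.exp (L ^ 2) := by
  set d := x - c t
  set B : ℝ → ℝ := fun r => L * (√r)⁻¹ + 2 * √2 * Real.exp (L ^ 2) * |G1 (2 * r) d|
  have hBi : IntervalIntegrable B volume 0 (t - t1) :=
    ((inv_sqrt_ii 0 (t - t1)).const_mul L).add ((G1_int (by linarith)).1.const_mul _)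
  have hBi' : IntervalIntegrable (fun τ => B (t - τ)) volume t1 t := by
    have := (hBi.comp_sub_left t).symm
    simpa using this
  have hBI : ∫ τ in t1..t, B (t - τ) ≤ 2 * L + 2 * √2 * Real.exp (L ^ 2) := by
    rw [intervalIntegral.integral_comp_sub_left B t, sub_self]
    have e := intervalIntegral.integral_add ((inv_sqrt_ii 0 (t - t1)).const_mul L)
      ((G1_int (d := d) (δ := t - t1) (by linarith)).1.const_mul (2 * √2 * Real.exp (L ^ 2)))
    simp only [intervalIntegral.integral_const_mul] at e
    rw [e, inv_sqrt_int (by linarith)]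
    have := (G1_int (d := d) (δ := t - t1) (by linarith)).2
    have h3 : √(t - t1) ≤ 1 := Real.sqrt_le_one.2 h2
    have h4 : 0 ≤ 2 * √2 * Real.exp (L ^ 2) := by positivity
    nlinarith [mul_le_mul_of_nonneg_left this h4, mul_le_mul_of_nonneg_left h3 hL]
  have hle : ∀ τ ∈ Ioo t1 t, |G1 (t - τ) (x - c τ)| ≤ B (t - τ) := by
    intro τ hτ
    have : x - c τ = d + (c t - c τ) := by simp only [d]; ring
    rw [this]
    exact G1_cmp (by linarith [hτ.2]) (by linarith [hτ.1]) hL (hl τ hτ)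
  have hae : ∀ᵐ τ : ℝ, τ ∈ Ioc t1 t → |G1 (t - τ) (x - c τ)| ≤ B (t - τ) := by
    have : ∀ᵐ τ : ℝ, τ ≠ t := by
      rw [ae_iff]; simp
    filter_upwards [this] with τ h1 h2
    exact hle τ ⟨h2.1, lt_of_le_of_ne h2.2 h1⟩
  have hcon : ContinuousOn (fun τ => G1 (t - τ) (x - c τ)) (Ioo t1 t) := by
    intro τ hτ
    apply ContinuousAt.continuousWithinAt
    exact ContinuousAt.comp (g := fun q : ℝ × ℝ => G1 q.1 q.2) (f := fun τ : ℝ => (t - τ, x - c τ))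
        (continuousAt_G1 (Or.inl (by linarith [hτ.2] : t - τ > 0).ne')) (by fun_prop)
  have hii : IntervalIntegrable (fun τ => G1 (t - τ) (x - c τ)) volume t1 t := by
    refine hBi'.mono_fun' ?_ ?_
    · rw [uIoc_of_le h1.le, ← Measure.restrict_congr_set Ioo_ae_eq_Ioc]
      exact hcon.aestronglyMeasurable measurableSet_Ioo
    · rw [uIoc_of_le h1.le]
      exact (ae_restrict_iff' measurableSet_Ioc).2 hae
  refine ⟨hii, le_trans ?_ hBI⟩
  refine intervalIntegral.integral_mono_ae_restrict h1.le hii.abs hBi' ?_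
  rw [← Measure.restrict_congr_set Ioo_ae_eq_Icc]
  exact (ae_restrict_iff' measurableSet_Ioo).2 (Eventually.of_forall hle)

/-- admissible density -/
structure Dn (K : ℝ) (f : ℝ → ℝ) : Prop where
  cont : ContinuousOn f (Ioi 0)
  bd : ∀ τ ∈ Ioc (0:ℝ) 1, |f τ| ≤ K * (√τ)⁻¹

structure Crv (K : ℝ) (c b : ℝ → ℝ) : Prop where
  cont : Continuous c
  der : ∀ τ, 0 < τ → HasDerivAt c (b τ) τ
  dn : Dn K b

lemma Dn.cAt {K : ℝ} {f : ℝ → ℝ} (h : Dn K f) {τ : ℝ} (hτ : 0 < τ) : ContinuousAt f τ :=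
  h.cont.continuousAt (Ioi_mem_nhds hτ)

lemma Dn.ii {K : ℝ} {f : ℝ → ℝ} (h : Dn K f) {R : ℝ} (hR : 0 ≤ R) (hR1 : R ≤ 1) :
    IntervalIntegrable f volume 0 R := by
  refine ((inv_sqrt_ii 0 R).const_mul K).mono_fun' ?_ ?_
  · rw [uIoc_of_le hR]
    exact (h.cont.mono fun x hx => hx.1).aestronglyMeasurable measurableSet_Ioc
  · rw [uIoc_of_le hR]
    exact (ae_restrict_iff' measurableSet_Ioc).2 (Eventually.of_forall fun τ hτ =>
      h.bd τ ⟨hτ.1, hτ.2.trans hR1⟩)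

lemma Crv.lip {K : ℝ} {c b : ℝ → ℝ} (h : Crv K c b) {t0 : ℝ} (ht0 : 0 < t0) :
    ∃ L, 0 ≤ L ∧ ∀ t ∈ Icc (t0 / 2) (2 * t0), ∀ τ ∈ Icc (t0 / 2) (2 * t0),
      |c t - c τ| ≤ L * |t - τ| := by
  obtain ⟨L, hL⟩ := (isCompact_Icc (a := t0 / 2) (b := 2 * t0)).exists_bound_of_continuousOn
    (h.dn.cont.mono fun x hx => lt_of_lt_of_le (by linarith) hx.1)
  have hL0 : 0 ≤ L := le_trans (norm_nonneg _) (hL t0 ⟨by linarith, by linarith⟩)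
  refine ⟨L, hL0, fun t ht τ hτ => ?_⟩
  exact (convex_Icc (t0 / 2) (2 * t0)).norm_image_sub_le_of_norm_hasDerivWithin_le
    (fun x hx => (h.der x (lt_of_lt_of_le (by linarith) hx.1)).hasDerivWithinAt) hL hτ ht

lemma Crv.near {K : ℝ} {c b : ℝ → ℝ} (h : Crv K c b) {t0 : ℝ} (ht0 : 0 < t0) (ht1 : t0 < 1) :
    ∃ C, 0 ≤ C ∧ ∀ t ∈ Ioo (t0 / 2) (min 1 (2 * t0)), ∀ t1 ∈ Ico (t0 / 2) t, ∀ x,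
      IntervalIntegrable (fun τ => G1 (t - τ) (x - c τ)) volume t1 t ∧
      ∫ τ in t1..t, |G1 (t - τ) (x - c τ)| ≤ C := by
  obtain ⟨L, hL0, hL⟩ := h.lip ht0
  refine ⟨_, by positivity, fun t ht t1 ht1 x => near_bound h.cont ht1.2 ?_ hL0 ?_ x⟩
  · have := ht.2.trans_le (min_le_left _ _); linarith [ht1.1]
  · intro τ hτ
    have h2 := ht.2.trans_le (min_le_right _ _)
    have := hL t ⟨ht.1.le, h2.le⟩ τ ⟨ht1.1.trans hτ.1.le, (hτ.2.trans h2).le⟩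
    rwa [abs_of_pos (by linarith [hτ.2] : 0 < t - τ)] at this

lemma contOn_G1_curve {c : ℝ → ℝ} (hc : Continuous c) {k : ℝ → ℝ → ℝ} {t x : ℝ}
    (hk : ∀ r z, r ≠ 0 ∨ z ≠ 0 → ContinuousAt (fun q : ℝ × ℝ => k q.1 q.2) (r, z)) :
    ContinuousOn (fun τ => k (t - τ) (x - c τ)) (Iio t) := by
  intro τ hτ
  apply ContinuousAt.continuousWithinAt
  exact ContinuousAt.comp (g := fun q : ℝ × ℝ => k q.1 q.2) (f := fun τ : ℝ => (t - τ, x - c τ))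
        (hk _ _ (Or.inl (sub_pos.2 hτ).ne')) (by fun_prop)

lemma G1f_ii {K K' : ℝ} {c b f : ℝ → ℝ} (h : Crv K c b) (hf : Dn K' f) {t : ℝ} (ht0 : 0 < t)
    (ht1 : t < 1) (x : ℝ) :
    IntervalIntegrable (fun τ => G1 (t - τ) (x - c τ) * f τ) volume 0 t := by
  obtain ⟨C, hC0, hC⟩ := h.near ht0 ht1
  have h2 := (hC t ⟨by linarith, lt_min ht1 (by linarith)⟩ (t / 2) ⟨le_rfl, by linarith⟩ x).1
  have a1 : IntervalIntegrable (fun τ => G1 (t - τ) (x - c τ) * f τ) volume (t / 2) t := by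
    apply h2.mul_continuousOn
    apply hf.cont.mono
    rw [uIcc_of_le (by linarith)]
    exact fun y hy => lt_of_lt_of_le (by linarith) hy.1
  have a2 : IntervalIntegrable (fun τ => G1 (t - τ) (x - c τ) * f τ) volume 0 (t / 2) := by
    apply (hf.ii (by linarith) (by linarith)).continuousOn_mul
    rw [uIcc_of_le (by linarith)]
    exact (contOn_G1_curve h.cont fun r z => continuousAt_G1).mono fun y hy =>
      show y < t by linarith [hy.2]
  exact a2.trans a1

lemma Gkb_bound {K : ℝ} {c b : ℝ → ℝ} (hb : Dn K b) {t : ℝ} (ht1 : t ≤ 1)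
    {x : ℝ} : ∀ τ ∈ Ioo 0 t, |Gk (t - τ) (x - c τ) * b τ| ≤ K * bt t τ := by
  intro τ hτ
  rw [abs_mul, abs_of_nonneg (Gk_nonneg _ _), mul_comm]
  calc _ ≤ (K * (√τ)⁻¹) * (√(t - τ))⁻¹ := by
        apply mul_le_mul (hb.bd τ ⟨hτ.1, hτ.2.le.trans ht1⟩) (Gk_le _ _) (Gk_nonneg _ _)
        exact le_trans (abs_nonneg _) (hb.bd τ ⟨hτ.1, hτ.2.le.trans ht1⟩)
    _ = _ := by unfold bt; ring

lemma Gkb_cont {K : ℝ} {c b : ℝ → ℝ} (hc : Continuous c) (hb : Dn K b) {t x : ℝ} :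
    ContinuousOn (fun τ => Gk (t - τ) (x - c τ) * b τ) (Ioo 0 t) := by
  exact ((contOn_G1_curve hc fun r z => continuousAt_Gk).mono fun y hy => hy.2).mul
    (hb.cont.mono fun y hy => hy.1)

lemma Gkb_vol {K : ℝ} {c b : ℝ → ℝ} (hc : Continuous c) (hb : Dn K b) {t0 x0 : ℝ} (h0 : 0 < t0)
    (h1 : t0 < 1) :
    ContinuousAt (fun q : ℝ × ℝ => ∫ τ in (0:ℝ)..q.1, Gk (q.1 - τ) (q.2 - c τ) * b τ) (t0, x0) := by
  have hlt : ∀ᶠ q : ℝ × ℝ in 𝓝 (t0, x0), q.1 < 1 := continuousAt_fst.eventually_lt_const h1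
  refine vol_cont (t := fun q : ℝ × ℝ => q.1) continuousAt_fst h0 (C := K)
    (Eventually.of_forall fun q => Gkb_cont hc hb)
    (hlt.mono fun q hq => Gkb_bound hb hq.le) ?_
  intro θ hθ
  have hp : 0 < t0 * θ := mul_pos h0 hθ.1
  refine ContinuousAt.mul ?_ ?_
  · refine ContinuousAt.comp (g := fun q : ℝ × ℝ => Gk q.1 q.2) 
      (f := fun q : ℝ × ℝ => (q.1 - q.1 * θ, q.2 - c (q.1 * θ))) (continuousAt_Gk (Or.inl ?_)) (by fun_prop)
    have := hθ.2
    have : 0 < t0 - t0 * θ := by nlinarith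
    exact this.ne'
  · exact ContinuousAt.comp (g := b) (f := fun q : ℝ × ℝ => q.1 * θ) (hb.cAt hp) (by fun_prop)

end

section


lemma hasDerivAt_Ek_curve {c b : ℝ → ℝ} {t x τ : ℝ} (hτ : τ < t) (hc : HasDerivAt c (b τ) τ) :
    HasDerivAt (fun τ => Ek (t - τ) (x - c τ))
      (-(G1 (t - τ) (x - c τ)) - Gk (t - τ) (x - c τ) * b τ) τ := by
  have hr : 0 < t - τ := by linarith
  have e : (fun τ => Ek (t - τ) (x - c τ)) =ᶠ[𝓝 τ] fun τ => Psi ((x - c τ) / (2 * √(t - τ))) := by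
    filter_upwards [Iio_mem_nhds hτ] with q hq using Ek_pos (sub_pos.2 hq) _
  refine HasDerivAt.congr_of_eventuallyEq ?_ e
  have hs : √(t - τ) ≠ 0 := (Real.sqrt_pos.2 hr).ne'
  have h1 : HasDerivAt (fun τ => x - c τ) (-(b τ)) τ := by simpa using hc.const_sub x
  have h0 : HasDerivAt (fun τ : ℝ => t - τ) (-1) τ := by simpa using (hasDerivAt_id τ).const_sub t
  have h2 : HasDerivAt (fun τ => 2 * √(t - τ)) (2 * (-1 / (2 * √(t - τ)))) τ :=
    (h0.sqrt hr.ne').const_mul 2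
  have h3 := (hasDerivAt_Psi ((x - c τ) / (2 * √(t - τ)))).comp τ (h1.div h2 (by positivity))
  refine h3.congr_deriv ?_
  unfold G1 Gk
  have hsq : √(t - τ) ^ 2 = t - τ := Real.sq_sqrt hr.le
  have e1 : ((x - c τ) / (2 * √(t - τ))) ^ 2 = (x - c τ) ^ 2 / (4 * (t - τ)) := by
    rw [div_pow, mul_pow, hsq]; norm_num
  have e2 : √(4 * π * (t - τ)) = 2 * √π * √(t - τ) := by
    rw [Real.sqrt_mul (by positivity), Real.sqrt_mul (by norm_num)]
    have : √4 = (2:ℝ) := by rw [show (4:ℝ) = 2 ^ 2 by norm_num]; exact Real.sqrt_sq (by norm_num)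
    rw [this]
  rw [e1, e2]
  have hp : √π ≠ 0 := (Real.sqrt_pos.2 Real.pi_pos).ne'
  generalize Real.exp (-((x - c τ) ^ 2 / (4 * (t - τ)))) = X
  generalize √(t - τ) = w at *
  rw [← hsq]
  field_simp
  ring_nf

lemma Ek_curve_contOn {K : ℝ} {c b : ℝ → ℝ} (h : Crv K c b) {t x : ℝ} (ht : 0 < t) :
    ContinuousOn (fun τ => Ek (t - τ) (x - c τ)) (Icc 0 t) := by
  intro τ hτ
  have hcc := h.cont
  rcases eq_or_lt_of_le hτ.2 with e | e
  · subst e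
    by_cases hx : x = c τ
    · subst hx
      obtain ⟨L, hL0, hL⟩ := h.lip ht
      rw [ContinuousWithinAt, sub_self, sub_self, Ek_zero, Hv_zero]
      have hev : ∀ᶠ σ in 𝓝[Icc 0 τ] τ, |Ek (τ - σ) (c τ - c σ) - 1 / 2| ≤ L * √(τ - σ) := by
        filter_upwards [self_mem_nhdsWithin, mem_nhdsWithin_of_mem_nhds (Ioi_mem_nhds (by linarith : τ / 2 < τ))]
          with σ h1 h2
        have h2' : τ / 2 < σ := h2
        rcases eq_or_lt_of_le h1.2 with e | e
        · subst e; simp [Ek_zero, Hv_zero]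
        · have hr : 0 < τ - σ := by linarith
          rw [Ek_pos hr]
          have hl := hL τ ⟨by linarith, by linarith⟩ σ ⟨h2'.le, by linarith⟩
          rw [abs_of_pos hr] at hl
          have hm : |Psi ((c τ - c σ) / (2 * √(τ - σ))) - Psi 0| ≤ 1 * |(c τ - c σ) / (2 * √(τ - σ)) - 0| := by
            refine convex_univ.norm_image_sub_le_of_norm_hasDerivWithin_le (f := Psi)
              (f' := fun y => (√π)⁻¹ * Real.exp (-y ^ 2))
              (fun y _ => (hasDerivAt_Psi y).hasDerivWithinAt) (fun y _ => ?_) (mem_univ _) (mem_univ _)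
            rw [Real.norm_eq_abs, abs_of_nonneg (by positivity)]
            have a1 : (√π)⁻¹ ≤ 1 := inv_le_one_of_one_le₀ (Real.one_le_sqrt.2 (by linarith [Real.pi_gt_three]))
            have a2 : Real.exp (-y ^ 2) ≤ 1 := Real.exp_le_one_iff.2 (by nlinarith [sq_nonneg y])
            exact mul_le_one₀ a1 (Real.exp_pos _).le a2
          rw [Psi_zero, one_mul, sub_zero, abs_div, abs_of_pos (by positivity : 0 < 2 * √(τ - σ))] at hm
          refine hm.trans ?_
          rw [div_le_iff₀ (by positivity)]
          have : √(τ - σ) * √(τ - σ) = τ - σ := Real.mul_self_sqrt hr.le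
          nlinarith [mul_nonneg hL0 hr.le]
      rw [tendsto_iff_norm_sub_tendsto_zero]
      refine squeeze_zero' (Eventually.of_forall fun _ => norm_nonneg _) hev ?_
      have : Continuous fun σ => L * √(τ - σ) := by fun_prop
      have := this.tendsto τ
      simp only [sub_self, Real.sqrt_zero, mul_zero] at this
      exact this.mono_left nhdsWithin_le_nhds
    · apply ContinuousAt.continuousWithinAt
      exact ContinuousAt.comp (g := fun q : ℝ × ℝ => Ek q.1 q.2) (f := fun σ : ℝ => (τ - σ, x - c σ))
        (continuousAt_Ek (Or.inr ⟨sub_self _, sub_ne_zero.2 hx⟩)) (by fun_prop)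
  · apply ContinuousAt.continuousWithinAt
    exact ContinuousAt.comp (g := fun q : ℝ × ℝ => Ek q.1 q.2) (f := fun σ : ℝ => (t - σ, x - c σ))
        (continuousAt_Ek (Or.inl (sub_pos.2 e))) (by fun_prop)

lemma Dn_one : Dn 1 fun _ => 1 := ⟨continuousOn_const, fun τ hτ => by
  rw [abs_one, one_mul, one_le_inv₀ (Real.sqrt_pos.2 hτ.1)]
  exact Real.sqrt_le_one.2 hτ.2⟩

lemma jump_identity {K : ℝ} {c b : ℝ → ℝ} (h : Crv K c b) {t : ℝ} (ht : 0 < t) (ht1 : t < 1) (x : ℝ) :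
    ∫ τ in (0:ℝ)..t, G1 (t - τ) (x - c τ) =
      -(∫ τ in (0:ℝ)..t, Gk (t - τ) (x - c τ) * b τ) + Ek t (x - c 0) - Hv (x - c t) := by
  have i1 : IntervalIntegrable (fun τ => G1 (t - τ) (x - c τ)) volume 0 t := by
    simpa using G1f_ii h Dn_one ht ht1 x
  have i2 : IntervalIntegrable (fun τ => Gk (t - τ) (x - c τ) * b τ) volume 0 t :=
    vol_ii ht (Gkb_cont h.cont h.dn) (Gkb_bound h.dn ht1.le)
  have i1n : IntervalIntegrable (fun τ => -G1 (t - τ) (x - c τ)) volume 0 t := i1.neg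
  have := intervalIntegral.integral_eq_sub_of_hasDerivAt_of_le ht.le (Ek_curve_contOn h (x := x) ht)
    (fun τ hτ => hasDerivAt_Ek_curve (x := x) hτ.2 (h.der τ hτ.1)) (i1n.sub i2)
  rw [intervalIntegral.integral_sub i1n i2, intervalIntegral.integral_neg, sub_self, Ek_zero,
    sub_zero] at this
  linarith

/-- regularised layer potential -/
def Jv (c f : ℝ → ℝ) (t x : ℝ) : ℝ := ∫ τ in (0:ℝ)..t, G1 (t - τ) (x - c τ) * f τ
def Jreg (c f : ℝ → ℝ) (t x : ℝ) : ℝ := Jv c f t x + f t * Hv (x - c t)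

lemma Jreg_eq {K K' : ℝ} {c b f : ℝ → ℝ} (h : Crv K c b) (hf : Dn K' f) {t : ℝ} (ht : 0 < t)
    (ht1 : t < 1) (x : ℝ) : Jreg c f t x =
      (∫ τ in (0:ℝ)..t, G1 (t - τ) (x - c τ) * (f τ - f t)) +
      f t * (-(∫ τ in (0:ℝ)..t, Gk (t - τ) (x - c τ) * b τ) + Ek t (x - c 0)) := by
  have i1 : IntervalIntegrable (fun τ => G1 (t - τ) (x - c τ)) volume 0 t := by
    simpa using G1f_ii h Dn_one ht ht1 x
  have i2 := G1f_ii h hf ht ht1 x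
  have e : (fun τ => G1 (t - τ) (x - c τ) * (f τ - f t)) = fun τ => G1 (t - τ) (x - c τ) * f τ -
    G1 (t - τ) (x - c τ) * f t := by ext; ring
  rw [e, intervalIntegral.integral_sub i2 (i1.mul_const _), intervalIntegral.integral_mul_const,
    jump_identity h ht ht1, Jreg, Jv]
  ring

lemma Q_cont {K K' : ℝ} {c b f : ℝ → ℝ} (h : Crv K c b) (hf : Dn K' f) {t0 : ℝ} (ht0 : 0 < t0)
    (ht1 : t0 < 1) (x0 : ℝ) :
    ContinuousAt (fun q : ℝ × ℝ => ∫ τ in (0:ℝ)..q.1, G1 (q.1 - τ) (q.2 - c τ) * (f τ - f q.1))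
      (t0, x0) := by
  obtain ⟨C, hC0, hC⟩ := h.near ht0 ht1
  apply continuousAt_of_locally_uniform_approx_of_continuousAt
  intro u hu
  obtain ⟨ε, hε, hεu⟩ := Metric.mem_uniformity_dist.1 hu
  -- oscillation
  obtain ⟨η, hη, hosc⟩ := Metric.continuousAt_iff.1 (hf.cAt ht0) (ε / (4 * (C + 1))) (by positivity)
  obtain ⟨δ, hδ0, hδ1, hδ2, hδ3⟩ : ∃ δ, 0 < δ ∧ δ < η ∧ δ ≤ t0 / 2 ∧ t0 + δ ≤ 1 := by
    refine ⟨min (η / 2) (min (t0 / 2) (1 - t0)), ?_, ?_, ?_, ?_⟩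
    · exact lt_min (by linarith) (lt_min (by linarith) (by linarith))
    · exact lt_of_le_of_lt (min_le_left _ _) (by linarith)
    · exact (min_le_right _ _).trans (min_le_left _ _)
    · have := (min_le_right (η / 2) _).trans (min_le_right (t0 / 2) (1 - t0)); linarith
  set t1 := t0 - δ with ht1d
  have hwf : IntervalIntegrable f volume 0 t1 := hf.ii (by linarith) (by linarith)
  have hw1 : IntervalIntegrable (fun _ => (1:ℝ)) volume 0 t1 := by simp
  have hV : ∀ w : ℝ → ℝ, IntervalIntegrable w volume 0 t1 →
      ContinuousAt (fun q : ℝ × ℝ => Vp G1 t1 (fun τ => τ) c w q.1 q.2) (t0, x0) := by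
    intro w hw
    refine Vp_cont (by linarith) continuous_id h.cont hw (O := {z | 0 < z.1})
      (isOpen_lt continuous_const continuous_fst)
      (fun z hz => continuousAt_G1 (Or.inl (ne_of_gt hz))) ?_
    intro a ha
    show 0 < t0 - a
    linarith [ha.2]
  have hft : ContinuousAt (fun q : ℝ × ℝ => f q.1) (t0, x0) :=
    ContinuousAt.comp (g := f) (f := fun q : ℝ × ℝ => q.1) (hf.cAt ht0) continuousAt_fst
  refine ⟨{q | q.1 ∈ Ioo t1 (t0 + δ)}, ?_, fun q => Vp G1 t1 (fun τ => τ) c f q.1 q.2 -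
    f q.1 * Vp G1 t1 (fun τ => τ) c (fun _ => 1) q.1 q.2, (hV f hwf).sub (hft.mul (hV _ hw1)), ?_⟩
  · exact continuousAt_fst.preimage_mem_nhds (Ioo_mem_nhds (by simp only; linarith) (by simp only; linarith))
  rintro ⟨t, x⟩ ⟨hq1, hq2⟩
  simp only at hq1 hq2
  apply hεu
  simp only
  have htp : 0 < t := by linarith
  have htl : t < 1 := by linarith
  have i1 : IntervalIntegrable (fun τ => G1 (t - τ) (x - c τ)) volume 0 t := by
    simpa using G1f_ii h Dn_one htp htl x
  have i2 := G1f_ii h hf htp htl x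
  have e : ∀ τ, G1 (t - τ) (x - c τ) * (f τ - f t) = G1 (t - τ) (x - c τ) * f τ -
    G1 (t - τ) (x - c τ) * f t := by intro; ring
  have i3 : IntervalIntegrable (fun τ => G1 (t - τ) (x - c τ) * (f τ - f t)) volume 0 t := by
    simp_rw [e]; exact i2.sub (i1.mul_const _)
  have hs1 : uIcc 0 t1 ⊆ uIcc 0 t := by
    rw [uIcc_of_le (by linarith), uIcc_of_le (by linarith)]; exact Icc_subset_Icc_right hq1.le
  have hs2 : uIcc t1 t ⊆ uIcc 0 t := by
    rw [uIcc_of_le (by linarith), uIcc_of_le (by linarith)]; exact Icc_subset_Icc_left (by linarith)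
  have e2 : Vp G1 t1 (fun τ => τ) c f t x - f t * Vp G1 t1 (fun τ => τ) c (fun _ => 1) t x =
      ∫ τ in (0:ℝ)..t1, G1 (t - τ) (x - c τ) * (f τ - f t) := by
    simp_rw [e]
    rw [intervalIntegral.integral_sub (i2.mono_set hs1) ((i1.mul_const _).mono_set hs1),
      intervalIntegral.integral_mul_const]
    simp only [Vp, mul_one]; ring
  rw [e2, ← intervalIntegral.integral_add_adjacent_intervals (i3.mono_set hs1) (i3.mono_set hs2),
    Real.dist_eq, add_sub_cancel_left]
  obtain ⟨n1, n2⟩ := hC t ⟨by linarith, lt_min htl (by linarith)⟩ t1 ⟨by linarith, hq1⟩ x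
  have hb : |∫ τ in t1..t, G1 (t - τ) (x - c τ) * (f τ - f t)| ≤
      ∫ τ in t1..t, |G1 (t - τ) (x - c τ)| * (ε / (2 * (C + 1))) := by
    refine intervalIntegral.norm_integral_le_of_norm_le (μ := volume) (f := fun τ => G1 (t - τ) (x - c τ) * (f τ - f t))
      (g := fun τ => |G1 (t - τ) (x - c τ)| * (ε / (2 * (C + 1)))) hq1.le (Eventually.of_forall fun τ hτ => ?_)
      (n1.abs.mul_const _)
    rw [Real.norm_eq_abs, abs_mul]
    apply mul_le_mul_of_nonneg_left _ (abs_nonneg _)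
    have o1 := hosc (x := τ) (by rw [Real.dist_eq, abs_lt]; constructor <;> linarith [hτ.1, hτ.2])
    have o2 := hosc (x := t) (by rw [Real.dist_eq, abs_lt]; constructor <;> linarith)
    have o3 := dist_triangle_right (f τ) (f t) (f t0)
    rw [Real.dist_eq] at o3
    have : ε / (2 * (C + 1)) = ε / (4 * (C + 1)) + ε / (4 * (C + 1)) := by field_simp; norm_num
    linarith
  rw [intervalIntegral.integral_mul_const] at hb
  have hb2 : (∫ τ in t1..t, |G1 (t - τ) (x - c τ)|) * (ε / (2 * (C + 1))) ≤ C * (ε / (2 * (C + 1))) :=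
    mul_le_mul_of_nonneg_right n2 (by positivity)
  have hb3 : C * (ε / (2 * (C + 1))) < ε := by
    rw [← mul_div_assoc, div_lt_iff₀ (by positivity)]; nlinarith
  linarith

lemma Jreg_cont {K K' : ℝ} {c b f : ℝ → ℝ} (h : Crv K c b) (hf : Dn K' f) {t0 : ℝ} (ht0 : 0 < t0)
    (ht1 : t0 < 1) (x0 : ℝ) :
    ContinuousAt (fun q : ℝ × ℝ => Jreg c f q.1 q.2) (t0, x0) := by
  have e : (fun q : ℝ × ℝ => Jreg c f q.1 q.2) =ᶠ[𝓝 (t0, x0)] fun q =>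
      (∫ τ in (0:ℝ)..q.1, G1 (q.1 - τ) (q.2 - c τ) * (f τ - f q.1)) +
      f q.1 * (-(∫ τ in (0:ℝ)..q.1, Gk (q.1 - τ) (q.2 - c τ) * b τ) + Ek q.1 (q.2 - c 0)) := by
    have hlt : ∀ᶠ q : ℝ × ℝ in 𝓝 (t0, x0), q.1 < 1 := continuousAt_fst.eventually_lt_const ht1
    have hgt : ∀ᶠ q : ℝ × ℝ in 𝓝 (t0, x0), 0 < q.1 := continuousAt_fst.eventually_const_lt ht0
    filter_upwards [hlt, hgt] with q h1 h2
    exact Jreg_eq h hf h2 h1 q.2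
  refine ContinuousAt.congr ?_ e.symm
  have hft : ContinuousAt (fun q : ℝ × ℝ => f q.1) (t0, x0) :=
    ContinuousAt.comp (g := f) (f := fun q : ℝ × ℝ => q.1) (hf.cAt ht0) continuousAt_fst
  refine (Q_cont h hf ht0 ht1 x0).add (hft.mul ((Gkb_vol h.cont h.dn ht0 ht1).neg.add ?_))
  exact ContinuousAt.comp (g := fun q : ℝ × ℝ => Ek q.1 q.2) (f := fun q : ℝ × ℝ => (q.1, q.2 - c 0))
    (continuousAt_Ek_pos ht0) (by fun_prop)

end

section


lemma second_test {f : ℝ → ℝ} {x D : ℝ} (hmin : IsLocalMin f x) (hd : ∀ᶠ y in 𝓝 x, DifferentiableAt ℝ f y)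
    (h2 : HasDerivAt (deriv f) D x) : 0 ≤ D := by
  by_contra hneg
  push Not at hneg
  have hmax : IsLocalMax f x := by
    apply isLocalMax_of_deriv_deriv_neg
    · rw [h2.deriv]; exact hneg
    · exact hmin.deriv_eq_zero
    · exact hd.self_of_nhds.continuousAt
  have he : f =ᶠ[𝓝 x] fun _ => f x := by
    filter_upwards [hmin, hmax] with y h1 h2
    exact le_antisymm h2 h1
  have : deriv (deriv f) x = 0 := by
    rw [he.deriv.deriv_eq]; simp
  rw [h2.deriv] at this
  linarith

lemma left_deriv_nonpos {f : ℝ → ℝ} {x D : ℝ} (h : HasDerivAt f D x) (hm : ∀ᶠ y in 𝓝[<] x, f x ≤ f y) :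
    D ≤ 0 := by
  have h1 := h.hasDerivWithinAt (s := Iio x)
  rw [hasDerivWithinAt_iff_tendsto_slope' (by simp)] at h1
  refine le_of_tendsto h1 ?_
  filter_upwards [hm, self_mem_nhdsWithin] with y h2 h3
  rw [slope_def_field]
  exact div_nonpos_of_nonneg_of_nonpos (by linarith) (by have : y < x := h3; linarith)

lemma right_deriv_nonneg {f : ℝ → ℝ} {x D : ℝ} (h : HasDerivWithinAt f D (Ici x) x)
    (hm : ∀ᶠ y in 𝓝[>] x, f x ≤ f y) : 0 ≤ D := by
  have h1 := h.mono (Ioi_subset_Ici_self)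
  rw [hasDerivWithinAt_iff_tendsto_slope' (by simp)] at h1
  refine ge_of_tendsto h1 ?_
  filter_upwards [hm, self_mem_nhdsWithin] with y h2 h3
  rw [slope_def_field]
  exact div_nonneg (by linarith) (by have : x < y := h3; linarith)

lemma maxprin {T ε ρ : ℝ} {c d : ℝ → ℝ} {v D : ℝ → ℝ → ℝ} (hε : 0 < ε)
    (hc : Continuous c) (hd : Continuous d) (hcρ : ∀ t ∈ Icc 0 T, c t < ρ)
    (hv : ContinuousOn (fun q : ℝ × ℝ => v q.1 q.2) {q | q.1 ∈ Icc 0 T ∧ q.2 ∈ Icc (c q.1) (d q.1)})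
    (hx : ∀ t ∈ Ioc 0 T, ∀ x ∈ Ioo (c t) (d t), DifferentiableAt ℝ (v t) x)
    (hxx : ∀ t ∈ Ioc 0 T, ∀ x ∈ Ioo (c t) (d t), HasDerivAt (deriv (v t)) (D t x) x)
    (ht : ∀ t ∈ Ioc 0 T, ∀ x ∈ Ioo (c t) (d t), HasDerivAt (fun t => v t x) (D t x) t)
    (hb : ∀ t ∈ Ioc 0 T, c t < d t → ∃ m ≤ 0, HasDerivWithinAt (v t) m (Ici (c t)) (c t))
    (h0 : ∀ x ∈ Icc (c 0) (d 0), 0 ≤ v 0 x)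
    (h1 : ∀ t ∈ Ioc 0 T, -(ε * ((d t - ρ) ^ 2 + 3 * t)) ≤ v t (d t)) :
    ∀ t ∈ Icc 0 T, ∀ x ∈ Icc (c t) (d t), -(ε * ((x - ρ) ^ 2 + 3 * t)) ≤ v t x := by
  set Ω : Set (ℝ × ℝ) := {q | q.1 ∈ Icc 0 T ∧ q.2 ∈ Icc (c q.1) (d q.1)} with hΩ
  set w : ℝ × ℝ → ℝ := fun q => v q.1 q.2 + ε * ((q.2 - ρ) ^ 2 + 3 * q.1) with hw
  intro t htI x hxI
  by_contra hneg
  push Not at hneg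
  have hcomp : IsCompact Ω := by
    obtain ⟨A, hA⟩ := isCompact_Icc.exists_bound_of_continuousOn (hc.continuousOn (s := Icc 0 T))
    obtain ⟨B, hB⟩ := isCompact_Icc.exists_bound_of_continuousOn (hd.continuousOn (s := Icc 0 T))
    refine ((isCompact_Icc (a := 0) (b := T)).prod (isCompact_Icc (a := -A) (b := B))).of_isClosed_subset ?_ ?_
    · have e : Ω = {q : ℝ × ℝ | 0 ≤ q.1} ∩ {q | q.1 ≤ T} ∩ {q | c q.1 ≤ q.2} ∩ {q | q.2 ≤ d q.1} := by
        ext q; simp only [hΩ, mem_setOf_eq, mem_inter_iff, mem_Icc]; tauto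
      rw [e]
      exact (((isClosed_le continuous_const continuous_fst).inter
        (isClosed_le continuous_fst continuous_const)).inter
        (isClosed_le (by fun_prop) continuous_snd)).inter (isClosed_le continuous_snd (by fun_prop))
    · rintro q ⟨q1, q2⟩
      have a := hA _ q1
      have b := hB _ q1
      rw [Real.norm_eq_abs] at a b
      exact ⟨q1, by linarith [q2.1, neg_abs_le (c q.1)], by linarith [q2.2, le_abs_self (d q.1)]⟩
  have hwc : ContinuousOn w Ω := hv.add (by fun_prop)
  obtain ⟨⟨t', x'⟩, ⟨hm1, hm2⟩, hmin⟩ := hcomp.exists_isMinOn ⟨(t, x), htI, hxI⟩ hwc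
  have hwneg : w (t', x') < 0 := by
    have : w (t', x') ≤ w (t, x) := hmin (show (t, x) ∈ Ω from ⟨htI, hxI⟩)
    have h2 : w (t, x) < 0 := by simp only [hw]; linarith
    linarith
  have hmin' : ∀ a b, a ∈ Icc 0 T → b ∈ Icc (c a) (d a) → w (t', x') ≤ w (a, b) := fun a b h1 h2 =>
    hmin (show (a, b) ∈ Ω from ⟨h1, h2⟩)
  simp only at hm1 hm2
  have ht'0 : 0 < t' := by
    rcases eq_or_lt_of_le hm1.1 with e | e
    · subst e
      have := h0 x' hm2
      simp only [hw] at hwneg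
      nlinarith [sq_nonneg (x' - ρ), mul_nonneg hε.le (sq_nonneg (x' - ρ))]
    · exact e
  have htI' : t' ∈ Ioc 0 T := ⟨ht'0, hm1.2⟩
  have hxd : x' < d t' := by
    rcases eq_or_lt_of_le hm2.2 with e | e
    · subst e
      have := h1 t' htI'
      simp only [hw] at hwneg
      linarith
    · exact e
  rcases eq_or_lt_of_le hm2.1 with e | e
  · -- left boundary
    subst e
    obtain ⟨m, hm, hder⟩ := hb t' htI' hxd
    have hbar : HasDerivAt (fun x => ε * ((x - ρ) ^ 2 + 3 * t')) (ε * (2 * (c t' - ρ))) (c t') := by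
      have := ((((hasDerivAt_id (c t')).sub_const ρ).pow 2).add_const (3 * t')).const_mul ε
      refine this.congr_deriv ?_
      simp
    have hD := hder.add hbar.hasDerivWithinAt
    have := right_deriv_nonneg hD (by
      filter_upwards [Ioo_mem_nhdsGT hxd] with y hy
      exact hmin' t' y hm1 ⟨hy.1.le, hy.2.le⟩)
    have := hcρ t' hm1
    nlinarith
  · have hxI' : x' ∈ Ioo (c t') (d t') := ⟨e, hxd⟩
    have hnx : Ioo (c t') (d t') ∈ 𝓝 x' := Ioo_mem_nhds e hxd
    have hDt : HasDerivAt (fun t => w (t, x')) (D t' x' + ε * 3) t' := by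
      have hbar : HasDerivAt (fun t => ε * ((x' - ρ) ^ 2 + 3 * t)) (ε * 3) t' := by
        have := (((hasDerivAt_id t').const_mul 3).const_add ((x' - ρ) ^ 2)).const_mul ε
        refine this.congr_deriv ?_
        simp
      exact (ht t' htI' x' hxI').add hbar
    have s1 : D t' x' + ε * 3 ≤ 0 := by
      apply left_deriv_nonpos hDt
      have e1 : ∀ᶠ y in 𝓝[<] t', c y < x' :=
        nhdsWithin_le_nhds (hc.continuousAt.eventually_lt_const e)
      have e2 : ∀ᶠ y in 𝓝[<] t', x' < d y :=
        nhdsWithin_le_nhds (hd.continuousAt.eventually_const_lt hxd)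
      filter_upwards [e1, e2, Ioo_mem_nhdsLT ht'0] with y y1 y2 y3
      exact hmin' y x' ⟨y3.1.le, y3.2.le.trans hm1.2⟩ ⟨y1.le, y2.le⟩
    have hb1 : ∀ y, HasDerivAt (fun x => ε * ((x - ρ) ^ 2 + 3 * t')) (ε * (2 * (y - ρ))) y := by
      intro y
      have := ((((hasDerivAt_id y).sub_const ρ).pow 2).add_const (3 * t')).const_mul ε
      refine this.congr_deriv ?_
      simp
    have hdd : ∀ y ∈ Ioo (c t') (d t'), HasDerivAt (fun x => w (t', x))
        (deriv (v t') y + ε * (2 * (y - ρ))) y := fun y hy => (hx t' htI' y hy).hasDerivAt.add (hb1 y)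
    have hde : deriv (fun x => w (t', x)) =ᶠ[𝓝 x'] fun y => deriv (v t') y + ε * (2 * (y - ρ)) := by
      filter_upwards [hnx] with y hy using (hdd y hy).deriv
    have s2 : 0 ≤ D t' x' + ε * 2 := by
      refine second_test (f := fun x => w (t', x)) (x := x') ?_ ?_ ?_
      · filter_upwards [hnx] with y hy
        exact hmin' t' y hm1 ⟨hy.1.le, hy.2.le⟩
      · filter_upwards [hnx] with y hy using (hdd y hy).differentiableAt
      · refine HasDerivAt.congr_of_eventuallyEq ?_ hde
        have : HasDerivAt (fun y => ε * (2 * (y - ρ))) (ε * 2) x' := by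
          have := ((((hasDerivAt_id x').sub_const ρ).const_mul 2)).const_mul ε
          refine this.congr_deriv ?_
          simp
        exact (hxx t' htI' x' hxI').add this
    linarith

end

section
open scoped BoundedContinuousFunction


structure Adm (K H : ℝ) (g h : ℝ → ℝ) : Prop where
  gc : ContinuousOn g (Ioi 0)
  hc : ContinuousOn h (Ioi 0)
  gb : ∀ t, 0 < t → |g t| ≤ K
  hb : ∀ t, 0 < t → |h t| ≤ H

lemma fixed_pt {K H R : ℝ} (hK : 0 ≤ K) (hH : 0 ≤ H) (hR : 0 < R)
    (P1 P2 : (ℝ → ℝ) → (ℝ → ℝ) → ℝ → ℝ)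
    (hc : ∀ g h, Adm K H g h → ContinuousOn (P1 g h) (Ioc 0 R) ∧ ContinuousOn (P2 g h) (Ioc 0 R))
    (hb : ∀ g h, Adm K H g h → ∀ t ∈ Ioc 0 R, |P1 g h t| ≤ K ∧ |P2 g h t| ≤ H)
    (hl : ∀ g h g' h' D, Adm K H g h → Adm K H g' h' → 
      (∀ t, 0 < t → |g t - g' t| ≤ D ∧ |h t - h' t| ≤ D) →
      ∀ t ∈ Ioc 0 R, |P1 g h t - P1 g' h' t| ≤ D / 2 ∧ |P2 g h t - P2 g' h' t| ≤ D / 2) :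
    ∃ g h, Adm K H g h ∧ ∀ t ∈ Ioc 0 R, g t = P1 g h t ∧ h t = P2 g h t := by
  set S : Set ((ℝ →ᵇ ℝ) × (ℝ →ᵇ ℝ)) := {p | ∀ y, |p.1 y| ≤ K ∧ |p.2 y| ≤ H} with hS
  have hScl : IsClosed S := by
    have : S = ⋂ y, ({p | |p.1 y| ≤ K} ∩ {p | |p.2 y| ≤ H}) := by
      ext p; simp [hS]
    rw [this]
    refine isClosed_iInter fun y => ?_
    have c1 : Continuous fun p : (ℝ →ᵇ ℝ) × (ℝ →ᵇ ℝ) => |p.1 y| :=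
      ((continuous_eval_const y).comp continuous_fst).abs
    have c2 : Continuous fun p : (ℝ →ᵇ ℝ) × (ℝ →ᵇ ℝ) => |p.2 y| :=
      ((continuous_eval_const y).comp continuous_snd).abs
    exact (isClosed_le c1 continuous_const).inter (isClosed_le c2 continuous_const)
  have : CompleteSpace S := hScl.completeSpace_coe
  have : Nonempty S := ⟨⟨0, fun y => by simp [hK, hH]⟩⟩
  have hadm : ∀ p : S, Adm K H (fun t => p.1.1 (Real.log t)) (fun t => p.1.2 (Real.log t)) := by
    intro p
    have hlog : ContinuousOn Real.log (Ioi 0) := Real.continuousOn_log.mono fun x hx => ne_of_gt hx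
    exact ⟨p.1.1.continuous.comp_continuousOn hlog, p.1.2.continuous.comp_continuousOn hlog,
      fun t _ => (p.2 _).1, fun t _ => (p.2 _).2⟩
  have hmem : ∀ y : ℝ, min (Real.exp y) R ∈ Ioc 0 R := fun y =>
    ⟨lt_min (Real.exp_pos _) hR, min_le_right _ _⟩
  have hcm : Continuous fun y : ℝ => min (Real.exp y) R := by fun_prop
  let Fm : S → S := fun p => ⟨(BoundedContinuousFunction.ofNormedAddCommGroup
      (fun y => P1 (fun t => p.1.1 (Real.log t)) (fun t => p.1.2 (Real.log t)) (min (Real.exp y) R))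
      (((hc _ _ (hadm p)).1).comp_continuous hcm hmem) K
      (fun y => (hb _ _ (hadm p) _ (hmem y)).1),
    BoundedContinuousFunction.ofNormedAddCommGroup
      (fun y => P2 (fun t => p.1.1 (Real.log t)) (fun t => p.1.2 (Real.log t)) (min (Real.exp y) R))
      (((hc _ _ (hadm p)).2).comp_continuous hcm hmem) H
      (fun y => (hb _ _ (hadm p) _ (hmem y)).2)), fun y => hb _ _ (hadm p) _ (hmem y)⟩
  have hcon : ContractingWith (1 / 2) Fm := by
    refine ⟨by rw [← NNReal.coe_lt_coe]; norm_num, LipschitzWith.of_dist_le_mul fun p q => ?_⟩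
    have hpq : ∀ t, 0 < t → |p.1.1 (Real.log t) - q.1.1 (Real.log t)| ≤ dist p q ∧
        |p.1.2 (Real.log t) - q.1.2 (Real.log t)| ≤ dist p q := by
      intro t _
      have h1 : dist p.1.1 q.1.1 ≤ dist p q := by
        rw [Subtype.dist_eq, Prod.dist_eq]; exact le_max_left _ _
      have h2 : dist p.1.2 q.1.2 ≤ dist p q := by
        rw [Subtype.dist_eq, Prod.dist_eq]; exact le_max_right _ _
      constructor
      · exact le_trans (BoundedContinuousFunction.dist_coe_le_dist (f := p.1.1) (g := q.1.1) (Real.log t)) h1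
      · exact le_trans (BoundedContinuousFunction.dist_coe_le_dist (f := p.1.2) (g := q.1.2) (Real.log t)) h2
    have key := hl _ _ _ _ _ (hadm p) (hadm q) hpq
    have e : ((1 / 2 : NNReal) : ℝ) * dist p q = dist p q / 2 := by push_cast; ring
    rw [e, Subtype.dist_eq, Prod.dist_eq]
    refine max_le ?_ ?_
    · rw [BoundedContinuousFunction.dist_le (by positivity)]
      intro y
      exact (key _ (hmem y)).1
    · rw [BoundedContinuousFunction.dist_le (by positivity)]
      intro y
      exact (key _ (hmem y)).2
  obtain ⟨p, hp⟩ : ∃ p, Fm p = p := ⟨_, hcon.fixedPoint_isFixedPt⟩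
  refine ⟨_, _, hadm p, fun t ht => ?_⟩
  have hmin : min (Real.exp (Real.log t)) R = t := by
    rw [Real.exp_log ht.1]; exact min_eq_left ht.2
  constructor
  · have h1 : (Fm p).1.1 (Real.log t) = p.1.1 (Real.log t) := by rw [hp]
    rw [← h1]
    show P1 _ _ (min (Real.exp (Real.log t)) R) = _
    rw [hmin]
  · have h1 : (Fm p).1.2 (Real.log t) = p.1.2 (Real.log t) := by rw [hp]
    rw [← h1]
    show P2 _ _ (min (Real.exp (Real.log t)) R) = _
    rw [hmin]

end

section


structure Ini (M s0 : ℝ) (φ gp : ℝ → ℝ) : Prop where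
  Mpos : 0 < M
  pos : 0 < s0
  le : s0 ≤ M
  inv : s0⁻¹ ≤ M
  gi : IntervalIntegrable gp volume 0 s0
  g2 : IntervalIntegrable (fun y => gp y ^ 2) volume 0 s0
  gM : ∫ y in (0:ℝ)..s0, gp y ^ 2 ≤ M ^ 2
  rep : ∀ x ∈ Icc 0 s0, φ x = φ 0 + ∫ y in (0:ℝ)..x, gp y
  nn : ∀ x ∈ Icc 0 s0, 0 ≤ φ x
  z : φ s0 = 0

lemma Ek_meas (t : ℝ) : Measurable (Ek t) := by
  unfold Ek Hv
  split_ifs with h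
  · exact (Psi_cont.comp (by fun_prop : Continuous fun z : ℝ => z / (2 * √t))).measurable
  · exact Measurable.ite measurableSet_Ioi measurable_const
      (Measurable.ite measurableSet_Iio measurable_const measurable_const)

lemma VE_cont {s0 : ℝ} {w β : ℝ → ℝ} (hw : IntervalIntegrable w volume 0 s0) (hβ : Continuous β)
    (hn : ∀ x, ∀ᵐ y : ℝ, x - β y ≠ 0) {t x : ℝ} (ht : 0 ≤ t) :
    ContinuousAt (fun q : ℝ × ℝ => Vp Ek s0 (fun _ => 0) β w q.1 q.2) (t, x) := by
  unfold Vp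
  apply intervalIntegral.continuousAt_of_dominated_interval (bound := fun y => |w y|)
  · refine Eventually.of_forall fun q => ?_
    refine AEStronglyMeasurable.mul ?_ hw.def'.aestronglyMeasurable
    exact ((Ek_meas _).comp (by fun_prop)).aestronglyMeasurable
  · refine Eventually.of_forall fun q => Eventually.of_forall fun y _ => ?_
    rw [Real.norm_eq_abs, abs_mul]
    have := Ek_mem (q.1 - 0) (q.2 - β y)
    rw [abs_of_nonneg this.1]
    exact mul_le_of_le_one_left (abs_nonneg _) this.2
  · exact hw.abs
  · filter_upwards [hn x] with y hy _
    refine ContinuousAt.mul ?_ continuousAt_const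
    refine ContinuousAt.comp (g := fun q : ℝ × ℝ => Ek q.1 q.2) 
      (f := fun q : ℝ × ℝ => (q.1 - 0, q.2 - β y)) (continuousAt_Ek ?_) (by fun_prop)
    rcases eq_or_lt_of_le ht with h | h
    · right; exact ⟨by simp [← h], hy⟩
    · left; simpa using h

def I0 (s0 : ℝ) (gp : ℝ → ℝ) (t x : ℝ) : ℝ :=
  Vp Ek s0 (fun _ => 0) (fun y => y) gp t x - Vp Ek s0 (fun _ => 0) (fun y => -y) gp t x
def IX (s0 : ℝ) (gp : ℝ → ℝ) (t x : ℝ) : ℝ :=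
  Vp Gk s0 (fun _ => 0) (fun y => y) gp t x - Vp Gk s0 (fun _ => 0) (fun y => -y) gp t x
def IXX (s0 : ℝ) (gp : ℝ → ℝ) (t x : ℝ) : ℝ :=
  Vp G1 s0 (fun _ => 0) (fun y => y) gp t x - Vp G1 s0 (fun _ => 0) (fun y => -y) gp t x

variable {M s0 : ℝ} {φ gp : ℝ → ℝ}

lemma ae_ne (a : ℝ) : ∀ᵐ y : ℝ, y ≠ a := by rw [ae_iff]; simp

lemma Ini.I0_cont (h : Ini M s0 φ gp) {t x : ℝ} (ht : 0 ≤ t) :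
    ContinuousAt (fun q : ℝ × ℝ => I0 s0 gp q.1 q.2) (t, x) := by
  refine (VE_cont h.gi continuous_id (fun x => ?_) ht).sub (VE_cont h.gi continuous_neg (fun x => ?_) ht)
  · filter_upwards [ae_ne x] with y hy; exact sub_ne_zero.2 (Ne.symm hy)
  · filter_upwards [ae_ne (-x)] with y hy hxy
    apply hy; linarith

lemma openpos : IsOpen {z : ℝ × ℝ | 0 < z.1} := isOpen_lt continuous_const continuous_fst

lemma Ini.IX_cont (h : Ini M s0 φ gp) {t x : ℝ} (ht : 0 < t) :
    ContinuousAt (fun q : ℝ × ℝ => IX s0 gp q.1 q.2) (t, x) := by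
  have key : ∀ β : ℝ → ℝ, Continuous β →
      ContinuousAt (fun q : ℝ × ℝ => Vp Gk s0 (fun _ => 0) β gp q.1 q.2) (t, x) := fun β hβ =>
    Vp_cont h.pos.le continuous_const hβ h.gi openpos
      (fun z hz => continuousAt_Gk (Or.inl (ne_of_gt hz))) (fun a _ => by simpa using ht)
  exact (key _ continuous_id).sub (key _ continuous_neg)

lemma Ini.IXX_cont (h : Ini M s0 φ gp) {t x : ℝ} (ht : 0 < t) :
    ContinuousAt (fun q : ℝ × ℝ => IXX s0 gp q.1 q.2) (t, x) := by
  have key : ∀ β : ℝ → ℝ, Continuous β →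
      ContinuousAt (fun q : ℝ × ℝ => Vp G1 s0 (fun _ => 0) β gp q.1 q.2) (t, x) := fun β hβ =>
    Vp_cont h.pos.le continuous_const hβ h.gi openpos
      (fun z hz => continuousAt_G1 (Or.inl (ne_of_gt hz))) (fun a _ => by simpa using ht)
  exact (key _ continuous_id).sub (key _ continuous_neg)

lemma Ini.I0_x (h : Ini M s0 φ gp) {t x : ℝ} (ht : 0 < t) :
    HasDerivAt (I0 s0 gp t) (IX s0 gp t x) x := by
  have key : ∀ β : ℝ → ℝ, Continuous β →
      HasDerivAt (fun x => Vp Ek s0 (fun _ => 0) β gp t x) (Vp Gk s0 (fun _ => 0) β gp t x) x := fun β hβ =>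
    Vp_deriv_x h.pos.le continuous_const hβ h.gi openpos
      (fun z hz => continuousAt_Ek_pos hz)
      (fun z hz => continuousAt_Gk (Or.inl (ne_of_gt hz))) (fun z hz => hasDerivAt_Ek_z hz _)
      (fun a _ => by simpa using ht)
  exact (key _ continuous_id).sub (key _ continuous_neg)

lemma Ini.IX_x (h : Ini M s0 φ gp) {t x : ℝ} (ht : 0 < t) :
    HasDerivAt (IX s0 gp t) (IXX s0 gp t x) x := by
  have key : ∀ β : ℝ → ℝ, Continuous β →
      HasDerivAt (fun x => Vp Gk s0 (fun _ => 0) β gp t x) (Vp G1 s0 (fun _ => 0) β gp t x) x := fun β hβ =>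
    Vp_deriv_x h.pos.le continuous_const hβ h.gi openpos
      (fun z hz => continuousAt_Gk (Or.inl (ne_of_gt hz)))
      (fun z hz => continuousAt_G1 (Or.inl (ne_of_gt hz))) (fun z hz => hasDerivAt_Gk_z _ _)
      (fun a _ => by simpa using ht)
  exact (key _ continuous_id).sub (key _ continuous_neg)

lemma Ini.I0_t (h : Ini M s0 φ gp) {t x : ℝ} (ht : 0 < t) :
    HasDerivAt (fun t => I0 s0 gp t x) (IXX s0 gp t x) t := by
  have key : ∀ β : ℝ → ℝ, Continuous β →
      HasDerivAt (fun t => Vp Ek s0 (fun _ => 0) β gp t x) (Vp G1 s0 (fun _ => 0) β gp t x) t := fun β hβ =>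
    Vp_deriv_t h.pos.le continuous_const hβ h.gi openpos
      (fun z hz => continuousAt_Ek_pos hz)
      (fun z hz => continuousAt_G1 (Or.inl (ne_of_gt hz))) (fun z hz => hasDerivAt_Ek_r hz _)
      (fun a _ => by simpa using ht)
  exact (key _ continuous_id).sub (key _ continuous_neg)

lemma IX_zero (s0 : ℝ) (gp : ℝ → ℝ) (t : ℝ) : IX s0 gp t 0 = 0 := by
  unfold IX Vp
  simp [Gk_neg]

lemma Ini.gp_int (h : Ini M s0 φ gp) {x : ℝ} (hx : x ∈ Icc 0 s0) :
    ∫ y in x..s0, gp y = - φ x := by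
  have h1 := h.rep x hx
  have h2 := h.rep s0 ⟨h.pos.le, le_rfl⟩
  have h3 := intervalIntegral.integral_interval_sub_left h.gi (h.gi.mono_set
    (show uIcc 0 x ⊆ uIcc 0 s0 by
      rw [uIcc_of_le hx.1, uIcc_of_le h.pos.le]; exact Icc_subset_Icc_right hx.2))
  rw [h.z] at h2
  linarith

lemma VE_ii {w β : ℝ → ℝ} (hw : IntervalIntegrable w volume 0 s0) (hβ : Continuous β) (t x : ℝ) :
    IntervalIntegrable (fun y => Ek t (x - β y) * w y) volume 0 s0 := by
  refine hw.abs.mono_fun' ?_ (Eventually.of_forall fun y => ?_)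
  · refine AEStronglyMeasurable.mul ?_ hw.def'.aestronglyMeasurable
    exact ((Ek_meas _).comp (by fun_prop)).aestronglyMeasurable
  · beta_reduce; rw [Real.norm_eq_abs, abs_mul]
    have := Ek_mem t (x - β y)
    rw [abs_of_nonneg this.1]
    exact mul_le_of_le_one_left (abs_nonneg _) this.2

lemma Ini.I0_eq (h : Ini M s0 φ gp) (t x : ℝ) : I0 s0 gp t x =
    ∫ y in (0:ℝ)..s0, (Ek t (x - y) * gp y - Ek t (x + y) * gp y) := by
  have h1 := VE_ii h.gi continuous_id t x
  have h2 := VE_ii h.gi continuous_neg t x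
  simp only [sub_neg_eq_add, id] at h1 h2
  rw [intervalIntegral.integral_sub h1 h2]
  simp [I0, Vp]

lemma Ini.I0_init (h : Ini M s0 φ gp) {x : ℝ} (hx : x ∈ Icc 0 s0) : I0 s0 gp 0 x = φ x := by
  have hi1 : IntervalIntegrable gp volume 0 x := h.gi.mono_set
    (show uIcc 0 x ⊆ uIcc 0 s0 by
      rw [uIcc_of_le hx.1, uIcc_of_le h.pos.le]; exact Icc_subset_Icc_right hx.2)
  have hi2 : IntervalIntegrable gp volume x s0 := h.gi.mono_set
    (show uIcc x s0 ⊆ uIcc 0 s0 by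
      rw [uIcc_of_le hx.2, uIcc_of_le h.pos.le]; exact Icc_subset_Icc_left hx.1)
  have e1 : ∫ y in (0:ℝ)..x, (Ek 0 (x - y) * gp y - Ek 0 (x + y) * gp y) = ∫ y in (0:ℝ)..x, (0:ℝ) := by
    apply intervalIntegral.integral_congr_ae
    rw [uIoc_of_le hx.1]
    filter_upwards [ae_ne x] with y hy hy2
    have a : 0 < x - y := by have := lt_of_le_of_ne hy2.2 hy; linarith
    have b : 0 < x + y := by linarith [hy2.1]
    rw [Ek_zero, Ek_zero, Hv_pos a, Hv_pos b]; ring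
  have e2 : ∫ y in x..s0, (Ek 0 (x - y) * gp y - Ek 0 (x + y) * gp y) = ∫ y in x..s0, -gp y := by
    apply intervalIntegral.integral_congr_ae
    rw [uIoc_of_le hx.2]
    refine Eventually.of_forall fun y hy2 => ?_
    have a : x - y < 0 := by linarith [hy2.1]
    have b : 0 < x + y := by linarith [hy2.1, hx.1]
    rw [Ek_zero, Ek_zero, Hv_lt a, Hv_pos b]; ring
  have hii : IntervalIntegrable (fun y => Ek 0 (x - y) * gp y - Ek 0 (x + y) * gp y) volume 0 s0 := by
    have h1 := VE_ii h.gi continuous_id 0 x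
    have h2 := VE_ii h.gi continuous_neg 0 x
    simp only [sub_neg_eq_add, id] at h1 h2
    exact h1.sub h2
  rw [h.I0_eq, ← intervalIntegral.integral_add_adjacent_intervals (b := x) (hii.mono_set ?_) (hii.mono_set ?_), e1, e2]
  · simp [h.gp_int hx]
  · rw [uIcc_of_le hx.1, uIcc_of_le h.pos.le]; exact Icc_subset_Icc_right hx.2
  · rw [uIcc_of_le hx.2, uIcc_of_le h.pos.le]; exact Icc_subset_Icc_left hx.1

lemma Ini.I0_out (h : Ini M s0 φ gp) {x : ℝ} (hx : s0 ≤ x) : I0 s0 gp 0 x = 0 := by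
  rw [h.I0_eq]
  have e1 : ∫ y in (0:ℝ)..s0, (Ek 0 (x - y) * gp y - Ek 0 (x + y) * gp y) = ∫ y in (0:ℝ)..s0, (0:ℝ) := by
    apply intervalIntegral.integral_congr_ae
    rw [uIoc_of_le h.pos.le]
    filter_upwards [ae_ne s0] with y hy hy2
    have a : 0 < x - y := by have := lt_of_le_of_ne hy2.2 hy; linarith
    have b : 0 < x + y := by linarith [hy2.1]
    rw [Ek_zero, Ek_zero, Hv_pos a, Hv_pos b]; ring
  rw [e1]; simp

lemma Ini.I0_bd (h : Ini M s0 φ gp) (t x : ℝ) : |I0 s0 gp t x| ≤ M ^ ((3:ℝ) / 2) := by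
  rw [h.I0_eq]
  have hs : 0 < √s0 := Real.sqrt_pos.2 h.pos
  set l := M / √s0 with hl
  have hlp : 0 < l := div_pos h.Mpos hs
  have hb : |∫ y in (0:ℝ)..s0, (Ek t (x - y) * gp y - Ek t (x + y) * gp y)| ≤
      ∫ y in (0:ℝ)..s0, (l / 2 + gp y ^ 2 * (1 / (2 * l))) := by
    refine intervalIntegral.norm_integral_le_of_norm_le (μ := volume)
      (f := fun y => Ek t (x - y) * gp y - Ek t (x + y) * gp y)
      (g := fun y => l / 2 + gp y ^ 2 * (1 / (2 * l))) h.pos.le (Eventually.of_forall fun y _ => ?_)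
      (intervalIntegrable_const.add (h.g2.mul_const _))
    rw [Real.norm_eq_abs, ← sub_mul, abs_mul]
    have a1 := Ek_mem t (x - y)
    have a2 := Ek_mem t (x + y)
    have a3 : |Ek t (x - y) - Ek t (x + y)| ≤ 1 := by
      rw [abs_le]; constructor <;> linarith [a1.1, a1.2, a2.1, a2.2]
    refine (mul_le_of_le_one_left (abs_nonneg _) a3).trans ?_
    have : l / 2 + gp y ^ 2 * (1 / (2 * l)) = (l ^ 2 + |gp y| ^ 2) / (2 * l) := by
      rw [sq_abs]; field_simp
    rw [this, le_div_iff₀ (by positivity)]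
    nlinarith [sq_nonneg (l - |gp y|)]
  rw [intervalIntegral.integral_add intervalIntegrable_const (h.g2.mul_const _),
    intervalIntegral.integral_mul_const, intervalIntegral.integral_const, sub_zero, smul_eq_mul] at hb
  have h2 : (∫ y in (0:ℝ)..s0, gp y ^ 2) * (1 / (2 * l)) ≤ M ^ 2 * (1 / (2 * l)) :=
    mul_le_mul_of_nonneg_right h.gM (by positivity)
  have hss : √s0 * √s0 = s0 := Real.mul_self_sqrt h.pos.le
  have h3 : s0 * (l / 2) = M * √s0 / 2 := by
    rw [hl]; nth_rw 1 [← hss]; field_simp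
  have h4 : M ^ 2 * (1 / (2 * l)) = M * √s0 / 2 := by
    have := h.Mpos.ne'
    rw [hl]; field_simp
  have h5 : √s0 ≤ √M := Real.sqrt_le_sqrt h.le
  have h6 : M ^ ((3:ℝ) / 2) = M * √M := by
    rw [Real.sqrt_eq_rpow, show (3:ℝ) / 2 = 1 + 1 / 2 by norm_num, Real.rpow_add h.Mpos, Real.rpow_one]
  rw [h6]
  have := mul_le_mul_of_nonneg_left h5 h.Mpos.le
  linarith

lemma Ini.pair (h : Ini M s0 φ gp) {k : ℝ → ℝ} (hk : Continuous k) {A : ℝ} (hA : 0 < A)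
    (hkA : ∫ y in (0:ℝ)..s0, k y ^ 2 ≤ A ^ 2) :
    |∫ y in (0:ℝ)..s0, k y * gp y| ≤ (M ^ 2 + 1) / 2 * A := by
  have hk2 : IntervalIntegrable (fun y => k y ^ 2) volume 0 s0 := (hk.pow 2).intervalIntegrable _ _
  have hb : |∫ y in (0:ℝ)..s0, k y * gp y| ≤
      ∫ y in (0:ℝ)..s0, (k y ^ 2 * (1 / (2 * A)) + gp y ^ 2 * (A / 2)) := by
    refine intervalIntegral.norm_integral_le_of_norm_le (μ := volume)
      (f := fun y => k y * gp y)
      (g := fun y => k y ^ 2 * (1 / (2 * A)) + gp y ^ 2 * (A / 2)) h.pos.le (Eventually.of_forall fun y _ => ?_)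
      ((hk2.mul_const _).add (h.g2.mul_const _))
    rw [Real.norm_eq_abs, abs_mul]
    have : k y ^ 2 * (1 / (2 * A)) + gp y ^ 2 * (A / 2) = (|k y| ^ 2 + (A * |gp y|) ^ 2) / (2 * A) := by
      rw [mul_pow, sq_abs, sq_abs]; field_simp
    rw [this, le_div_iff₀ (by positivity)]
    nlinarith [sq_nonneg (|k y| - A * |gp y|)]
  rw [intervalIntegral.integral_add (hk2.mul_const _) (h.g2.mul_const _),
    intervalIntegral.integral_mul_const, intervalIntegral.integral_mul_const] at hb
  have h1 := mul_le_mul_of_nonneg_right h.gM (by positivity : 0 ≤ A / 2)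
  have h2 := mul_le_mul_of_nonneg_right hkA (by positivity : 0 ≤ 1 / (2 * A))
  have h3 : A ^ 2 * (1 / (2 * A)) = A / 2 := by field_simp
  rw [h3] at h2
  linarith

/-- fourth root -/
def qq (t : ℝ) : ℝ := √(√t)
lemma qq_pos {t : ℝ} (ht : 0 < t) : 0 < qq t := Real.sqrt_pos.2 (Real.sqrt_pos.2 ht)
lemma qq_nonneg (t : ℝ) : 0 ≤ qq t := Real.sqrt_nonneg _
lemma qq_sq (t : ℝ) : qq t ^ 2 = √t := Real.sq_sqrt (Real.sqrt_nonneg _)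
lemma qq_four {t : ℝ} (ht : 0 ≤ t) : qq t ^ 4 = t := by
  rw [show qq t ^ 4 = (qq t ^ 2) ^ 2 by ring, qq_sq, Real.sq_sqrt ht]
lemma qq_mono {t t' : ℝ} (h : t ≤ t') : qq t ≤ qq t' := Real.sqrt_le_sqrt (Real.sqrt_le_sqrt h)
lemma qq_le_one {t : ℝ} (h : t ≤ 1) : qq t ≤ 1 := Real.sqrt_le_one.2 (Real.sqrt_le_one.2 h)
lemma qq_cont : Continuous qq := by unfold qq; fun_prop

lemma Gk_int_le {t : ℝ} (ht : 0 < t) (hs : 0 ≤ s0) (x σ : ℝ) (hσ : σ = 1 ∨ σ = -1) :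
    ∫ y in (0:ℝ)..s0, Gk t (x - σ * y) ≤ 1 := by
  rcases hσ with h | h
  · subst h
    rw [intervalIntegral.integral_of_le hs]; simp only [one_mul]
    exact Gk_shift_integral_le ht x _
  · subst h
    have : ∀ y, Gk t (x - -1 * y) = Gk t (-x - y) := by
      intro y; rw [← Gk_neg]; congr 1; ring
    simp_rw [this]
    rw [intervalIntegral.integral_of_le hs]
    exact Gk_shift_integral_le ht (-x) _

lemma cont_sl {k : ℝ → ℝ → ℝ} {t : ℝ}
    (hk : ∀ z, ContinuousAt (fun q : ℝ × ℝ => k q.1 q.2) (t, z)) : Continuous (k t) :=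
  continuous_iff_continuousAt.2 fun z =>
    ContinuousAt.comp (g := fun q : ℝ × ℝ => k q.1 q.2) (f := fun z : ℝ => (t, z)) (hk z) (by fun_prop)

lemma Ini.IX_bd (h : Ini M s0 φ gp) {t : ℝ} (ht : 0 < t) (x : ℝ) :
    |IX s0 gp t x| ≤ (M ^ 2 + 1) * (qq t)⁻¹ := by
  have hq := qq_pos ht
  have hc : Continuous (Gk t) := cont_sl fun z => continuousAt_Gk (Or.inl ht.ne')
  have key : ∀ σ : ℝ, (σ = 1 ∨ σ = -1) →
      |∫ y in (0:ℝ)..s0, Gk t (x - σ * y) * gp y| ≤ (M ^ 2 + 1) / 2 * (qq t)⁻¹ := by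
    intro σ hσ
    have hc' : Continuous fun y => Gk t (x - σ * y) := hc.comp (by fun_prop)
    refine h.pair hc' (by positivity) ?_
    have e : ((qq t)⁻¹) ^ 2 = (√t)⁻¹ := by rw [inv_pow, qq_sq]
    rw [e]
    calc _ ≤ ∫ y in (0:ℝ)..s0, (√t)⁻¹ * Gk t (x - σ * y) := by
          apply intervalIntegral.integral_mono_on h.pos.le ((hc'.pow 2).intervalIntegrable _ _)
            ((continuous_const.mul hc').intervalIntegrable _ _)
          intro y _; exact Gk_sq_le _ _
      _ ≤ _ := by
          rw [intervalIntegral.integral_const_mul]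
          exact mul_le_of_le_one_right (by positivity) (Gk_int_le ht h.pos.le x σ hσ)
  have k1 := key 1 (Or.inl rfl)
  have k2 := key (-1) (Or.inr rfl)
  simp only [one_mul, neg_one_mul] at k1 k2
  unfold IX Vp
  simp only [sub_zero]
  refine (abs_sub _ _).trans ?_
  linarith

lemma Ini.IXX_bd (h : Ini M s0 φ gp) {t : ℝ} (ht : 0 < t) (x : ℝ) :
    |IXX s0 gp t x| ≤ (M ^ 2 + 1) * (qq t ^ 3)⁻¹ := by
  have hq := qq_pos ht
  have hc : Continuous (Gk t) := cont_sl fun z => continuousAt_Gk (Or.inl ht.ne')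
  have hc1 : Continuous (G1 t) := cont_sl fun z => continuousAt_G1 (Or.inl ht.ne')
  have key : ∀ σ : ℝ, (σ = 1 ∨ σ = -1) →
      |∫ y in (0:ℝ)..s0, G1 t (x - σ * y) * gp y| ≤ (M ^ 2 + 1) / 2 * (qq t ^ 3)⁻¹ := by
    intro σ hσ
    have hc' : Continuous fun y => Gk t (x - σ * y) := hc.comp (by fun_prop)
    have hc1' : Continuous fun y => G1 t (x - σ * y) := hc1.comp (by fun_prop)
    refine h.pair hc1' (by positivity) ?_
    have e : ((qq t ^ 3)⁻¹) ^ 2 = t⁻¹ * (√t)⁻¹ := by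
      rw [inv_pow, ← mul_inv, ← qq_sq]; nth_rw 2 [← qq_four ht.le]; ring
    rw [e]
    calc _ ≤ ∫ y in (0:ℝ)..s0, (t⁻¹ * (√t)⁻¹) * Gk t (x - σ * y) := by
          apply intervalIntegral.integral_mono_on h.pos.le ((hc1'.pow 2).intervalIntegrable _ _)
            ((continuous_const.mul hc').intervalIntegrable _ _)
          intro y _; exact G1_sq_le ht _
      _ ≤ _ := by
          rw [intervalIntegral.integral_const_mul]
          exact mul_le_of_le_one_right (by positivity) (Gk_int_le ht h.pos.le x σ hσ)
  have k1 := key 1 (Or.inl rfl)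
  have k2 := key (-1) (Or.inr rfl)
  simp only [one_mul, neg_one_mul] at k1 k2
  unfold IXX Vp
  simp only [sub_zero]
  refine (abs_sub _ _).trans ?_
  linarith

lemma Ini.IX_lip (h : Ini M s0 φ gp) {t : ℝ} (ht : 0 < t) (x y : ℝ) :
    |IX s0 gp t x - IX s0 gp t y| ≤ (M ^ 2 + 1) * (qq t ^ 3)⁻¹ * |x - y| :=
  convex_univ.norm_image_sub_le_of_norm_hasDerivWithin_le (f := IX s0 gp t)
    (fun z _ => (h.IX_x ht).hasDerivWithinAt) (fun z _ => h.IXX_bd ht z) (mem_univ y) (mem_univ x)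

end

section


def ff (g : ℝ → ℝ) (τ : ℝ) : ℝ := (qq τ)⁻¹ * g τ
def ss (s0 : ℝ) (g : ℝ → ℝ) (t : ℝ) : ℝ := s0 + ∫ τ in (0:ℝ)..t, ff g τ

structure GB (K : ℝ) (g : ℝ → ℝ) : Prop where
  gc : ContinuousOn g (Ioi 0)
  gb : ∀ t, 0 < t → |g t| ≤ K

variable {K : ℝ} {g : ℝ → ℝ}

lemma qq_nonpos {τ : ℝ} (h : τ ≤ 0) : qq τ = 0 := by
  unfold qq; rw [Real.sqrt_eq_zero_of_nonpos h, Real.sqrt_zero]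

lemma ff_bd (h : GB K g) {τ : ℝ} (hτ : 0 < τ) : |ff g τ| ≤ K * (qq τ)⁻¹ := by
  unfold ff
  rw [abs_mul, abs_of_nonneg (inv_nonneg.2 (qq_nonneg τ)), mul_comm]
  exact mul_le_mul_of_nonneg_right (h.gb τ hτ) (inv_nonneg.2 (qq_nonneg τ))

lemma GB.K0 (h : GB K g) : 0 ≤ K := le_trans (abs_nonneg _) (h.gb 1 one_pos)

lemma qq_inv_le {τ : ℝ} (h0 : 0 < τ) (h1 : τ ≤ 1) : (qq τ)⁻¹ ≤ (√τ)⁻¹ := by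
  rw [← qq_sq]
  have := qq_pos h0
  have h2 := qq_le_one h1
  apply inv_anti₀ (by positivity); nlinarith

lemma ff_cont (h : GB K g) : ContinuousOn (ff g) (Ioi 0) := by
  refine ContinuousOn.mul ?_ h.gc
  exact qq_cont.continuousOn.inv₀ fun x hx => (qq_pos hx).ne'

lemma ff_dn (h : GB K g) : Dn K (ff g) := by
  refine ⟨ff_cont h, fun τ hτ => (ff_bd h hτ.1).trans ?_⟩
  exact mul_le_mul_of_nonneg_left (qq_inv_le hτ.1 hτ.2) h.K0

lemma ff_ii (h : GB K g) (a b : ℝ) : IntervalIntegrable (ff g) volume a b := by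
  have hm : AEStronglyMeasurable (ff g) volume := by
    have e : ff g = (Ioi 0).indicator (ff g) := by
      ext τ
      by_cases hτ : τ ∈ Ioi (0:ℝ)
      · rw [indicator_of_mem hτ]
      · rw [indicator_of_notMem hτ, ff, qq_nonpos (not_lt.1 hτ)]; simp
    rw [e, aestronglyMeasurable_indicator_iff measurableSet_Ioi]
    exact (ff_cont h).aestronglyMeasurable measurableSet_Ioi
  have hd : IntervalIntegrable (fun τ : ℝ => K * (1 + (√τ)⁻¹)) volume a b :=
    (intervalIntegrable_const.add (inv_sqrt_ii a b)).const_mul K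
  refine hd.mono_fun' hm.restrict (Eventually.of_forall fun τ => ?_)
  beta_reduce
  have hK := h.K0
  rcases le_or_gt τ 0 with hτ | hτ
  · rw [ff, qq_nonpos hτ]; simp; positivity
  · rw [Real.norm_eq_abs]
    refine (ff_bd h hτ).trans (mul_le_mul_of_nonneg_left ?_ hK)
    have hp : 0 ≤ (√τ)⁻¹ := by positivity
    rcases le_total τ 1 with h1 | h1
    · linarith [qq_inv_le hτ h1]
    · have : (qq τ)⁻¹ ≤ 1 := inv_le_one_of_one_le₀ (Real.one_le_sqrt.2 (Real.one_le_sqrt.2 h1))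
      linarith

lemma ss_cont (h : GB K g) (s0 : ℝ) : Continuous (ss s0 g) :=
  continuous_const.add (intervalIntegral.continuous_primitive (ff_ii h) 0)

lemma ss_zero (s0 : ℝ) (g : ℝ → ℝ) : ss s0 g 0 = s0 := by simp [ss]

lemma ss_deriv (h : GB K g) (s0 : ℝ) {t : ℝ} (ht : 0 < t) : HasDerivAt (ss s0 g) (ff g t) t := by
  refine HasDerivAt.const_add s0 ?_
  exact intervalIntegral.integral_hasDerivAt_right (ff_ii h 0 t)
    ((ff_cont h).stronglyMeasurableAtFilter isOpen_Ioi t ht)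
    ((ff_cont h).continuousAt (Ioi_mem_nhds ht))

lemma ss_crv (h : GB K g) (s0 : ℝ) : Crv K (ss s0 g) (ff g) :=
  ⟨ss_cont h s0, fun _ ht => ss_deriv h s0 ht, ff_dn h⟩

lemma ss_crv_neg (h : GB K g) (s0 : ℝ) : Crv K (fun t => -ss s0 g t) (fun t => -ff g t) :=
  ⟨(ss_cont h s0).neg, fun _ ht => (ss_deriv h s0 ht).neg, ⟨(ff_cont h).neg, fun τ hτ => by
    rw [abs_neg]; exact (ff_dn h).bd τ hτ⟩⟩

lemma zero_crv : Crv 0 (fun _ => 0) (fun _ => 0) :=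
  ⟨continuous_const, fun _ _ => hasDerivAt_const _ _, continuousOn_const, fun τ _ => by simp⟩

lemma ss_lip (h : GB K g) (s0 : ℝ) {t τ : ℝ} (h0 : 0 < τ) (ht : τ ≤ t) :
    |ss s0 g t - ss s0 g τ| ≤ K * (qq τ)⁻¹ * (t - τ) := by
  have e : ss s0 g t - ss s0 g τ = ∫ σ in τ..t, ff g σ := by
    unfold ss
    rw [add_sub_add_left_eq_sub, intervalIntegral.integral_interval_sub_left (ff_ii h _ _) (ff_ii h _ _)]
  rw [e]
  have := intervalIntegral.norm_integral_le_of_norm_le_const (a := τ) (b := t) (f := ff g) (C := K * (qq τ)⁻¹) ?_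
  · rwa [abs_of_nonneg (by linarith : 0 ≤ t - τ)] at this
  · intro σ hσ
    rw [uIoc_of_le ht] at hσ
    refine (ff_bd h (h0.trans hσ.1)).trans (mul_le_mul_of_nonneg_left ?_ h.K0)
    exact inv_anti₀ (qq_pos h0) (qq_mono hσ.1.le)

lemma ss_size (h : GB K g) (s0 : ℝ) {t : ℝ} (ht : 0 ≤ t) :
    |ss s0 g t - s0| ≤ 2 * K * qq t ^ 3 := by
  have e : ss s0 g t - s0 = ∫ σ in (0:ℝ)..t, ff g σ := by unfold ss; ring
  rw [e]
  have := intervalIntegral.norm_integral_le_of_norm_le (μ := volume) (f := ff g) (a := 0) (b := t)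
    (g := fun τ => K * qq t * (√τ)⁻¹) ht (Eventually.of_forall fun τ hτ => ?_) ((inv_sqrt_ii 0 t).const_mul _)
  · rw [intervalIntegral.integral_const_mul, inv_sqrt_int ht, ← qq_sq] at this
    refine this.trans (le_of_eq ?_); ring
  · refine (ff_bd h hτ.1).trans ?_
    rw [mul_assoc]
    refine mul_le_mul_of_nonneg_left ?_ h.K0
    have hq := qq_pos hτ.1
    have : (qq τ)⁻¹ = qq τ * (√τ)⁻¹ := by rw [← qq_sq]; field_simp
    rw [this]
    exact mul_le_mul_of_nonneg_right (qq_mono hτ.2) (by positivity)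

lemma ss_sub {g' : ℝ → ℝ} (h : GB K g) (h' : GB K g') (s0 t : ℝ) :
    ss s0 g t - ss s0 g' t = ss 0 (fun τ => g τ - g' τ) t := by
  unfold ss
  have : ff (fun τ => g τ - g' τ) = fun τ => ff g τ - ff g' τ := by ext τ; unfold ff; ring
  rw [this, intervalIntegral.integral_sub (ff_ii h _ _) (ff_ii h' _ _)]; ring

lemma GB.sub {g' : ℝ → ℝ} {D : ℝ} (h : GB K g) (h' : GB K g') (hD : ∀ t, 0 < t → |g t - g' t| ≤ D) :
    GB D fun τ => g τ - g' τ := ⟨h.gc.sub h'.gc, hD⟩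

/-- nonlinearity -/
def FF (p x : ℝ) : ℝ := |x| ^ p

lemma FF_cont {p : ℝ} (hp : 1 < p) : Continuous (FF p) := by
  unfold FF
  exact continuous_abs.rpow_const fun x => Or.inr (by linarith)

lemma FF_bounds {p : ℝ} (hp : 1 < p) (H : ℝ) (hH : 0 ≤ H) : ∃ L, 0 ≤ L ∧ (∀ x, |x| ≤ H → |FF p x| ≤ L) ∧
    ∀ x y, |x| ≤ H → |y| ≤ H → |FF p x - FF p y| ≤ L * |x - y| := by
  refine ⟨H ^ p + p * H ^ (p - 1), by positivity, fun x hx => ?_, fun x y hx hy => ?_⟩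
  · unfold FF
    rw [abs_of_nonneg (by positivity)]
    have := Real.rpow_le_rpow (abs_nonneg x) hx (by linarith : 0 ≤ p)
    have : 0 ≤ p * H ^ (p - 1) := by positivity
    linarith
  · have h1 : |FF p x - FF p y| ≤ p * H ^ (p - 1) * |(|x|) - (|y|)| := by
      refine (convex_Icc 0 H).norm_image_sub_le_of_norm_hasDerivWithin_le (f := fun x => x ^ p)
        (f' := fun x => p * x ^ (p - 1))
        (fun z hz => (Real.hasDerivAt_rpow_const (Or.inr hp.le)).hasDerivWithinAt) (fun z hz => ?_)
        ⟨abs_nonneg y, hy⟩ ⟨abs_nonneg x, hx⟩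
      rw [Real.norm_eq_abs, abs_of_nonneg (by have := hz.1; positivity)]
      gcongr
      · exact hz.1
      · exact hz.2
    refine h1.trans ?_
    have h2 := abs_abs_sub_abs_le_abs_sub x y
    have h3 : 0 ≤ H ^ p := by positivity
    have h4 : 0 ≤ p * H ^ (p - 1) := by positivity
    nlinarith [abs_nonneg (x - y), mul_le_mul_of_nonneg_left h2 h4]

lemma G1_far {r z δ : ℝ} (hr : 0 < r) (hδ : 0 < δ) (hz : δ ≤ z) : |G1 r z| ≤ 2 / δ * (√r)⁻¹ := by
  have := abs_z_G1_le hr z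
  have hz2 : δ * |G1 r z| ≤ |z| * |G1 r z| :=
    mul_le_mul_of_nonneg_right (hz.trans (le_abs_self z)) (abs_nonneg _)
  rw [div_mul_eq_mul_div, le_div_iff₀ hδ]; linarith

lemma G2_far {r z δ : ℝ} (hr : 0 < r) (hδ : 0 < δ) (hz : δ ≤ z) : |G2 r z| ≤ 12 / δ ^ 2 * (√r)⁻¹ := by
  have := abs_z2_G2_le hr z
  have hz2 : δ ^ 2 * |G2 r z| ≤ z ^ 2 * |G2 r z| :=
    mul_le_mul_of_nonneg_right (by gcongr) (abs_nonneg _)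
  rw [div_mul_eq_mul_div, le_div_iff₀ (by positivity)]; linarith

lemma Gk_lip_far {r z z' δ : ℝ} (hr : 0 < r) (hδ : 0 < δ) (hz : δ ≤ z) (hz' : δ ≤ z') :
    |Gk r z - Gk r z'| ≤ 2 / δ * (√r)⁻¹ * |z - z'| :=
  (convex_Ici δ).norm_image_sub_le_of_norm_hasDerivWithin_le (f := Gk r)
    (fun y _ => (hasDerivAt_Gk_z r y).hasDerivWithinAt) (fun _ hy => G1_far hr hδ hy) hz' hz

lemma G1_lip_far {r z z' δ : ℝ} (hr : 0 < r) (hδ : 0 < δ) (hz : δ ≤ z) (hz' : δ ≤ z') :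
    |G1 r z - G1 r z'| ≤ 12 / δ ^ 2 * (√r)⁻¹ * |z - z'| :=
  (convex_Ici δ).norm_image_sub_le_of_norm_hasDerivWithin_le (f := G1 r)
    (fun y _ => (hasDerivAt_G1_z r y).hasDerivWithinAt) (fun _ hy => G2_far hr hδ hy) hz' hz

lemma G1_lip {r : ℝ} (hr : 0 < r) (z z' : ℝ) :
    |G1 r z - G1 r z'| ≤ 2 * r⁻¹ * (√r)⁻¹ * |z - z'| :=
  convex_univ.norm_image_sub_le_of_norm_hasDerivWithin_le (f := G1 r)
    (fun y _ => (hasDerivAt_G1_z r y).hasDerivWithinAt) (fun y _ => abs_G2_le hr y) (mem_univ _) (mem_univ _)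

lemma prod_diff {k k' f f' A B C E : ℝ} (h1 : |k| ≤ A) (h2 : |f - f'| ≤ B) (h3 : |k - k'| ≤ C)
    (h4 : |f'| ≤ E) : |k * f - k' * f'| ≤ A * B + C * E := by
  have e : k * f - k' * f' = k * (f - f') + (k - k') * f' := by ring
  rw [e]
  refine (abs_add_le _ _).trans ?_
  rw [abs_mul, abs_mul]
  have := abs_nonneg k
  have := abs_nonneg (k - k')
  have := abs_nonneg (f - f')
  have := abs_nonneg f'
  gcongr
  · linarith
  · linarith

lemma prod_bd {k f A B : ℝ} (h1 : |k| ≤ A) (h2 : |f| ≤ B) : |k * f| ≤ A * B := by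
  rw [abs_mul]
  exact mul_le_mul h1 h2 (abs_nonneg _) ((abs_nonneg _).trans h1)

end

section


def Vg (c b : ℝ → ℝ) (t x : ℝ) : ℝ := ∫ τ in (0:ℝ)..t, Gk (t - τ) (x - c τ) * b τ

def uu (p s0 : ℝ) (gp g h : ℝ → ℝ) (t x : ℝ) : ℝ :=
  I0 s0 gp t x + 2 * Vg (fun _ => 0) (fun τ => FF p (h τ)) t x - Vg (ss s0 g) (ff g) t x
    - Vg (fun τ => -ss s0 g τ) (ff g) t x

def AA (p s0 : ℝ) (gp g h : ℝ → ℝ) (t : ℝ) : ℝ :=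
  IX s0 gp t (ss s0 g t) + 2 * Jv (fun _ => 0) (fun τ => FF p (h τ)) t (ss s0 g t)
   - Jv (ss s0 g) (ff g) t (ss s0 g t) - Jv (fun τ => -ss s0 g τ) (ff g) t (ss s0 g t)

lemma bt_w {t τ : ℝ} : bt t τ = (qq τ)⁻¹ ^ 2 * (√(t - τ))⁻¹ := by
  rw [bt, inv_pow, qq_sq]

lemma aw_le {t τ : ℝ} (h : τ ∈ Ioo 0 t) (ht : t ≤ 1) :
    (√(t - τ))⁻¹ * (qq τ)⁻¹ ≤ qq t * bt t τ ∧ (√(t - τ))⁻¹ ≤ qq t * bt t τ := by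
  have hq := qq_pos h.1
  have h1 : (√(t - τ))⁻¹ * (qq τ)⁻¹ ≤ qq t * bt t τ := by
    have : (√(t - τ))⁻¹ * (qq τ)⁻¹ = qq τ * bt t τ := by rw [bt_w]; field_simp
    rw [this]
    exact mul_le_mul_of_nonneg_right (qq_mono h.2.le) (bt_nonneg _ _)
  refine ⟨h1, le_trans ?_ h1⟩
  have : 1 ≤ (qq τ)⁻¹ := (one_le_inv₀ hq).2 (qq_le_one (h.2.le.trans ht))
  exact le_mul_of_one_le_right (by positivity) this

section
variable {K K' L D R t : ℝ} {g g' b b' c c' : ℝ → ℝ}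

lemma dn_of_bd (hc : ContinuousOn b (Ioi 0)) (hb : ∀ t, 0 < t → |b t| ≤ L) : Dn L b := by
  have hL : 0 ≤ L := le_trans (abs_nonneg _) (hb 1 one_pos)
  refine ⟨hc, fun τ hτ => (hb τ hτ.1).trans ?_⟩
  refine le_mul_of_one_le_right hL ?_
  exact (one_le_inv₀ (Real.sqrt_pos.2 hτ.1)).2 (Real.sqrt_le_one.2 hτ.2)

lemma Vg_bd0 (ht : 0 < t) (ht1 : t ≤ 1) (hb : ∀ t, 0 < t → |b t| ≤ L) (x : ℝ) :
    |Vg c b t x| ≤ L * qq t * B0 := by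
  have hL : 0 ≤ L := le_trans (abs_nonneg _) (hb 1 one_pos)
  refine vol_bound ht fun τ hτ => ?_
  have e : |Gk (t - τ) (x - c τ)| ≤ (√(t - τ))⁻¹ := by
    rw [abs_of_nonneg (Gk_nonneg _ _)]; exact Gk_le _ _
  refine (prod_bd e (hb τ hτ.1)).trans ?_
  nlinarith [mul_le_mul_of_nonneg_left (aw_le hτ ht1).2 hL]

lemma Vg_bd1 (ht : 0 < t) (ht1 : t ≤ 1) (hg : GB K g) (x : ℝ) :
    |Vg c (ff g) t x| ≤ K * qq t * B0 := by
  refine vol_bound ht fun τ hτ => ?_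
  have e : |Gk (t - τ) (x - c τ)| ≤ (√(t - τ))⁻¹ := by
    rw [abs_of_nonneg (Gk_nonneg _ _)]; exact Gk_le _ _
  refine (prod_bd e (ff_bd hg hτ.1)).trans ?_
  nlinarith [mul_le_mul_of_nonneg_left (aw_le hτ ht1).1 hg.K0]

lemma Vg_ii (hc : Continuous c) (hb : Dn K b) (ht : 0 < t) (ht1 : t ≤ 1) (x : ℝ) :
    IntervalIntegrable (fun τ => Gk (t - τ) (x - c τ) * b τ) volume 0 t :=
  vol_ii ht (Gkb_cont hc hb) (Gkb_bound hb ht1)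

lemma Vg_diff (hc : Continuous c) (hb : Dn K b) (hc' : Continuous c') (hb' : Dn K' b') {C : ℝ}
    (ht : 0 < t) (ht1 : t ≤ 1) (x x' : ℝ)
    (h : ∀ τ ∈ Ioo 0 t, |Gk (t - τ) (x - c τ) * b τ - Gk (t - τ) (x' - c' τ) * b' τ| ≤ C * bt t τ) :
    |Vg c b t x - Vg c' b' t x'| ≤ C * B0 := by
  unfold Vg
  rw [← intervalIntegral.integral_sub (Vg_ii hc hb ht ht1 x) (Vg_ii hc' hb' ht ht1 x')]
  exact vol_bound ht h

lemma Jv_diff {d d' : ℝ → ℝ} {k k' : ℝ} (hc : Crv k c d) (hb : Dn K b) (hc' : Crv k' c' d') (hb' : Dn K' b') {C : ℝ}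
    (ht : 0 < t) (ht1 : t < 1) (x x' : ℝ)
    (h : ∀ τ ∈ Ioo 0 t, |G1 (t - τ) (x - c τ) * b τ - G1 (t - τ) (x' - c' τ) * b' τ| ≤ C * bt t τ) :
    |Jv c b t x - Jv c' b' t x'| ≤ C * B0 := by
  unfold Jv
  rw [← intervalIntegral.integral_sub (G1f_ii hc hb ht ht1 x) (G1f_ii hc' hb' ht ht1 x')]
  exact vol_bound ht h

lemma qq3_le (h1 : t ≤ 1) : qq t ^ 3 ≤ 1 := pow_le_one₀ (qq_nonneg t) (qq_le_one h1)

lemma ss_D (hg : GB K g) (hg' : GB K g') (hD : ∀ t, 0 < t → |g t - g' t| ≤ D) (s0 : ℝ) (ht : 0 < t) :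
    |ss s0 g t - ss s0 g' t| ≤ 2 * D * qq t ^ 3 := by
  rw [ss_sub hg hg']
  simpa using ss_size (hg.sub hg' hD) 0 ht.le

lemma ss_D1 (hg : GB K g) (hg' : GB K g') (hD : ∀ t, 0 < t → |g t - g' t| ≤ D) (s0 : ℝ) (ht : 0 < t) 
    (ht1 : t ≤ 1) : |ss s0 g t - ss s0 g' t| ≤ 2 * D := by
  have hD0 : 0 ≤ D := (hg.sub hg' hD).K0
  exact (ss_D hg hg' hD s0 ht).trans (mul_le_of_le_one_right (by positivity) (qq3_le ht1))

lemma ff_D (hg : GB K g) (hg' : GB K g') (hD : ∀ t, 0 < t → |g t - g' t| ≤ D) (ht : 0 < t) :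
    |ff g t - ff g' t| ≤ D * (qq t)⁻¹ := by
  have := ff_bd (hg.sub hg' hD) ht
  have e : ff (fun τ => g τ - g' τ) t = ff g t - ff g' t := by unfold ff; ring
  rwa [e] at this

end
section
variable {K L D R t δ s0 : ℝ} {g g' b b' : ℝ → ℝ}

/-- data for the estimates -/
structure Est (K D R δ s0 : ℝ) (g g' : ℝ → ℝ) : Prop where
  R0 : 0 < R
  R1 : R < 1
  hδ : 0 < δ
  hg : GB K g
  hg' : GB K g'
  hs : ∀ t ∈ Ioc 0 R, δ ≤ ss s0 g t
  hs' : ∀ t ∈ Ioc 0 R, δ ≤ ss s0 g' t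
  hD : ∀ t, 0 < t → |g t - g' t| ≤ D

lemma Est.D0 (E : Est K D R δ s0 g g') : 0 ≤ D := (E.hg.sub E.hg' E.hD).K0

lemma Est.V2 (E : Est K D R δ s0 g g') (ht : t ∈ Ioc 0 R) :
    |Vg (ss s0 g) (ff g) t 0 - Vg (ss s0 g') (ff g') t 0| ≤ D * (1 + 4 * K / δ) * qq t * B0 := by
  have ht1 : t ≤ 1 := ht.2.trans E.R1.le
  refine Vg_diff (ss_cont E.hg s0) (ff_dn E.hg) (ss_cont E.hg' s0) (ff_dn E.hg') ht.1 ht1 0 0 fun τ hτ => ?_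
  have hτR : τ ∈ Ioc 0 R := ⟨hτ.1, hτ.2.le.trans ht.2⟩
  have hr : 0 < t - τ := sub_pos.2 hτ.2
  rw [zero_sub, zero_sub, Gk_neg, Gk_neg]
  have e : |Gk (t - τ) (ss s0 g τ)| ≤ (√(t - τ))⁻¹ := by
    rw [abs_of_nonneg (Gk_nonneg _ _)]; exact Gk_le _ _
  have hδ := E.hδ
  refine (prod_diff e (ff_D E.hg E.hg' E.hD hτ.1) ((Gk_lip_far hr E.hδ (E.hs τ hτR) (E.hs' τ hτR)).trans
    (mul_le_mul_of_nonneg_left (ss_D1 E.hg E.hg' E.hD s0 hτ.1 (hτ.2.le.trans ht1)) (by positivity)))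
    (ff_bd E.hg' hτ.1)).trans ?_
  have hC : 0 ≤ D * (1 + 4 * K / δ) := by
    have := E.D0; have := E.hg.K0; positivity
  have := mul_le_mul_of_nonneg_left (aw_le hτ ht1).1 hC
  refine le_trans (le_of_eq ?_) (this.trans (le_of_eq ?_)) <;> ring

lemma Est.V3 (E : Est K D R δ s0 g g') (ht : t ∈ Ioc 0 R) :
    |Vg (fun τ => -ss s0 g τ) (ff g) t 0 - Vg (fun τ => -ss s0 g' τ) (ff g') t 0| ≤ D * (1 + 4 * K / δ) * qq t * B0 := by
  have e : ∀ g, Vg (fun τ => -ss s0 g τ) (ff g) t 0 = Vg (ss s0 g) (ff g) t 0 := by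
    intro g; unfold Vg; simp only [zero_sub, neg_neg, Gk_neg]
  rw [e, e]; exact E.V2 ht

lemma Vg_lin (hb : ContinuousOn b (Ioi 0)) (hb1 : ∀ t, 0 < t → |b t| ≤ L) (hb' : ContinuousOn b' (Ioi 0)) 
    (hb1' : ∀ t, 0 < t → |b' t| ≤ L) {e : ℝ} (he : ∀ t, 0 < t → |b t - b' t| ≤ e) {x : ℝ}
    (ht : 0 < t) (ht1 : t ≤ 1) :
    |Vg (fun _ => 0) b t x - Vg (fun _ => 0) b' t x| ≤ e * qq t * B0 := by
  have : Vg (fun _ => 0) b t x - Vg (fun _ => 0) b' t x = Vg (fun _ => 0) (fun τ => b τ - b' τ) t x := by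
    unfold Vg
    rw [← intervalIntegral.integral_sub (Vg_ii continuous_const (dn_of_bd hb hb1) ht ht1 x) 
      (Vg_ii continuous_const (dn_of_bd hb' hb1') ht ht1 x)]
    congr 1; ext τ; ring
  rw [this]
  exact Vg_bd0 ht ht1 he x

lemma a_le_bt {τ : ℝ} (hτ : τ ∈ Ioo 0 t) (ht1 : t ≤ 1) :
    (√(t - τ))⁻¹ * (qq τ)⁻¹ ≤ bt t τ ∧ (√(t - τ))⁻¹ ≤ bt t τ := by
  have h := aw_le hτ ht1
  have : qq t * bt t τ ≤ bt t τ := mul_le_of_le_one_left (bt_nonneg _ _) (qq_le_one ht1)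
  exact ⟨h.1.trans this, h.2.trans this⟩

lemma Est.J1 (E : Est K D R δ s0 g g') (hb : ∀ t, 0 < t → |b t| ≤ L) (ht : t ∈ Ioc 0 R) :
    |Jv (fun _ => 0) b t (ss s0 g t)| ≤ 2 / δ * L * B0 := by
  have hL : 0 ≤ L := le_trans (abs_nonneg _) (hb 1 one_pos)
  have hδ := E.hδ
  refine vol_bound ht.1 fun τ hτ => ?_
  refine (prod_bd (G1_far (sub_pos.2 hτ.2) E.hδ (by simpa using E.hs t ht)) (hb τ hτ.1)).trans ?_
  have := mul_le_mul_of_nonneg_left (a_le_bt hτ (ht.2.trans E.R1.le)).2 (by positivity : 0 ≤ 2 / δ * L)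
  linarith

lemma Est.J1d (E : Est K D R δ s0 g g') (hb : ContinuousOn b (Ioi 0)) (hb1 : ∀ t, 0 < t → |b t| ≤ L) (hb' : ContinuousOn b' (Ioi 0)) 
    (hb1' : ∀ t, 0 < t → |b' t| ≤ L) (he : ∀ t, 0 < t → |b t - b' t| ≤ L * D) (ht : t ∈ Ioc 0 R) :
    |Jv (fun _ => 0) b t (ss s0 g t) - Jv (fun _ => 0) b' t (ss s0 g' t)| ≤ 
      D * (2 / δ * L + 24 / δ ^ 2 * L) * B0 := by
  have hL : 0 ≤ L := le_trans (abs_nonneg _) (hb1 1 one_pos)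
  have hδ := E.hδ
  have hD := E.D0
  refine Jv_diff zero_crv (dn_of_bd hb hb1) zero_crv (dn_of_bd hb' hb1') ht.1 (ht.2.trans_lt E.R1) _ _ fun τ hτ => ?_
  have hr : 0 < t - τ := sub_pos.2 hτ.2
  have h1 := E.hs t ht
  have h2 := E.hs' t ht
  rw [sub_zero, sub_zero]
  refine (prod_diff (G1_far hr E.hδ h1) (he τ hτ.1) ((G1_lip_far hr E.hδ h1 h2).trans
    (mul_le_mul_of_nonneg_left (ss_D1 E.hg E.hg' E.hD s0 ht.1 (ht.2.trans E.R1.le)) (by positivity)))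
    (hb1' τ hτ.1)).trans ?_
  have := mul_le_mul_of_nonneg_left (a_le_bt hτ (ht.2.trans E.R1.le)).2 
    (by positivity : 0 ≤ D * (2 / δ * L + 24 / δ ^ 2 * L))
  refine le_trans (le_of_eq ?_) this; ring

lemma Est.J2 (E : Est K D R δ s0 g g') (ht : t ∈ Ioc 0 R) :
    |Jv (fun τ => -ss s0 g τ) (ff g) t (ss s0 g t)| ≤ 2 / δ * K * B0 := by
  have hK := E.hg.K0
  have hδ := E.hδ
  refine vol_bound ht.1 fun τ hτ => ?_
  have h1 := E.hs t ht
  have h2 := E.hs τ ⟨hτ.1, hτ.2.le.trans ht.2⟩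
  refine (prod_bd (G1_far (sub_pos.2 hτ.2) E.hδ (by linarith)) (ff_bd E.hg hτ.1)).trans ?_
  have := mul_le_mul_of_nonneg_left (a_le_bt hτ (ht.2.trans E.R1.le)).1 (by positivity : 0 ≤ 2 / δ * K)
  linarith

lemma Est.J2d (E : Est K D R δ s0 g g') (ht : t ∈ Ioc 0 R) :
    |Jv (fun τ => -ss s0 g τ) (ff g) t (ss s0 g t) - Jv (fun τ => -ss s0 g' τ) (ff g') t (ss s0 g' t)|
     ≤ D * (2 / δ + 48 / δ ^ 2 * K) * B0 := by
  have hK := E.hg.K0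
  have hδ := E.hδ
  have hD := E.D0
  refine Jv_diff (ss_crv_neg E.hg s0) (ff_dn E.hg) (ss_crv_neg E.hg' s0) (ff_dn E.hg') ht.1 (ht.2.trans_lt E.R1) _ _ fun τ hτ => ?_
  have hr : 0 < t - τ := sub_pos.2 hτ.2
  have hτR : τ ∈ Ioc 0 R := ⟨hτ.1, hτ.2.le.trans ht.2⟩
  have h1 := E.hs t ht
  have h2 := E.hs τ hτR
  have h1' := E.hs' t ht
  have h2' := E.hs' τ hτR
  have d1 := ss_D1 E.hg E.hg' E.hD s0 ht.1 (ht.2.trans E.R1.le)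
  have d2 := ss_D1 E.hg E.hg' E.hD s0 hτ.1 (hτR.2.trans E.R1.le)
  have d3 : |(ss s0 g t - -ss s0 g τ) - (ss s0 g' t - -ss s0 g' τ)| ≤ 4 * D := by
    rw [abs_le] at *; constructor <;> linarith
  refine (prod_diff (G1_far hr E.hδ (by linarith)) (ff_D E.hg E.hg' E.hD hτ.1) ((G1_lip_far hr E.hδ (by linarith) (by linarith)).trans
    (mul_le_mul_of_nonneg_left d3 (by positivity)))
    (ff_bd E.hg' hτ.1)).trans ?_
  have := mul_le_mul_of_nonneg_left (a_le_bt hτ (ht.2.trans E.R1.le)).1 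
    (by positivity : 0 ≤ D * (2 / δ + 48 / δ ^ 2 * K))
  refine le_trans (le_of_eq ?_) this; ring

lemma G1_near_curve (hg : GB K g) {τ : ℝ} (hτ : τ ∈ Ioo 0 t) (s0 : ℝ) :
    |G1 (t - τ) (ss s0 g t - ss s0 g τ)| ≤ K * (qq τ)⁻¹ * (√(t - τ))⁻¹ := by
  have hr : 0 < t - τ := sub_pos.2 hτ.2
  refine (abs_G1_le hr _).trans (mul_le_mul_of_nonneg_right ?_ (by positivity))
  rw [div_le_iff₀ hr]
  exact ss_lip hg s0 hτ.1 hτ.2.le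

lemma Est.J3 (E : Est K D R δ s0 g g') (ht : t ∈ Ioc 0 R) :
    |Jv (ss s0 g) (ff g) t (ss s0 g t)| ≤ K ^ 2 * B0 := by
  refine vol_bound ht.1 fun τ hτ => ?_
  refine (prod_bd (G1_near_curve E.hg hτ s0) (ff_bd E.hg hτ.1)).trans (le_of_eq ?_)
  rw [bt_w]; ring

lemma Est.J3d (E : Est K D R δ s0 g g') (ht : t ∈ Ioc 0 R) :
    |Jv (ss s0 g) (ff g) t (ss s0 g t) - Jv (ss s0 g') (ff g') t (ss s0 g' t)| ≤ D * (3 * K) * B0 := by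
  refine Jv_diff (ss_crv E.hg s0) (ff_dn E.hg) (ss_crv E.hg' s0) (ff_dn E.hg') ht.1 (ht.2.trans_lt E.R1) _ _ fun τ hτ => ?_
  have hr : 0 < t - τ := sub_pos.2 hτ.2
  have d3 : |(ss s0 g t - ss s0 g τ) - (ss s0 g' t - ss s0 g' τ)| ≤ D * (qq τ)⁻¹ * (t - τ) := by
    have := ss_lip (E.hg.sub E.hg' E.hD) 0 hτ.1 hτ.2.le
    rw [← ss_sub E.hg E.hg' s0, ← ss_sub E.hg E.hg' s0] at this
    refine le_trans (le_of_eq ?_) this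
    congr 1; ring
  refine (prod_diff (G1_near_curve E.hg hτ s0) (ff_D E.hg E.hg' E.hD hτ.1) ((G1_lip hr _ _).trans
    (mul_le_mul_of_nonneg_left d3 (by positivity)))
    (ff_bd E.hg' hτ.1)).trans (le_of_eq ?_)
  rw [bt_w]; field_simp; ring

end

end

section


section
variable {p M K H L R t s0 : ℝ} {φ gp g h : ℝ → ℝ}

lemma Adm.GB (a : Adm K H g h) : GB K g := ⟨a.gc, a.gb⟩

lemma Adm.Fc (a : Adm K H g h) (hp : 1 < p) : ContinuousOn (fun τ => FF p (h τ)) (Ioi 0) :=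
  (FF_cont hp).comp_continuousOn a.hc

lemma Jv_eq (c f : ℝ → ℝ) (t x : ℝ) : Jv c f t x = Jreg c f t x - f t * Hv (x - c t) := by
  unfold Jreg; ring

lemma Vg_cont {k : ℝ} {c b : ℝ → ℝ} (hc : Continuous c) (hb : Dn k b) {t0 x0 : ℝ} (h0 : 0 < t0)
    (h1 : t0 < 1) : ContinuousAt (fun q : ℝ × ℝ => Vg c b q.1 q.2) (t0, x0) := Gkb_vol hc hb h0 h1

lemma uu_cont (i : Ini M s0 φ gp) (a : Adm K H g h) {L : ℝ} (hF : Dn L fun τ => FF p (h τ)) {x : ℝ}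
    (h0 : 0 < t) (h1 : t < 1) : ContinuousAt (fun q : ℝ × ℝ => uu p s0 gp g h q.1 q.2) (t, x) := by
  unfold uu
  refine ContinuousAt.sub (ContinuousAt.sub (ContinuousAt.add (i.I0_cont h0.le) ?_) ?_) ?_
  · exact continuousAt_const.mul (Vg_cont continuous_const hF h0 h1)
  · exact Vg_cont (ss_cont a.GB s0) (ff_dn a.GB) h0 h1
  · exact Vg_cont (ss_cont a.GB s0).neg (ff_dn a.GB) h0 h1

lemma comp2 {k : ℝ → ℝ → ℝ} {s : ℝ → ℝ} {t : ℝ} (hk : ContinuousAt (fun q : ℝ × ℝ => k q.1 q.2) (t, s t))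
    (hs : ContinuousAt s t) : ContinuousAt (fun t => k t (s t)) t :=
  ContinuousAt.comp (g := fun q : ℝ × ℝ => k q.1 q.2) (f := fun t => (t, s t)) hk (continuousAt_id.prodMk hs)

lemma Hv_one {z : ℝ} (h : 0 < z) : Hv z = 1 := by simp [Hv, h]

lemma AA_cont (i : Ini M s0 φ gp) (a : Adm K H g h) {L : ℝ} (hF : Dn L fun τ => FF p (h τ))
    (h0 : 0 < t) (h1 : t < 1) (hs : 0 < ss s0 g t) : ContinuousAt (fun t => AA p s0 gp g h t) t := by
  have sc := (ss_cont a.GB s0)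
  have fc : ContinuousAt (ff g) t := (ff_dn a.GB).cAt h0
  have e : (fun t => AA p s0 gp g h t) =ᶠ[𝓝 t] fun t => IX s0 gp t (ss s0 g t) 
      + 2 * (Jreg (fun _ => 0) (fun τ => FF p (h τ)) t (ss s0 g t) - FF p (h t) * 1)
   - (Jreg (ss s0 g) (ff g) t (ss s0 g t) - ff g t * (1/2))
     - (Jreg (fun τ => -ss s0 g τ) (ff g) t (ss s0 g t) - ff g t * 1) := by
    filter_upwards [sc.continuousAt.eventually_const_lt hs] with t ht
    unfold AA
    rw [Jv_eq, Jv_eq, Jv_eq, Hv_one (by simpa using ht), sub_self, Hv_zero, Hv_one (by linarith)]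
  refine ContinuousAt.congr ?_ e.symm
  refine ContinuousAt.sub (ContinuousAt.sub (ContinuousAt.add ?_ ?_) ?_) ?_
  · exact comp2 (i.IX_cont h0) sc.continuousAt
  · refine continuousAt_const.mul (ContinuousAt.sub ?_ ((hF.cAt h0).mul continuousAt_const))
    exact comp2 (Jreg_cont zero_crv hF h0 h1 _) sc.continuousAt
  · refine ContinuousAt.sub ?_ (fc.mul continuousAt_const)
    exact comp2 (Jreg_cont (ss_crv a.GB s0) (ff_dn a.GB) h0 h1 _) sc.continuousAt
  · refine ContinuousAt.sub ?_ (fc.mul continuousAt_const)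
    exact comp2 (Jreg_cont (ss_crv_neg a.GB s0) (ff_dn a.GB) h0 h1 _) sc.continuousAt

lemma uu_bd (a : GB K g) (hF : ∀ t, 0 < t → |FF p (h t)| ≤ L) {x : ℝ}
    (h0 : 0 < t) (h1 : t ≤ 1) : 
    |uu p s0 gp g h t x - I0 s0 gp t x| ≤ qq t * ((2 * L + 2 * K) * B0) := by
  have e1 := Vg_bd0 (c := fun _ => 0) h0 h1 hF x
  have e2 := Vg_bd1 (c := ss s0 g) h0 h1 a x
  have e3 := Vg_bd1 (c := fun τ => - ss s0 g τ) h0 h1 a x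
  unfold uu
  rw [abs_le] at *
  constructor <;> linarith

end

set_option maxHeartbeats 2000000 in
lemma exist_fix {p : ℝ} (hp : 1 < p) {M : ℝ} (hM : 0 < M) : ∃ R K H L δ : ℝ, 0 < R ∧ R < 1 ∧ 0 < δ ∧
    ∀ s0 φ gp, Ini M s0 φ gp → ∃ g h, Adm K H g h ∧ (∀ t, 0 < t → |FF p (h t)| ≤ L) ∧
      (∀ t ∈ Ioc 0 R, g t = qq t * (-2 * AA p s0 gp g h t) ∧ h t = uu p s0 gp g h t 0) ∧
      (∀ t ∈ Ioc 0 R, δ ≤ ss s0 g t ∧ ss s0 g t ≤ M + 1) ∧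
      ∀ t ∈ Ioc 0 R, ∀ x, |uu p s0 gp g h t x| ≤ M ^ ((3:ℝ)/2) + 1 := by
  set K : ℝ := 2 * (M ^ 2 + 1) + 1 with hK
  set H : ℝ := M ^ ((3:ℝ)/2) + 1 with hH
  set δ : ℝ := 1 / (2 * M) with hδd
  have hK0 : 0 < K := by positivity
  have hH0 : 0 < H := by positivity
  have hδ : 0 < δ := by positivity
  obtain ⟨L, hL0, hLb, hLl⟩ := FF_bounds hp H hH0.le
  have hB := B0_nonneg
  set C1 := (2 / δ * L * 2 + 2 / δ * K + K ^ 2) * B0 with hC1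
  set C2 := 2 * (M ^ 2 + 1) + ((2 / δ * L + 24 / δ ^ 2 * L) * 2 + (2 / δ + 48 / δ ^ 2 * K) + 3 * K) * B0 with hC2
  set C3 := (2 * L + 2 * K) * B0 with hC3
  set C4 := (2 * L + 2 * (1 + 4 * K / δ)) * B0 with hC4
  have hC10 : 0 ≤ C1 := by positivity
  have hC20 : 0 ≤ C2 := by positivity
  have hC30 : 0 ≤ C3 := by positivity
  have hC40 : 0 ≤ C4 := by positivity
  set W := 2 + 2 * K / δ + 2 * K + 2 * C1 + 4 * C2 + C3 + 2 * C4 with hW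
  have hKd : 0 ≤ 2 * K / δ := by positivity
  have hWp : 2 ≤ W := by linarith
  set ρ := W⁻¹ with hρ
  have hρ0 : 0 < ρ := by positivity
  have hρW : ρ * W = 1 := inv_mul_cancel₀ (by linarith)
  have hρ1 : ρ ≤ 1 / 2 := by nlinarith
  have mk : ∀ c, c ≤ W → ρ * c ≤ 1 := fun c hc => by nlinarith
  set R := ρ ^ 4 with hR
  have hR0 : 0 < R := by positivity
  have hR1 : R < 1 := pow_lt_one₀ hρ0.le (by linarith) (by norm_num)
  have hqR : qq R = ρ := by
    have h4 := qq_four hR0.le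
    exact (pow_left_inj₀ (qq_nonneg R) hρ0.le (by norm_num)).1 h4
  have hq : ∀ t ∈ Ioc 0 R, 0 < qq t ∧ qq t ≤ ρ ∧ qq t ^ 3 ≤ ρ := fun t ht => by
    have a1 := qq_pos ht.1
    have a2 : qq t ≤ ρ := hqR ▸ qq_mono ht.2
    refine ⟨a1, a2, ?_⟩
    calc qq t ^ 3 ≤ ρ ^ 3 := by gcongr
      _ ≤ ρ ^ 1 := pow_le_pow_of_le_one hρ0.le (by linarith) (by norm_num)
      _ = ρ := pow_one _
  refine ⟨R, K, H, L, δ, hR0, hR1, hδ, fun s0 φ gp i => ?_⟩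
  have hs : ∀ g, GB K g → ∀ t ∈ Ioc 0 R, δ ≤ ss s0 g t ∧ ss s0 g t ≤ M + 1 := by
    intro g hg t ht
    have h1 := ss_size hg s0 ht.1.le
    have h2 : 2 * K * qq t ^ 3 ≤ 2 * K * ρ := by gcongr; exact (hq t ht).2.2
    have h3 : 2 * K * ρ ≤ 1 := by linarith [mk (2 * K) (by linarith)]
    have h4 : 2 * K * ρ ≤ δ := by
      have := mk (2 * K / δ) (by linarith)
      rw [← mul_div_assoc, div_le_one hδ] at this; linarith
    have h5 : 2 * δ ≤ s0 := by
      have h := i.inv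
      have := i.pos
      rw [hδd, inv_eq_one_div, div_le_iff₀ this] at *
      rw [mul_one_div, div_le_iff₀ (by positivity)]; linarith
    have h6 := i.le
    rw [abs_le] at h1
    constructor <;> linarith
  have hest : ∀ g h g' h' D, Adm K H g h → Adm K H g' h' → (∀ t, 0 < t → |g t - g' t| ≤ D) →
      Est K D R δ s0 g g' := fun g h g' h' D a a' hD => ⟨hR0, hR1, hδ, a.GB, a'.GB, 
        fun t ht => (hs g a.GB t ht).1, fun t ht => (hs g' a'.GB t ht).1, hD⟩
  have hFb : ∀ g h, Adm K H g h → ∀ t, 0 < t → |FF p (h t)| ≤ L := fun g h a t ht => hLb _ (a.hb t ht)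
  have hFd : ∀ g h, Adm K H g h → Dn L fun τ => FF p (h τ) := fun g h a => dn_of_bd (a.Fc hp) (hFb g h a)
  have hub : ∀ g h, Adm K H g h → ∀ t ∈ Ioc 0 R, ∀ x, |uu p s0 gp g h t x| ≤ H := by
    intro g h a t ht x
    have h1 := uu_bd (s0 := s0) (gp := gp) (x := x) a.GB (hFb g h a) ht.1 (ht.2.trans hR1.le)
    have h2 := i.I0_bd t x
    have h3 : qq t * C3 ≤ ρ * C3 := mul_le_mul_of_nonneg_right (hq t ht).2.1 hC30
    have h4 := mk C3 (by linarith)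
    rw [abs_le] at *
    constructor <;> linarith
  suffices hfx : ∃ g h, Adm K H g h ∧ ∀ t ∈ Ioc 0 R, g t = qq t * (-2 * AA p s0 gp g h t) ∧ h t = uu p s0 gp g h t 0 by
    obtain ⟨g, h, a, hfix⟩ := hfx
    exact ⟨g, h, a, hFb g h a, hfix, hs g a.GB, hub g h a⟩
  refine fixed_pt hK0.le hH0.le hR0 (fun g h t => qq t * (-2 * AA p s0 gp g h t))
    (fun g h t => uu p s0 gp g h t 0) ?_ ?_ ?_
  · intro g h a
    constructor
    · intro t ht
      apply ContinuousAt.continuousWithinAt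
      exact qq_cont.continuousAt.mul (continuousAt_const.mul (AA_cont i a (hFd g h a) ht.1 (ht.2.trans_lt hR1)
        (hδ.trans_le (hs g a.GB t ht).1)))
    · intro t ht
      apply ContinuousAt.continuousWithinAt
      exact ContinuousAt.comp (g := fun q : ℝ × ℝ => uu p s0 gp g h q.1 q.2) (f := fun t => (t, (0:ℝ)))
        (uu_cont i a (hFd g h a) ht.1 (ht.2.trans_lt hR1)) (by fun_prop)
  · intro g h a t ht
    refine ⟨?_, hub g h a t ht 0⟩
    have E := hest g h g h 0 a a (fun t _ => by simp)
    obtain ⟨q0, q1, q3⟩ := hq t ht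
    have e0 := i.IX_bd ht.1 (ss s0 g t)
    have e1 := E.J1 (hFb g h a) ht
    have e2 := E.J2 ht
    have e3 := E.J3 ht
    have hA : |AA p s0 gp g h t| ≤ (M ^ 2 + 1) * (qq t)⁻¹ + C1 := by
      unfold AA
      rw [hC1]
      rw [abs_le] at *
      constructor <;> linarith
    rw [abs_mul, abs_mul, abs_of_pos q0]
    have : |(-2:ℝ)| = 2 := by norm_num
    rw [this]
    calc qq t * (2 * |AA p s0 gp g h t|) ≤ qq t * (2 * ((M ^ 2 + 1) * (qq t)⁻¹ + C1)) := by gcongr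
      _ = 2 * (M ^ 2 + 1) + qq t * (2 * C1) := by field_simp
      _ ≤ 2 * (M ^ 2 + 1) + ρ * (2 * C1) := by gcongr
      _ ≤ K := by rw [hK]; linarith [mk (2 * C1) (by linarith)]
  · intro g h g' h' D a a' hD t ht
    have E := hest g h g' h' D a a' (fun t ht => (hD t ht).1)
    have hD0 := E.D0
    have hFD : ∀ t, 0 < t → |FF p (h t) - FF p (h' t)| ≤ L * D := fun t ht =>
      (hLl _ _ (a.hb t ht) (a'.hb t ht)).trans (mul_le_mul_of_nonneg_left (hD t ht).2 hL0)
    obtain ⟨q0, q1, q3⟩ := hq t ht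
    constructor
    · have e0 := i.IX_lip ht.1 (ss s0 g t) (ss s0 g' t)
      have e0' : |IX s0 gp t (ss s0 g t) - IX s0 gp t (ss s0 g' t)| ≤ 2 * (M ^ 2 + 1) * D := by
        refine e0.trans ((mul_le_mul_of_nonneg_left (ss_D E.hg E.hg' E.hD s0 ht.1) (by positivity)).trans
          (le_of_eq ?_))
        field_simp
      have e1 := E.J1d (a.Fc hp) (hFb g h a) (a'.Fc hp) (hFb g' h' a') hFD ht
      have e2 := E.J2d ht
      have e3 := E.J3d ht
      have hA : |AA p s0 gp g h t - AA p s0 gp g' h' t| ≤ C2 * D := by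
        unfold AA
        rw [hC2]
        rw [abs_le] at *
        constructor <;> linarith
      rw [← mul_sub, ← mul_sub, abs_mul, abs_mul, abs_of_pos q0]
      have : |(-2:ℝ)| = 2 := by norm_num
      rw [this]
      calc qq t * (2 * |AA p s0 gp g h t - AA p s0 gp g' h' t|) ≤ ρ * (2 * (C2 * D)) := by gcongr
        _ = (ρ * (4 * C2)) * D / 2 := by ring
        _ ≤ 1 * D / 2 := by gcongr; exact mk _ (by linarith)
        _ = D / 2 := by ring
    · have e1 := Vg_lin (x := 0) (a.Fc hp) (hFb g h a) (a'.Fc hp) (hFb g' h' a') hFD ht.1 (ht.2.trans hR1.le)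
      have e2 := E.V2 ht
      have e3 := E.V3 ht
      have hA : |uu p s0 gp g h t 0 - uu p s0 gp g' h' t 0| ≤ qq t * (C4 * D) := by
        unfold uu
        rw [hC4]
        rw [abs_le] at *
        constructor <;> linarith
      calc _ ≤ qq t * (C4 * D) := hA
        _ ≤ ρ * (C4 * D) := by gcongr
        _ = (ρ * (2 * C4)) * D / 2 := by ring
        _ ≤ 1 * D / 2 := by gcongr; exact mk _ (by linarith)
        _ = D / 2 := by ring

end

section


def Kv (c f : ℝ → ℝ) (t x : ℝ) : ℝ := ∫ τ in (0:ℝ)..t, G2 (t - τ) (x - c τ) * f τ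

lemma trunc {k : ℝ → ℝ → ℝ} (hk : ∀ r ≤ 0, ∀ z, k r z = 0) (c b : ℝ → ℝ) {t : ℝ} (h0 : 0 < t) (h1 : t < 1)
    (x : ℝ) : ∫ τ in (0:ℝ)..t, k (t - τ) (x - c τ) * b τ = Vp k 1 (fun τ => τ) c b t x := by
  unfold Vp
  rw [intervalIntegral.integral_of_le h0.le, intervalIntegral.integral_of_le zero_le_one]
  symm
  refine setIntegral_eq_of_subset_of_forall_sdiff_eq_zero measurableSet_Ioc (Ioc_subset_Ioc_right h1.le) ?_
  intro τ hτ
  have : t < τ := by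
    by_contra hh; exact hτ.2 ⟨hτ.1.1, not_lt.1 hh⟩
  rw [hk _ (by linarith), zero_mul]

lemma openO : IsOpen {z : ℝ × ℝ | z.1 ≠ 0 ∨ z.2 ≠ 0} :=
  (isOpen_ne_fun continuous_fst continuous_const).union (isOpen_ne_fun continuous_snd continuous_const)

section
variable {k : ℝ} {c b : ℝ → ℝ} {t x : ℝ}

lemma offc (h : x ≠ c t) : ∀ a ∈ Icc (0:ℝ) 1, (t - a, x - c a) ∈ {z : ℝ × ℝ | z.1 ≠ 0 ∨ z.2 ≠ 0} := by
  intro a _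
  by_cases hta : t = a
  · right; rw [← hta]; exact sub_ne_zero.2 h
  · left; exact sub_ne_zero.2 hta

lemma Vg_x (hc : Continuous c) (hb : Dn k b) (h0 : 0 < t) (h1 : t < 1) (hx : x ≠ c t) :
    HasDerivAt (Vg c b t) (Jv c b t x) x := by
  have e : Vg c b t = fun x => Vp Gk 1 (fun τ => τ) c b t x :=
    funext fun x => trunc (fun r hr z => Gk_nonpos hr z) c b h0 h1 x
  have e' : Jv c b t x = Vp G1 1 (fun τ => τ) c b t x := trunc (fun r hr z => G1_nonpos hr z) c b h0 h1 x
  rw [e, e']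
  exact Vp_deriv_x zero_le_one continuous_id hc (hb.ii zero_le_one le_rfl) openO
    (fun z hz => continuousAt_Gk hz) (fun z hz => continuousAt_G1 hz) (fun z _ => hasDerivAt_Gk_z _ _) (offc hx)

lemma Jv_x (hc : Continuous c) (hb : Dn k b) (h0 : 0 < t) (h1 : t < 1) (hx : x ≠ c t) :
    HasDerivAt (Jv c b t) (Kv c b t x) x := by
  have e : Jv c b t = fun x => Vp G1 1 (fun τ => τ) c b t x :=
    funext fun x => trunc (fun r hr z => G1_nonpos hr z) c b h0 h1 x
  have e' : Kv c b t x = Vp G2 1 (fun τ => τ) c b t x := trunc (fun r hr z => G2_nonpos hr z) c b h0 h1 x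
  rw [e, e']
  exact Vp_deriv_x zero_le_one continuous_id hc (hb.ii zero_le_one le_rfl) openO
    (fun z hz => continuousAt_G1 hz) (fun z hz => continuousAt_G2 hz) (fun z _ => hasDerivAt_G1_z _ _) (offc hx)

lemma Vg_t (hc : Continuous c) (hb : Dn k b) (h0 : 0 < t) (h1 : t < 1) (hx : x ≠ c t) :
    HasDerivAt (fun t => Vg c b t x) (Kv c b t x) t := by
  have e' : Kv c b t x = Vp G2 1 (fun τ => τ) c b t x := trunc (fun r hr z => G2_nonpos hr z) c b h0 h1 x
  rw [e']
  refine HasDerivAt.congr_of_eventuallyEq (Vp_deriv_t (k := Gk) zero_le_one continuous_id hc (hb.ii zero_le_one le_rfl) openO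
    (fun z hz => continuousAt_Gk hz) (fun z hz => continuousAt_G2 hz) (fun z hz => hasDerivAt_Gk_r hz) (offc hx)) ?_
  filter_upwards [Ioo_mem_nhds h0 h1] with t ht
  exact trunc (fun r hr z => Gk_nonpos hr z) c b ht.1 ht.2 x

lemma Kv_cont (hc : Continuous c) (hb : Dn k b) (h0 : 0 < t) (h1 : t < 1) (hx : x ≠ c t) :
    ContinuousAt (fun q : ℝ × ℝ => Kv c b q.1 q.2) (t, x) := by
  refine ContinuousAt.congr (Vp_cont (k := G2) zero_le_one continuous_id hc (hb.ii zero_le_one le_rfl) openO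
    (fun z hz => continuousAt_G2 hz) (offc hx)) ?_
  have : ∀ᶠ q : ℝ × ℝ in 𝓝 (t, x), q.1 ∈ Ioo (0:ℝ) 1 := continuousAt_fst.eventually_mem (Ioo_mem_nhds h0 h1)
  filter_upwards [this] with q hq
  exact (trunc (fun r hr z => G2_nonpos hr z) c b hq.1 hq.2 q.2).symm
end

def ux (p s0 : ℝ) (gp g h : ℝ → ℝ) (t x : ℝ) : ℝ :=
  IX s0 gp t x + 2 * Jv (fun _ => 0) (fun τ => FF p (h τ)) t x - Jv (ss s0 g) (ff g) t x
    - Jv (fun τ => -ss s0 g τ) (ff g) t x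
def uxx (p s0 : ℝ) (gp g h : ℝ → ℝ) (t x : ℝ) : ℝ :=
  IXX s0 gp t x + 2 * Kv (fun _ => 0) (fun τ => FF p (h τ)) t x - Kv (ss s0 g) (ff g) t x
    - Kv (fun τ => -ss s0 g τ) (ff g) t x
def Wr (p s0 : ℝ) (gp g h : ℝ → ℝ) (t x : ℝ) : ℝ :=
  IX s0 gp t x + 2 * Jreg (fun _ => 0) (fun τ => FF p (h τ)) t x - 2 * FF p (h t) - Jreg (ss s0 g) (ff g) t x
    - Jreg (fun τ => -ss s0 g τ) (ff g) t x + ff g t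

structure Sol (p M K H L R δ s0 : ℝ) (φ gp g h : ℝ → ℝ) : Prop where
  hp : 1 < p
  R0 : 0 < R
  R1 : R < 1
  hδ : 0 < δ
  i : Ini M s0 φ gp
  a : Adm K H g h
  Fb : ∀ t, 0 < t → |FF p (h t)| ≤ L
  fix : ∀ t ∈ Ioc 0 R, g t = qq t * (-2 * AA p s0 gp g h t) ∧ h t = uu p s0 gp g h t 0
  sb : ∀ t ∈ Ioc 0 R, δ ≤ ss s0 g t ∧ ss s0 g t ≤ M + 1
  ub : ∀ t ∈ Ioc 0 R, ∀ x, |uu p s0 gp g h t x| ≤ M ^ ((3:ℝ)/2) + 1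

section
variable {p M K H L R δ s0 : ℝ} {φ gp g h : ℝ → ℝ} {t x : ℝ} (S : Sol p M K H L R δ s0 φ gp g h)
include S

lemma Sol.Fd : Dn L fun τ => FF p (h τ) := dn_of_bd (S.a.Fc S.hp) S.Fb
lemma Sol.fd : Dn K (ff g) := ff_dn S.a.GB
lemma Sol.sc : Continuous (ss s0 g) := ss_cont S.a.GB s0
lemma Sol.t1 (ht : t ∈ Ioc 0 R) : t < 1 := ht.2.trans_lt S.R1
lemma Sol.spos (ht : t ∈ Ioc 0 R) : 0 < ss s0 g t := S.hδ.trans_le (S.sb t ht).1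

lemma Sol.dx (ht : t ∈ Ioc 0 R) (hx : 0 < x) (hxs : x ≠ ss s0 g t) :
    HasDerivAt (uu p s0 gp g h t) (ux p s0 gp g h t x) x := by
  have := S.spos ht
  exact (((S.i.I0_x ht.1).add ((Vg_x continuous_const S.Fd ht.1 (S.t1 ht) hx.ne').const_mul 2)).sub
    (Vg_x S.sc S.fd ht.1 (S.t1 ht) hxs)).sub
    (Vg_x S.sc.neg S.fd ht.1 (S.t1 ht) (by linarith))

lemma Sol.dxx (ht : t ∈ Ioc 0 R) (hx : 0 < x) (hxs : x ≠ ss s0 g t) :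
    HasDerivAt (ux p s0 gp g h t) (uxx p s0 gp g h t x) x := by
  have := S.spos ht
  exact (((S.i.IX_x ht.1).add ((Jv_x continuous_const S.Fd ht.1 (S.t1 ht) hx.ne').const_mul 2)).sub
    (Jv_x S.sc S.fd ht.1 (S.t1 ht) hxs)).sub
    (Jv_x S.sc.neg S.fd ht.1 (S.t1 ht) (by linarith))

lemma Sol.dt (ht : t ∈ Ioc 0 R) (hx : 0 < x) (hxs : x ≠ ss s0 g t) :
    HasDerivAt (fun t => uu p s0 gp g h t x) (uxx p s0 gp g h t x) t := by
  have := S.spos ht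
  exact (((S.i.I0_t ht.1).add ((Vg_t continuous_const S.Fd ht.1 (S.t1 ht) hx.ne').const_mul 2)).sub
    (Vg_t S.sc S.fd ht.1 (S.t1 ht) hxs)).sub
    (Vg_t S.sc.neg S.fd ht.1 (S.t1 ht) (by linarith))

lemma Sol.cxx (ht : t ∈ Ioc 0 R) (hx : 0 < x) (hxs : x ≠ ss s0 g t) :
    ContinuousAt (fun q : ℝ × ℝ => uxx p s0 gp g h q.1 q.2) (t, x) := by
  have := S.spos ht
  exact (((S.i.IXX_cont ht.1).add (continuousAt_const.mul (Kv_cont continuous_const S.Fd ht.1 (S.t1 ht) hx.ne'))).sub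
    (Kv_cont S.sc S.fd ht.1 (S.t1 ht) hxs)).sub
    (Kv_cont S.sc.neg S.fd ht.1 (S.t1 ht) (by linarith))

lemma Sol.Wc (ht : t ∈ Ioc 0 R) : ContinuousAt (fun q : ℝ × ℝ => Wr p s0 gp g h q.1 q.2) (t, x) := by
  have h1 := S.t1 ht
  have hf : ContinuousAt (fun q : ℝ × ℝ => q.1) (t, x) := continuousAt_fst
  unfold Wr
  refine ContinuousAt.add (ContinuousAt.sub (ContinuousAt.sub (ContinuousAt.sub (ContinuousAt.add
    (S.i.IX_cont ht.1) ?_) ?_) ?_) ?_) ?_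
  · exact continuousAt_const.mul (Jreg_cont zero_crv S.Fd ht.1 h1 x)
  · exact continuousAt_const.mul (ContinuousAt.comp (g := fun t => FF p (h t)) (f := fun q : ℝ × ℝ => q.1) 
      (x := (t, x)) (S.Fd.cAt ht.1) hf)
  · exact Jreg_cont (ss_crv S.a.GB s0) S.fd ht.1 h1 x
  · exact Jreg_cont (ss_crv_neg S.a.GB s0) S.fd ht.1 h1 x
  · exact ContinuousAt.comp (g := ff g) (f := fun q : ℝ × ℝ => q.1) (x := (t, x)) (S.fd.cAt ht.1) hf

lemma Sol.W_in (ht : t ∈ Ioc 0 R) (hx : x ∈ Ioo 0 (ss s0 g t)) : ux p s0 gp g h t x = Wr p s0 gp g h t x := by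
  have := S.spos ht
  unfold ux Wr
  rw [Jv_eq, Jv_eq, Jv_eq, Hv_one (by simpa using hx.1), Hv_one (by linarith [hx.1] : 0 < x - -ss s0 g t)]
  have : Hv (x - ss s0 g t) = 0 := by
    have : x - ss s0 g t < 0 := by linarith [hx.2]
    unfold Hv; rw [if_neg (by linarith), if_pos this]
  rw [this]; ring

lemma Sol.W_out (ht : t ∈ Ioc 0 R) (hx : ss s0 g t < x) : ux p s0 gp g h t x = Wr p s0 gp g h t x + ff g t := by
  have := S.spos ht
  unfold ux Wr
  rw [Jv_eq, Jv_eq, Jv_eq, Hv_one (by linarith : 0 < x - 0), Hv_one (by linarith : 0 < x - -ss s0 g t),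
    Hv_one (by linarith : 0 < x - ss s0 g t)]
  ring

lemma Sol.W_s (ht : t ∈ Ioc 0 R) : Wr p s0 gp g h t (ss s0 g t) = -ff g t := by
  have hs := S.spos ht
  have hA : ff g t = -2 * AA p s0 gp g h t := by
    unfold ff
    rw [(S.fix t ht).1, ← mul_assoc, inv_mul_cancel₀ (qq_pos ht.1).ne', one_mul]
  have : Wr p s0 gp g h t (ss s0 g t) = AA p s0 gp g h t - ff g t / 2 := by
    unfold Wr AA Jreg
    rw [Hv_one (by linarith : 0 < ss s0 g t - 0), Hv_one (by linarith : 0 < ss s0 g t - -ss s0 g t), sub_self, Hv_zero]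
    ring
  rw [this]; linarith

lemma Sol.W_0 (ht : t ∈ Ioc 0 R) : Wr p s0 gp g h t 0 = -FF p (h t) := by
  have hs := S.spos ht
  have e1 : Jv (fun _ => 0) (fun τ => FF p (h τ)) t 0 = 0 := by
    unfold Jv; simp [G1_zero]
  have e2 : Jv (fun τ => -ss s0 g τ) (ff g) t 0 = -Jv (ss s0 g) (ff g) t 0 := by
    unfold Jv
    rw [← intervalIntegral.integral_neg]
    congr 1; ext τ
    rw [zero_sub, zero_sub, neg_neg, G1_neg]; ring
  have e3 : Hv (0 - ss s0 g t) = 0 := by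
    have : 0 - ss s0 g t < 0 := by linarith
    unfold Hv; rw [if_neg (by linarith), if_pos this]
  unfold Wr Jreg
  rw [IX_zero, e1, e2, e3, Hv_one (by linarith : 0 < 0 - -ss s0 g t), sub_zero, Hv_zero]
  ring

lemma Sol.u0 (x : ℝ) : uu p s0 gp g h 0 x = I0 s0 gp 0 x := by
  unfold uu Vg; simp

lemma Sol.cu (ht : t ∈ Icc 0 R) : ContinuousWithinAt (fun q : ℝ × ℝ => uu p s0 gp g h q.1 q.2) {q | 0 ≤ q.1} (t, x) := by
  rcases eq_or_lt_of_le ht.1 with h0 | h0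
  · subst h0
    have hC : ∀ᶠ q : ℝ × ℝ in 𝓝[{q | 0 ≤ q.1}] (0, x), 
        ‖uu p s0 gp g h q.1 q.2 - I0 s0 gp q.1 q.2‖ ≤ qq q.1 * ((2 * L + 2 * K) * B0) := by
      have : ∀ᶠ q : ℝ × ℝ in 𝓝[{q | 0 ≤ q.1}] (0, x), q.1 < 1 :=
        (continuousAt_fst.eventually_lt_const (by norm_num : ((0:ℝ), x).1 < 1)).filter_mono nhdsWithin_le_nhds
      filter_upwards [this, self_mem_nhdsWithin] with q h1 hq
      rcases eq_or_lt_of_le (show 0 ≤ q.1 from hq) with hq0 | hq0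
      · rw [← hq0, S.u0, sub_self, norm_zero, qq_nonpos le_rfl, zero_mul]
      · exact uu_bd S.a.GB S.Fb hq0 h1.le
    have hlim : Tendsto (fun q : ℝ × ℝ => qq q.1 * ((2 * L + 2 * K) * B0)) (𝓝[{q | 0 ≤ q.1}] (0, x)) (𝓝 0) := by
      have : Tendsto (fun q : ℝ × ℝ => qq q.1 * ((2 * L + 2 * K) * B0)) (𝓝 (0, x)) (𝓝 (qq 0 * ((2 * L + 2 * K) * B0))) :=
        ((qq_cont.comp continuous_fst).mul continuous_const).continuousAt
      rw [qq_nonpos le_rfl, zero_mul] at this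
      exact this.mono_left nhdsWithin_le_nhds
    have h2 := squeeze_zero_norm' hC hlim
    have h3 : Tendsto (fun q : ℝ × ℝ => I0 s0 gp q.1 q.2) (𝓝[{q | 0 ≤ q.1}] (0, x)) (𝓝 (I0 s0 gp 0 x)) :=
      (S.i.I0_cont le_rfl).continuousWithinAt
    have h4 := h2.add h3
    unfold ContinuousWithinAt
    simp only [sub_add_cancel, zero_add] at h4
    beta_reduce
    rw [S.u0]
    exact h4
  · exact (uu_cont S.i S.a S.Fd h0 (ht.2.trans_lt S.R1)).continuousWithinAt

lemma Sol.cux (ht : t ∈ Ioc 0 R) (x : ℝ) : ContinuousAt (uu p s0 gp g h t) x :=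
  ContinuousAt.comp (g := fun q : ℝ × ℝ => uu p s0 gp g h q.1 q.2) (f := fun x => (t, x))
    (uu_cont S.i S.a S.Fd ht.1 (S.t1 ht)) (by fun_prop)

lemma Sol.cWx (ht : t ∈ Ioc 0 R) (x : ℝ) : ContinuousAt (Wr p s0 gp g h t) x :=
  ContinuousAt.comp (g := fun q : ℝ × ℝ => Wr p s0 gp g h q.1 q.2) (f := fun x => (t, x))
    (S.Wc ht) (by fun_prop)

/-- right derivative at zero -/
lemma Sol.d0 (ht : t ∈ Ioc 0 R) : HasDerivWithinAt (uu p s0 gp g h t) (-FF p (h t)) (Ici 0) 0 := by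
  have hs := S.spos ht
  have hd : ∀ y ∈ Ioo 0 (ss s0 g t), HasDerivAt (uu p s0 gp g h t) (Wr p s0 gp g h t y) y := fun y hy => by
    rw [← S.W_in ht hy]; exact S.dx ht hy.1 hy.2.ne
  refine hasDerivWithinAt_Ici_of_tendsto_deriv (s := Ioo 0 (ss s0 g t)) 
    (fun y hy => (hd y hy).differentiableAt.differentiableWithinAt) (S.cux ht 0).continuousWithinAt
    (Ioo_mem_nhdsGT hs) ?_
  rw [← S.W_0 ht]
  refine Tendsto.congr' ?_ ((S.cWx ht 0).mono_left nhdsWithin_le_nhds)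
  filter_upwards [Ioo_mem_nhdsGT hs] with y hy
  exact (hd y hy).deriv.symm

lemma Sol.dsl (ht : t ∈ Ioc 0 R) : HasDerivWithinAt (uu p s0 gp g h t) (-ff g t) (Iic (ss s0 g t)) (ss s0 g t) := by
  have hs := S.spos ht
  have hd : ∀ y ∈ Ioo 0 (ss s0 g t), HasDerivAt (uu p s0 gp g h t) (Wr p s0 gp g h t y) y := fun y hy => by
    rw [← S.W_in ht hy]; exact S.dx ht hy.1 hy.2.ne
  refine hasDerivWithinAt_Iic_of_tendsto_deriv (s := Ioo 0 (ss s0 g t)) 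
    (fun y hy => (hd y hy).differentiableAt.differentiableWithinAt) (S.cux ht _).continuousWithinAt
    (Ioo_mem_nhdsLT hs) ?_
  rw [← S.W_s ht]
  refine Tendsto.congr' ?_ ((S.cWx ht _).mono_left nhdsWithin_le_nhds)
  filter_upwards [Ioo_mem_nhdsLT hs] with y hy
  exact (hd y hy).deriv.symm

lemma Sol.dsr (ht : t ∈ Ioc 0 R) : HasDerivWithinAt (uu p s0 gp g h t) 0 (Ici (ss s0 g t)) (ss s0 g t) := by
  have hs := S.spos ht
  have hd : ∀ y ∈ Ioi (ss s0 g t), HasDerivAt (uu p s0 gp g h t) (Wr p s0 gp g h t y + ff g t) y := fun y hy => by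
    rw [← S.W_out ht hy]; exact S.dx ht (hs.trans hy) (ne_of_gt hy)
  refine hasDerivWithinAt_Ici_of_tendsto_deriv (s := Ioi (ss s0 g t)) 
    (fun y hy => (hd y hy).differentiableAt.differentiableWithinAt) (S.cux ht _).continuousWithinAt
    self_mem_nhdsWithin ?_
  have : (0:ℝ) = Wr p s0 gp g h t (ss s0 g t) + ff g t := by rw [S.W_s ht]; ring
  rw [this]
  refine Tendsto.congr' ?_ (((S.cWx ht _).mono_left nhdsWithin_le_nhds).add_const _)
  filter_upwards [self_mem_nhdsWithin] with y hy
  exact (hd y hy).deriv.symm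

end

end

section


lemma eps_lim {a b : ℝ} (h : ∀ ε > 0, -(ε * b) ≤ a) : 0 ≤ a := by
  have h1 : Tendsto (fun ε : ℝ => -(ε * b)) (𝓝[>] 0) (𝓝 0) := by
    have : Tendsto (fun ε : ℝ => -(ε * b)) (𝓝 0) (𝓝 (-(0 * b))) := by
      apply Continuous.tendsto; fun_prop
    rw [zero_mul, neg_zero] at this
    exact this.mono_left nhdsWithin_le_nhds
  exact le_of_tendsto h1 (by filter_upwards [self_mem_nhdsWithin] with ε hε using h ε hε)

section
variable {p M K H L R δ s0 : ℝ} {φ gp g h : ℝ → ℝ} {t x : ℝ} (S : Sol p M K H L R δ s0 φ gp g h)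
include S

lemma Sol.ext (σ : ℝ) (hσ : |σ| = 1) (ht : t ∈ Ioc 0 R) : 0 ≤ σ * uu p s0 gp g h t (ss s0 g t) := by
  have hM := S.i.Mpos
  set ρ := M + 2 with hρ
  set Q := M ^ ((3:ℝ)/2) + 1 with hQ
  have hQ0 : 0 < Q := by positivity
  refine eps_lim (b := (ss s0 g t - ρ) ^ 2 + 3 * t) fun ε hε => ?_
  have hsρ : ∀ t ∈ Icc 0 R, ss s0 g t < ρ := by
    intro t ht
    rcases eq_or_lt_of_le ht.1 with h0 | h0
    · rw [← h0, ss_zero]; linarith [S.i.le]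
    · linarith [(S.sb t ⟨h0, ht.2⟩).2]
  have hQε : 0 < Q / ε := by positivity
  refine maxprin (T := R) (c := ss s0 g) (d := fun _ => ρ + (Q / ε + 1)) 
    (v := fun t x => σ * uu p s0 gp g h t x) (D := fun t x => σ * uxx p s0 gp g h t x) hε S.sc continuous_const hsρ
    ?_ ?_ ?_ ?_ ?_ ?_ ?_ t (Ioc_subset_Icc_self ht) (ss s0 g t) ⟨le_rfl, ?_⟩
  · rintro ⟨t, x⟩ hq
    exact continuousWithinAt_const.mul ((S.cu hq.1).mono fun q hq => hq.1.1)
  · intro t ht x hx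
    exact ((S.dx ht ((S.spos ht).trans hx.1) hx.1.ne').const_mul σ).differentiableAt
  · intro t ht x hx
    refine ((S.dxx ht ((S.spos ht).trans hx.1) hx.1.ne').const_mul σ).congr_of_eventuallyEq ?_
    filter_upwards [Ioi_mem_nhds hx.1] with y hy
    exact ((S.dx ht ((S.spos ht).trans hy) (ne_of_gt hy)).const_mul σ).deriv
  · intro t ht x hx
    exact (S.dt ht ((S.spos ht).trans hx.1) hx.1.ne').const_mul σ
  · intro t ht _
    exact ⟨0, le_rfl, by simpa using (S.dsr ht).const_mul σ⟩
  · intro x hx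
    rw [ss_zero] at hx
    rw [S.u0, S.i.I0_out hx.1, mul_zero]
  · intro t ht
    have h1 : |σ * uu p s0 gp g h t (ρ + (Q / ε + 1))| ≤ Q := by
      rw [abs_mul, hσ, one_mul]; exact S.ub t ht _
    have h2 : Q ≤ ε * ((ρ + (Q / ε + 1) - ρ) ^ 2 + 3 * t) := by
      have e : ε * (Q / ε) = Q := by field_simp
      have := ht.1
      have : ε * ((ρ + (Q / ε + 1) - ρ) ^ 2 + 3 * t) = Q * (Q / ε) + 2 * Q + ε + 3 * ε * t := by
        field_simp; ring
      rw [this]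
      have h3 : 0 < Q * (Q / ε) := by positivity
      have h4 : 0 < 3 * ε * t := by positivity
      linarith
    have := (abs_le.1 h1).1
    linarith
  · have := hsρ t (Ioc_subset_Icc_self ht); linarith

lemma Sol.bc (ht : t ∈ Ioc 0 R) : uu p s0 gp g h t (ss s0 g t) = 0 := by
  have h1 := S.ext 1 (by simp) ht
  have h2 := S.ext (-1) (by simp) ht
  linarith

lemma Sol.nn (ht : t ∈ Icc 0 R) (hx : x ∈ Icc 0 (ss s0 g t)) : 0 ≤ uu p s0 gp g h t x := by
  refine eps_lim (b := (x - 1) ^ 2 + 3 * t) fun ε hε => ?_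
  refine maxprin (T := R) (c := fun _ => 0) (d := ss s0 g) (ρ := 1)
    (v := fun t x => uu p s0 gp g h t x) (D := fun t x => uxx p s0 gp g h t x) hε continuous_const S.sc 
    (fun _ _ => one_pos)
    ?_ ?_ ?_ ?_ ?_ ?_ ?_ t ht x hx
  · rintro ⟨t, x⟩ hq
    exact (S.cu hq.1).mono fun q hq => hq.1.1
  · intro t ht x hx
    exact (S.dx ht hx.1 hx.2.ne).differentiableAt
  · intro t ht x hx
    refine (S.dxx ht hx.1 hx.2.ne).congr_of_eventuallyEq ?_
    filter_upwards [Ioo_mem_nhds hx.1 hx.2] with y hy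
    exact (S.dx ht hy.1 hy.2.ne).deriv
  · intro t ht x hx
    exact S.dt ht hx.1 hx.2.ne
  · intro t ht _
    exact ⟨_, by unfold FF; simp; positivity, S.d0 ht⟩
  · intro x hx
    rw [ss_zero] at hx
    rw [S.u0, S.i.I0_init hx]; exact S.i.nn x hx
  · intro t ht
    rw [S.bc ht]
    have := ht.1
    have : 0 ≤ ε * ((ss s0 g t - 1) ^ 2 + 3 * t) := by positivity
    linarith

lemma Sol.Fh (ht : t ∈ Ioc 0 R) : FF p (h t) = uu p s0 gp g h t 0 ^ p := by
  unfold FF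
  rw [(S.fix t ht).2, abs_of_nonneg (S.nn (Ioc_subset_Icc_self ht) ⟨le_rfl, (S.spos ht).le⟩)]

end

/-- the extended solution -/
def UU (p s0 : ℝ) (gp g h : ℝ → ℝ) (t x : ℝ) : ℝ :=
  if x < 0 then uu p s0 gp g h t 0 - x * FF p (h t) else
  if x ≤ ss s0 g t then uu p s0 gp g h t x else -ff g t * (x - ss s0 g t)

section
variable {p M K H L R δ s0 : ℝ} {φ gp g h : ℝ → ℝ} {t x : ℝ}

lemma UU_in (hx : x ∈ Icc 0 (ss s0 g t)) : UU p s0 gp g h t x = uu p s0 gp g h t x := by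
  unfold UU; rw [if_neg (not_lt.2 hx.1), if_pos hx.2]

variable (S : Sol p M K H L R δ s0 φ gp g h)
include S

lemma Sol.Uin (ht : t ∈ Ioc 0 R) (hx : x ∈ Ioo 0 (ss s0 g t)) :
    HasDerivAt (UU p s0 gp g h t) (Wr p s0 gp g h t x) x := by
  rw [← S.W_in ht hx]
  refine (S.dx ht hx.1 hx.2.ne).congr_of_eventuallyEq ?_
  filter_upwards [Ioo_mem_nhds hx.1 hx.2] with y hy
  exact UU_in (Ioo_subset_Icc_self hy)

lemma Sol.U0 (ht : t ∈ Ioc 0 R) : HasDerivAt (UU p s0 gp g h t) (Wr p s0 gp g h t 0) 0 := by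
  have hs := S.spos ht
  rw [S.W_0 ht]
  have h1 : HasDerivWithinAt (UU p s0 gp g h t) (-FF p (h t)) (Ici 0) 0 := by
    refine (S.d0 ht).congr_of_eventuallyEq ?_ (UU_in ⟨le_rfl, hs.le⟩)
    filter_upwards [Icc_mem_nhdsGE hs] with y hy using UU_in hy
  have h2 : HasDerivWithinAt (UU p s0 gp g h t) (-FF p (h t)) (Iic 0) 0 := by
    have hl : HasDerivAt (fun x => uu p s0 gp g h t 0 - x * FF p (h t)) (-FF p (h t)) 0 := by
      simpa using ((hasDerivAt_id (0:ℝ)).mul_const (FF p (h t))).const_sub (uu p s0 gp g h t 0)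
    have e0 : UU p s0 gp g h t 0 = uu p s0 gp g h t 0 - 0 * FF p (h t) := by
      rw [UU_in ⟨le_rfl, hs.le⟩]; ring
    refine hl.hasDerivWithinAt.congr (fun y hy => ?_) e0
    rcases eq_or_lt_of_le (show y ≤ 0 from hy) with hy | hy
    · rw [hy]; exact e0
    · unfold UU; rw [if_pos hy]
  have := h1.union h2
  rwa [Ici_union_Iic, hasDerivWithinAt_univ] at this

lemma Sol.Us (ht : t ∈ Ioc 0 R) : HasDerivAt (UU p s0 gp g h t) (Wr p s0 gp g h t (ss s0 g t)) (ss s0 g t) := by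
  have hs := S.spos ht
  rw [S.W_s ht]
  have h1 : HasDerivWithinAt (UU p s0 gp g h t) (-ff g t) (Iic (ss s0 g t)) (ss s0 g t) := by
    refine (S.dsl ht).congr_of_eventuallyEq ?_ (UU_in ⟨hs.le, le_rfl⟩)
    filter_upwards [Icc_mem_nhdsLE hs] with y hy using UU_in hy
  have h2 : HasDerivWithinAt (UU p s0 gp g h t) (-ff g t) (Ici (ss s0 g t)) (ss s0 g t) := by
    have hl : HasDerivAt (fun x => -ff g t * (x - ss s0 g t)) (-ff g t) (ss s0 g t) := by
      simpa using ((hasDerivAt_id (ss s0 g t)).sub_const (ss s0 g t)).const_mul (-ff g t)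
    have e0 : UU p s0 gp g h t (ss s0 g t) = -ff g t * (ss s0 g t - ss s0 g t) := by
      rw [UU_in ⟨hs.le, le_rfl⟩, S.bc ht]; ring
    refine hl.hasDerivWithinAt.congr (fun y hy => ?_) e0
    rcases eq_or_lt_of_le (show ss s0 g t ≤ y from hy) with hy | hy
    · rw [← hy]; exact e0
    · unfold UU; rw [if_neg (by linarith), if_neg (by linarith)]
  have := h1.union h2
  rwa [union_comm, Ici_union_Iic, hasDerivWithinAt_univ] at this

lemma Sol.U_d (ht : t ∈ Ioc 0 R) (hx : x ∈ Icc 0 (ss s0 g t)) : 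
    HasDerivAt (UU p s0 gp g h t) (Wr p s0 gp g h t x) x := by
  rcases eq_or_lt_of_le hx.1 with h0 | h0
  · rw [← h0]; exact S.U0 ht
  rcases eq_or_lt_of_le hx.2 with h1 | h1
  · rw [h1]; exact S.Us ht
  exact S.Uin ht ⟨h0, h1⟩

lemma Sol.U_dd (ht : t ∈ Ioc 0 R) (hx : x ∈ Ioo 0 (ss s0 g t)) : 
    HasDerivAt (deriv (UU p s0 gp g h t)) (uxx p s0 gp g h t x) x := by
  refine (S.dxx ht hx.1 hx.2.ne).congr_of_eventuallyEq ?_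
  filter_upwards [Ioo_mem_nhds hx.1 hx.2] with y hy
  rw [(S.Uin ht hy).deriv, S.W_in ht hy]

lemma Sol.U_t (ht : t ∈ Ioc 0 R) (hx : x ∈ Ioo 0 (ss s0 g t)) : 
    HasDerivAt (fun t => UU p s0 gp g h t x) (uxx p s0 gp g h t x) t := by
  refine (S.dt ht hx.1 hx.2.ne).congr_of_eventuallyEq ?_
  filter_upwards [S.sc.continuousAt.eventually_const_lt hx.2] with τ hτ
  exact UU_in ⟨hx.1.le, hτ.le⟩

end

end


lemma ini_of {M s₀ : ℝ} {φ g : ℝ → ℝ} (hM : 0 < M) (hw : memWtilde s₀ φ g)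
    (hb : s₀ + s₀⁻¹ + sobNorm s₀ φ g ≤ M) : Ini M s₀ φ g := by
  obtain ⟨h0, hL, hrep, -, hnn, hz⟩ := hw
  have hS : 0 ≤ sobNorm s₀ φ g := Real.sqrt_nonneg _
  have hi : 0 < s₀⁻¹ := inv_pos.2 h0
  have hint : IntegrableOn g (Ioc 0 s₀) := by
    rw [integrableOn_Ioc_iff_integrableOn_Ioo]
    have : IsFiniteMeasure (volume.restrict (Ioo 0 s₀)) := ⟨by simp⟩
    exact hL.integrable (by norm_num)
  have hint2 : IntegrableOn (fun y => g y ^ 2) (Ioc 0 s₀) := by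
    rw [integrableOn_Ioc_iff_integrableOn_Ioo]
    exact hL.integrable_sq
  refine ⟨hM, h0, by linarith, by linarith, ?_, ?_, ?_, hrep, hnn, hz⟩
  · rwa [intervalIntegrable_iff_integrableOn_Ioc_of_le h0.le]
  · rwa [intervalIntegrable_iff_integrableOn_Ioc_of_le h0.le]
  · have hle : sobNorm s₀ φ g ≤ M := by linarith
    unfold sobNorm at hle
    rw [Real.sqrt_le_left hM.le] at hle
    have : 0 ≤ ∫ x in (0:ℝ)..s₀, φ x ^ 2 := intervalIntegral.integral_nonneg h0.le fun _ _ => sq_nonneg _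
    linarith

/-- Proposition 2.1: local-in-time existence, uniformly for bounded initial data in `W̃`. -/
theorem stmt_4 (p : ℝ) (hp : 1 < p) (M : ℝ) (hM : 0 < M) :
    ∃ T : ℝ, 0 < T ∧ ∀ (s₀ : ℝ) (φ g : ℝ → ℝ), memWtilde s₀ φ g →
      s₀ + s₀⁻¹ + sobNorm s₀ φ g ≤ M →
      ∃ s u, IsSolOn p s₀ φ T s u ∧
        sSup ((fun t => supNorm s u t) '' Ioc 0 T) + sSup (s '' Ioc 0 T) ≤
          2 * (M ^ ((3:ℝ) / 2) + M + 1) := by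
  obtain ⟨R, K, H, L, δ, hR0, hR1, hδ, hall⟩ := exist_fix hp hM
  refine ⟨R, hR0, fun s₀ φ gp hw hb => ?_⟩
  have i := ini_of hM hw hb
  obtain ⟨g, h, a, hF, hfix, hsb, hub⟩ := hall s₀ φ gp i
  have S : Sol p M K H L R δ s₀ φ gp g h := ⟨hp, hR0, hR1, hδ, i, a, hF, hfix, hsb, hub⟩
  have hspos : ∀ t ∈ Icc 0 R, 0 < ss s₀ g t := by
    intro t ht
    rcases eq_or_lt_of_le ht.1 with h0 | h0
    · rw [← h0, ss_zero]; exact i.pos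
    · exact S.spos ⟨h0, ht.2⟩
  refine ⟨ss s₀ g, UU p s₀ gp g h, ?_, ?_⟩
  · refine ⟨hR0, S.sc.continuousOn, fun t ht => (ss_deriv a.GB s₀ ht.1).differentiableAt, ?_, hspos,
      fun t ht x hx => (S.U_t ht hx).differentiableAt,
      fun t ht x hx => (S.Uin ht hx).differentiableAt,
      fun t ht x hx => (S.U_dd ht hx).differentiableAt, ?_, ?_, ?_, ?_, ?_, ?_, ?_, ?_, ?_, ?_, ss_zero s₀ g⟩
    · refine ((ff_cont a.GB).mono fun t ht => ht.1).congr fun t ht => (ss_deriv a.GB s₀ ht.1).deriv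
    · have hc : ContinuousOn (fun q : ℝ × ℝ => uxx p s₀ gp g h q.1 q.2)
        {q : ℝ × ℝ | q.1 ∈ Ioc 0 R ∧ q.2 ∈ Ioo 0 (ss s₀ g q.1)} := by
        rintro ⟨t, x⟩ ⟨ht, hx⟩
        exact (S.cxx ht hx.1 hx.2.ne).continuousWithinAt
      exact hc.congr fun q hq => (S.U_t hq.1 hq.2).deriv
    · have hc : ContinuousOn (fun q : ℝ × ℝ => uxx p s₀ gp g h q.1 q.2)
        {q : ℝ × ℝ | q.1 ∈ Ioc 0 R ∧ q.2 ∈ Ioo 0 (ss s₀ g q.1)} := by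
        rintro ⟨t, x⟩ ⟨ht, hx⟩
        exact (S.cxx ht hx.1 hx.2.ne).continuousWithinAt
      exact hc.congr fun q hq => (S.U_dd hq.1 hq.2).deriv
    · have hc : ContinuousOn (fun q : ℝ × ℝ => Wr p s₀ gp g h q.1 q.2)
        {q : ℝ × ℝ | q.1 ∈ Ioc 0 R ∧ q.2 ∈ Icc 0 (ss s₀ g q.1)} := by
        rintro ⟨t, x⟩ ⟨ht, hx⟩
        exact (S.Wc ht).continuousWithinAt
      exact hc.congr fun q hq => (S.U_d hq.1 hq.2).deriv
    · have hc : ContinuousOn (fun q : ℝ × ℝ => uu p s₀ gp g h q.1 q.2)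
        {q : ℝ × ℝ | q.1 ∈ Icc 0 R ∧ q.2 ∈ Icc 0 (ss s₀ g q.1)} := by
        rintro ⟨t, x⟩ ⟨ht, hx⟩
        exact (S.cu ht).mono fun q hq => hq.1.1
      exact hc.congr fun q hq => UU_in hq.2
    · intro t ht x hx
      rw [UU_in hx]; exact S.nn ht hx
    · intro t ht x hx
      rw [(S.U_t ht hx).deriv, (S.U_dd ht hx).deriv]
    · intro t ht
      rw [(S.U0 ht).deriv, S.W_0 ht, neg_neg, S.Fh ht, UU_in ⟨le_rfl, (S.spos ht).le⟩]
    · intro t ht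
      rw [UU_in ⟨(S.spos ht).le, le_rfl⟩, S.bc ht]
    · intro t ht
      rw [(S.Us ht).deriv, S.W_s ht, neg_neg, (ss_deriv a.GB s₀ ht.1).deriv]
    · intro x hx
      rw [UU_in (by rwa [ss_zero]), S.u0, i.I0_init hx]
  · have hne : (Ioc 0 R).Nonempty := ⟨R, hR0, le_rfl⟩
    have h1 : sSup (ss s₀ g '' Ioc 0 R) ≤ M + 1 := by
      refine csSup_le (hne.image _) ?_
      rintro _ ⟨t, ht, rfl⟩
      exact (hsb t ht).2
    have h2 : sSup ((fun t => supNorm (ss s₀ g) (UU p s₀ gp g h) t) '' Ioc 0 R) ≤ M ^ ((3:ℝ) / 2) + 1 := by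
      refine csSup_le (hne.image _) ?_
      rintro _ ⟨t, ht, rfl⟩
      refine csSup_le ((nonempty_Ioo.2 (S.spos ht)).image _) ?_
      rintro _ ⟨x, hx, rfl⟩
      have := hub t ht x
      simp only [UU_in (p := p) (gp := gp) (h := h) (Ioo_subset_Icc_self hx)]
      exact (abs_le.1 this).2
    have h3 : 0 ≤ M ^ ((3:ℝ) / 2) := by positivity
    linarith
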